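/- arXiv:1907.12313 — 5 statements merged into one kernel-verified Lean document; each statement's English description precedes it below -/
import Mathlib

section
/- Let n ≥ 1 and 1 ≤ k ≤ n. Then the set S = {R : R is a real symmetric (n+1)×(n+1) matrix, r ∈ Γ_k^+, and F_k(R) > 0} is a convex cone: if R, R' ∈ S and s, s' > 0, then sR + s'R' ∈ S. -/
open Matrix

/-- `σ_k(A)`: the k-th elementary symmetric function of the eigenvalues of `A`,
defined as `(−1)^k` times the coefficient of `X^(n−k)` in the characteristic polynomial. -/
noncomputable def sigmaMat {n : ℕ} (A : Matrix (Fin n) (Fin n) ℝ) (k : ℕ) : ℝ :=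
  (-1 : ℝ) ^ k * A.charpoly.coeff (n - k)

/-- The k-th Newton transform `T_k(A) = Σ_{j=0}^{k} (−1)^j σ_{k−j}(A) A^j`. -/
noncomputable def newtonT {n : ℕ} (A : Matrix (Fin n) (Fin n) ℝ) (k : ℕ) :
    Matrix (Fin n) (Fin n) ℝ :=
  ∑ j ∈ Finset.range (k + 1), ((-1 : ℝ) ^ j * sigmaMat A (k - j)) • A ^ j

/-- `A ∈ Γ_k^+` iff `σ_j(A) > 0` for all `1 ≤ j ≤ k`. -/
def GammaPlus {n : ℕ} (k : ℕ) (A : Matrix (Fin n) (Fin n) ℝ) : Prop :=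
  ∀ j : ℕ, 1 ≤ j → j ≤ k → 0 < sigmaMat A j

/-- The lower-right `n × n` block of an `(n+1) × (n+1)` matrix. -/
def lowerBlock {n : ℕ} (R : Matrix (Fin (n + 1)) (Fin (n + 1)) ℝ) :
    Matrix (Fin n) (Fin n) ℝ :=
  fun i j => R i.succ j.succ

/-- The vector `x = (r_{01}, …, r_{0n})`. -/
def xVec {n : ℕ} (R : Matrix (Fin (n + 1)) (Fin (n + 1)) ℝ) : Fin n → ℝ :=
  fun i => R 0 i.succ

/-- `F_k(R) = r₀₀ σ_k(r) − x T_{k−1}(r) xᵀ`. -/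
noncomputable def Fk {n : ℕ} (k : ℕ) (R : Matrix (Fin (n + 1)) (Fin (n + 1)) ℝ) : ℝ :=
  R 0 0 * sigmaMat (lowerBlock R) k -
    xVec R ⬝ᵥ (newtonT (lowerBlock R) (k - 1)).mulVec (xVec R)

/-- Membership in the set `S`: `R` symmetric, lower-right block in `Γ_k^+`, and `F_k(R) > 0`. -/
def inS {n : ℕ} (k : ℕ) (R : Matrix (Fin (n + 1)) (Fin (n + 1)) ℝ) : Prop :=
  R.IsSymm ∧ GammaPlus k (lowerBlock R) ∧ 0 < Fk k R

section Hyperbolic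

open Polynomial

/-- Two polynomials exchanged by the inversion `z ↦ z⁻¹` in degree `d`: the first has degree at
most `d`, and its coefficient of degree `d` is the constant term of the second. -/
theorem Polynomial.natDegree_le_and_coeff_eq_of_eval_inv {K : Type*} [Field K] [Infinite K]
    {p q : K[X]} {d : ℕ} (h : ∀ z : K, z ≠ 0 → p.eval z = z ^ d * q.eval z⁻¹) :
    p.natDegree ≤ d ∧ p.coeff d = q.eval 0 := by
  have key : X * (p * X ^ q.natDegree) = X * (q.reverse * X ^ d) := by
    refine Polynomial.funext fun z => ?_
    by_cases hz : z = 0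
    · simp [hz]
    · have hr : q.reverse.eval z = z ^ q.natDegree * q.eval z⁻¹ := by
        let : Invertible z⁻¹ := invertibleOfNonzero (inv_ne_zero hz)
        have h2 := eval₂_reverse_mul_pow (RingHom.id K) z⁻¹ q
        simp only [eval₂_id, invOf_eq_inv, inv_inv] at h2
        rw [← h2, inv_pow]
        field_simp
      simp only [eval_mul, eval_X, eval_pow, h z hz, hr]
      ring
  have key' := mul_left_cancel₀ X_ne_zero key
  have hc (j : ℕ) : p.coeff (d + j) = q.reverse.coeff (j + q.natDegree) := by
    have := congrArg (fun r => r.coeff (d + j + q.natDegree)) key'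
    simp only [coeff_mul_X_pow] at this
    rw [this, show d + j + q.natDegree = j + q.natDegree + d by ring, coeff_mul_X_pow]
  constructor
  · rw [natDegree_le_iff_coeff_eq_zero]
    intro N hN
    obtain ⟨j, rfl⟩ := Nat.exists_eq_add_of_lt hN
    rw [add_assoc, hc]
    refine coeff_eq_zero_of_natDegree_lt (lt_of_le_of_lt (reverse_natDegree_le q) (by omega))
  · have := hc 0
    rw [add_zero, zero_add] at this
    rw [this, coeff_reverse, revAt_le le_rfl, Nat.sub_self, coeff_zero_eq_eval_zero]

/-- A polynomial without zeros in the closed upper half plane is bounded below, in terms of its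
leading coefficient, on the upper half plane. -/
theorem Polynomial.norm_leadingCoeff_mul_im_pow_le {p : ℂ[X]}
    (hp : ∀ z : ℂ, 0 ≤ z.im → p.eval z ≠ 0) {z : ℂ} (hz : 0 ≤ z.im) :
    ‖p.leadingCoeff‖ * z.im ^ p.natDegree ≤ ‖p.eval z‖ := by
  have hs : p.Splits := IsAlgClosed.splits p
  rw [hs.eval_eq_prod_roots, norm_mul, hs.natDegree_eq_card_roots]
  refine mul_le_mul_of_nonneg_left ?_ (norm_nonneg _)
  have hroot : ∀ r ∈ p.roots, z.im ≤ ‖z - r‖ := by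
    intro r hr
    have h0 : p.eval r = 0 := (mem_roots'.1 hr).2
    have hr' : r.im < 0 := by
      by_contra hcon
      exact hp r (not_lt.1 hcon) h0
    calc z.im ≤ (z - r).im := by simp; linarith
      _ ≤ |(z - r).im| := le_abs_self _
      _ ≤ ‖z - r‖ := Complex.abs_im_le_norm _
  generalize p.roots = s at hroot
  induction s using Multiset.induction_on with
  | empty => simp
  | cons a s ih =>
    simp only [Multiset.card_cons, Multiset.map_cons, Multiset.prod_cons, norm_mul, pow_succ']
    exact mul_le_mul (hroot a (by simp)) (ih fun r hr => hroot r (by simp [hr]))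
      (pow_nonneg hz _) (norm_nonneg _)

/-- The derivatives of a complex polynomial without zeros in the closed upper half plane do not
vanish there either, as long as the order does not exceed the degree. -/
theorem Polynomial.eval_iterate_derivative_ne_zero_of_im_nonneg {p : ℂ[X]}
    (hp : ∀ z : ℂ, 0 ≤ z.im → p.eval z ≠ 0) {m : ℕ} (hm : m ≤ p.natDegree) {z : ℂ}
    (hz : 0 ≤ z.im) : (derivative^[m] p).eval z ≠ 0 := by
  induction m generalizing z with
  | zero => exact hp z hz
  | succ m ih =>
    rw [Function.iterate_succ_apply']
    intro h0
    set q := derivative^[m] p with hq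
    have hqn : ∀ w : ℂ, 0 ≤ w.im → q.eval w ≠ 0 := fun w hw => ih (by omega) hw
    have hcoeff : q.coeff (p.natDegree - m) ≠ 0 := by
      rw [hq, coeff_iterate_derivative, Nat.sub_add_cancel (by omega)]
      have hpne : p ≠ 0 := by rintro rfl; simp at hm
      have := Nat.descFactorial_pos.2 (show m ≤ p.natDegree by omega)
      simp only [nsmul_eq_mul, ne_eq, mul_eq_zero, Nat.cast_eq_zero, not_or]
      exact ⟨this.ne', leadingCoeff_ne_zero.2 hpne⟩
    have hdeg : 0 < q.degree := by
      rw [← natDegree_pos_iff_degree_pos]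
      exact lt_of_lt_of_le (by omega) (le_natDegree_of_ne_zero hcoeff)
    have hd0 : derivative q ≠ 0 := by
      intro h
      have := derivative_eq_zero.1 h
      rw [← natDegree_pos_iff_degree_pos] at hdeg
      omega
    have hmem : z ∈ q.derivative.rootSet ℂ := by
      rw [mem_rootSet]
      exact ⟨hd0, by simpa using h0⟩
    have hsub : q.rootSet ℂ ⊆ {w : ℂ | w.im < 0} := by
      intro w hw
      rw [mem_rootSet] at hw
      by_contra hcon
      exact hqn w (not_lt.1 hcon) (by simpa using hw.2)
    have hconv : Convex ℝ {w : ℂ | w.im < 0} := convex_halfSpace_im_lt 0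
    have := convexHull_min hsub hconv (rootSet_derivative_subset_convexHull_rootSet hdeg hmem)
    exact absurd hz (not_le.2 this)

/-- The low coefficients of a complex polynomial without zeros in the closed upper half plane
do not vanish. -/
theorem Polynomial.coeff_ne_zero_of_im_nonneg {p : ℂ[X]}
    (hp : ∀ z : ℂ, 0 ≤ z.im → p.eval z ≠ 0) {m : ℕ} (hm : m ≤ p.natDegree) :
    p.coeff m ≠ 0 := by
  intro h
  apply eval_iterate_derivative_ne_zero_of_im_nonneg hp hm (z := 0) (by simp)
  rw [← coeff_zero_eq_eval_zero, coeff_iterate_derivative]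
  simp [h]

variable {V : Type*} [AddCommGroup V] [Module ℂ V] [TopologicalSpace V]

/-- `f` is a homogeneous function of degree `d` on a complex vector space, polynomial on every
complex line, which is hyperbolic in the direction `e` with respect to the real form `H`. -/
structure IsHyperbolicForm (f : V → ℂ) (d : ℕ) (H : AddSubgroup V) (e : V) : Prop where
  continuous : Continuous f
  map_smul : ∀ (c : ℂ) (v : V), c ≠ 0 → f (c • v) = c ^ d * f v
  exists_polynomial : ∀ v w : V, ∃ p : ℂ[X], ∀ z : ℂ, p.eval z = f (v + z • w)
  mem : e ∈ H
  real_smul_mem : ∀ (x : ℝ), ∀ v ∈ H, (x : ℂ) • v ∈ H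
  ne_zero : ∀ v ∈ H, ∀ δ : ℝ, 0 < δ → f (v + (Complex.I * δ) • e) ≠ 0

namespace IsHyperbolicForm

variable {f : V → ℂ} {d : ℕ} {H : AddSubgroup V} {e : V}

theorem norm_mul_im_pow_le (hf : IsHyperbolicForm f d H e) {v w : V} (hw : f w ≠ 0)
    (hv : ∀ z : ℂ, 0 ≤ z.im → f (v + z • w) ≠ 0) {z : ℂ} (hz : 0 ≤ z.im) :
    ‖f w‖ * z.im ^ d ≤ ‖f (v + z • w)‖ := by
  obtain ⟨p, hp⟩ := hf.exists_polynomial v w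
  obtain ⟨q, hq⟩ := hf.exists_polynomial w v
  obtain ⟨hdeg, hcoeff⟩ := natDegree_le_and_coeff_eq_of_eval_inv (p := p) (q := q) (d := d) (by
    intro z hz
    rw [hp, hq, ← hf.map_smul z _ hz, smul_add, smul_smul, mul_inv_cancel₀ hz, one_smul,
      add_comm])
  have hq0 : q.eval 0 = f w := by simp [hq]
  rw [hq0] at hcoeff
  have hd : p.natDegree = d := le_antisymm hdeg (le_natDegree_of_ne_zero (hcoeff ▸ hw))
  have hl : p.leadingCoeff = f w := by rw [leadingCoeff, hd, hcoeff]
  have := norm_leadingCoeff_mul_im_pow_le (p := p) (fun z hz => by rw [hp]; exact hv z hz) hz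
  rwa [hl, hd, hp] at this

/-- If no zero of `z ↦ f (γ s + z • w)` crosses the real axis as `s` varies, then the absence of
zeros in the upper half plane propagates along `γ`. -/
theorem ne_zero_of_path [ContinuousAdd V] [ContinuousSMul ℂ V] (hf : IsHyperbolicForm f d H e)
    {w : V} (hw : f w ≠ 0) {γ : ℝ → V} (hγ : Continuous γ) (hreal : ∀ s x : ℝ, f (γ s + (x : ℂ) • w) ≠ 0)
    (hstart : ∀ z : ℂ, 0 ≤ z.im → f (γ 0 + z • w) ≠ 0) (s : ℝ) {z : ℂ} (hz : 0 ≤ z.im) :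
    f (γ s + z • w) ≠ 0 := by
  have hfc := hf.continuous
  set A : Set ℝ := {s | ∀ z : ℂ, 0 ≤ z.im → f (γ s + z • w) ≠ 0} with hA
  have hclosed : IsClosed A := by
    have : A = ⋂ z : {z : ℂ // 0 < z.im},
        {s | ‖f w‖ * (z : ℂ).im ^ d ≤ ‖f (γ s + (z : ℂ) • w)‖} := by
      ext s
      simp only [Set.mem_iInter, Set.mem_ofPred_eq, Subtype.forall, hA]
      constructor
      · intro h z hz
        exact hf.norm_mul_im_pow_le hw h hz.le
      · intro h z hz
        rcases hz.eq_or_lt with hz0 | hz0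
        · have := hreal s z.re
          rwa [show (z.re : ℂ) = z from Complex.ext rfl (by simp [← hz0])] at this
        · intro h0
          have := h z hz0
          rw [h0, norm_zero] at this
          have : 0 < ‖f w‖ * z.im ^ d := mul_pos (norm_pos_iff.2 hw) (pow_pos hz0 d)
          linarith
    rw [this]
    refine isClosed_iInter fun z => isClosed_le continuous_const ?_
    exact (hfc.comp (hγ.add continuous_const)).norm
  have hopen : IsOpen A := by
    rw [← isClosed_compl_iff]
    set K : Set (ℝ × Metric.sphere (0 : ℂ × ℂ) 1) :=
      {q | 0 ≤ (q.2.1.2 * (starRingEnd ℂ) q.2.1.1).im} ∩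
        {q | f (q.2.1.1 • γ q.1 + q.2.1.2 • w) = 0}
    have hKc : IsClosed K := by
      refine IsClosed.inter (isClosed_le continuous_const ?_) (isClosed_eq ?_ continuous_const)
      · refine Complex.continuous_im.comp (Continuous.mul (by fun_prop) ?_)
        exact Complex.continuous_conj.comp (by fun_prop)
      · exact hfc.comp (by fun_prop)
    have himage : Aᶜ = Prod.fst '' K := by
      ext s
      constructor
      · intro hs
        simp only [hA, Set.mem_compl_iff, Set.mem_ofPred_eq, not_forall, not_not] at hs
        obtain ⟨z, hz, h0⟩ := hs
        have hpos : 0 < ‖((1 : ℂ), z)‖ :=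
          norm_pos_iff.2 fun h => one_ne_zero (congrArg Prod.fst h)
        set c : ℝ := ‖((1 : ℂ), z)‖⁻¹ with hc
        have hcpos : 0 < c := inv_pos.2 hpos
        refine ⟨(s, ⟨((c : ℂ), (c : ℂ) * z), ?_⟩), ⟨?_, ?_⟩, rfl⟩
        · have : ((c : ℂ), (c : ℂ) * z) = c • ((1 : ℂ), z) := by
            ext1 <;> simp
          rw [mem_sphere_zero_iff_norm, this, norm_smul, Real.norm_of_nonneg hcpos.le, hc,
            inv_mul_cancel₀ hpos.ne']
        · simp only [Set.mem_ofPred_eq, Complex.conj_ofReal]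
          rw [show (c : ℂ) * z * c = ((c * c : ℝ) : ℂ) * z by push_cast; ring,
            Complex.im_ofReal_mul]
          positivity
        · have : (c : ℂ) ≠ 0 := Complex.ofReal_ne_zero.2 hcpos.ne'
          simp only [Set.mem_ofPred_eq]
          rw [mul_smul, ← smul_add, hf.map_smul _ _ this, h0, mul_zero]
      · rintro ⟨⟨s', ⟨⟨a, b⟩, hab⟩⟩, ⟨him, h0⟩, rfl⟩
        simp only [Set.mem_ofPred_eq] at him h0 ⊢
        have ha : a ≠ 0 := by
          rintro rfl
          have hb : b ≠ 0 := by rintro rfl; simp at hab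
          rw [zero_smul, zero_add, hf.map_smul _ _ hb] at h0
          exact mul_ne_zero (pow_ne_zero _ hb) hw h0
        intro hs
        refine hs (b / a) ?_ ?_
        · rw [div_eq_mul_inv, Complex.inv_def, ← mul_assoc, mul_comm, Complex.im_ofReal_mul]
          exact mul_nonneg (inv_nonneg.2 (Complex.normSq_nonneg a)) him
        · have : a • γ s' + b • w = a • (γ s' + (b / a) • w) := by
            rw [smul_add, smul_smul, mul_div_cancel₀ _ ha]
          rw [this, hf.map_smul _ _ ha] at h0
          exact (mul_eq_zero.1 h0).resolve_left (pow_ne_zero _ ha)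
    rw [himage]
    exact isClosedMap_fst_of_compactSpace K hKc
  have huniv : A = Set.univ := IsClopen.eq_univ ⟨hclosed, hopen⟩ ⟨0, hstart⟩
  have : s ∈ A := huniv ▸ Set.mem_univ s
  exact this z hz

theorem ne_zero_of_ray (hf : IsHyperbolicForm f d H e) {v : V} (hv : v ∈ H)
    (hray : ∀ t : ℝ, 0 ≤ t → f (v + (t : ℂ) • e) ≠ 0) {δ : ℝ} (hδ : 0 < δ) {z : ℂ}
    (hz : 0 ≤ z.im) : f ((Complex.I * δ) • e + z • v) ≠ 0 := by
  rcases hz.eq_or_lt with hz0 | hz0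
  · have hre : (z.re : ℂ) = z := Complex.ext rfl (by simp [← hz0])
    rw [add_comm, ← hre]
    exact hf.ne_zero _ (hf.real_smul_mem _ _ hv) δ hδ
  have hzne : z ≠ 0 := by rintro rfl; simp at hz0
  set l : ℂ := Complex.I * δ / z with hl
  have hfac : (Complex.I * δ) • e + z • v = z • (v + l • e) := by
    rw [smul_add, smul_smul, hl, mul_div_cancel₀ _ hzne, add_comm]
  rw [hfac, hf.map_smul _ _ hzne]
  refine mul_ne_zero (pow_ne_zero _ hzne) ?_
  have hn : 0 < Complex.normSq z := Complex.normSq_pos.2 hzne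
  have hlre : l.re = δ * z.im / Complex.normSq z := by
    simp [hl, Complex.div_re]
  have hlre_pos : 0 < l.re := by rw [hlre]; positivity
  have hsplit : l = l.re + Complex.I * l.im := by
    rw [mul_comm]; exact (Complex.re_add_im l).symm
  have hmem : v + (l.re : ℂ) • e ∈ H := H.add_mem hv (hf.real_smul_mem _ _ hf.mem)
  have hdecomp : v + l • e = v + (l.re : ℂ) • e + (Complex.I * l.im) • e := by
    conv_lhs => rw [hsplit]
    rw [add_smul, add_assoc]
  rcases lt_trichotomy l.im 0 with him | him | him
  · intro h0
    refine hf.ne_zero _ (H.neg_mem hmem) (-l.im) (neg_pos.2 him) ?_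
    have : -(v + (l.re : ℂ) • e) + (Complex.I * ((-l.im : ℝ) : ℂ)) • e
        = (-1 : ℂ) • (v + l • e) := by
      rw [hdecomp]
      push_cast
      module
    rw [this, hf.map_smul _ _ (by norm_num), h0, mul_zero]
  · rw [hdecomp, him]
    simpa using hray l.re hlre_pos.le
  · rw [hdecomp]
    exact hf.ne_zero _ hmem _ him

variable [ContinuousAdd V] [ContinuousSMul ℂ V]

theorem ne_zero_of_ray_add (hf : IsHyperbolicForm f d H e) {v x : V} (hv : v ∈ H) (hx : x ∈ H)
    (hray : ∀ t : ℝ, 0 ≤ t → f (v + (t : ℂ) • e) ≠ 0) {δ : ℝ} (hδ : 0 < δ) {z : ℂ}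
    (hz : 0 ≤ z.im) : f ((Complex.I * δ) • e + x + z • v) ≠ 0 := by
  have hv0 : f v ≠ 0 := by simpa using hray 0 le_rfl
  have := hf.ne_zero_of_path hv0 (γ := fun s : ℝ => (Complex.I * δ) • e + (s : ℂ) • x)
    (by fun_prop) (fun s y => ?_) (fun z hz => ?_) 1 hz
  · simpa using this
  · have := hf.ne_zero _ (H.add_mem (hf.real_smul_mem s x hx) (hf.real_smul_mem y v hv)) δ hδ
    rwa [add_comm, ← add_assoc] at this
  · simpa using hf.ne_zero_of_ray hv hray hδ hz

theorem ne_zero_of_add_smul (hf : IsHyperbolicForm f d H e) {v w : V} (hv : v ∈ H) (hw : w ∈ H)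
    (hvray : ∀ t : ℝ, 0 ≤ t → f (v + (t : ℂ) • e) ≠ 0)
    (hwray : ∀ t : ℝ, 0 ≤ t → f (w + (t : ℂ) • e) ≠ 0) {a b δ : ℝ} (ha : 0 ≤ a) (hb : 0 ≤ b)
    (hδ : 0 < δ) : f ((a : ℂ) • v + (b : ℂ) • w + (δ : ℂ) • e) ≠ 0 := by
  have hw0 : f w ≠ 0 := by simpa using hwray 0 le_rfl
  have := hf.ne_zero_of_path hw0
    (γ := fun s : ℝ => (Complex.I * δ) • e + (Complex.I * ((s ^ 2 : ℝ) : ℂ)) • v)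
    (by fun_prop) (fun s y => ?_) (fun z hz => ?_) (√a) (z := Complex.I * b) (by simpa using hb)
  · rw [Real.sq_sqrt ha] at this
    intro h0
    apply this
    have h1 : (Complex.I * δ) • e + (Complex.I * (a : ℂ)) • v + (Complex.I * (b : ℂ)) • w
        = Complex.I • ((a : ℂ) • v + (b : ℂ) • w + (δ : ℂ) • e) := by module
    rw [h1, hf.map_smul _ _ Complex.I_ne_zero, h0, mul_zero]
  · have := hf.ne_zero_of_ray_add hv (hf.real_smul_mem y w hw) hvray hδ
      (z := Complex.I * ((s ^ 2 : ℝ) : ℂ))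
      (by rw [mul_comm, Complex.im_ofReal_mul]; simpa using sq_nonneg s)
    rwa [add_right_comm] at this
  · simpa using hf.ne_zero_of_ray hw hwray hδ hz

/-- The hyperbolicity cone of `f` is a convex cone. -/
theorem ne_zero_of_mem_cone (hf : IsHyperbolicForm f d H e) {v w : V} (hv : v ∈ H) (hw : w ∈ H)
    (hvray : ∀ t : ℝ, 0 ≤ t → f (v + (t : ℂ) • e) ≠ 0)
    (hwray : ∀ t : ℝ, 0 ≤ t → f (w + (t : ℂ) • e) ≠ 0) {a b : ℝ} (ha : 0 < a) (hb : 0 ≤ b) :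
    f ((a : ℂ) • v + (b : ℂ) • w) ≠ 0 := by
  have hopen : IsOpen {t : ℝ | f (v + (t : ℂ) • e) ≠ 0} :=
    isOpen_ne_fun (hf.continuous.comp (by fun_prop)) continuous_const
  obtain ⟨ε, hε, hball⟩ := Metric.isOpen_iff.1 hopen 0 (hvray 0 le_rfl)
  have hshift : ∀ t : ℝ, 0 ≤ t → f ((v + ((-(ε / 2) : ℝ) : ℂ) • e) + (t : ℂ) • e) ≠ 0 := by
    intro t ht
    rw [add_assoc, ← add_smul, ← Complex.ofReal_add]
    rcases le_total 0 (-(ε / 2) + t) with h | h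
    · exact hvray _ h
    · refine hball ?_
      rw [Metric.mem_ball, Real.dist_eq, sub_zero, abs_of_nonpos h]
      linarith
  have := hf.ne_zero_of_add_smul (H.add_mem hv (hf.real_smul_mem _ _ hf.mem)) hw hshift hwray
    ha.le hb (show 0 < a * (ε / 2) by positivity)
  convert this using 2
  push_cast
  module

end IsHyperbolicForm

end Hyperbolic

section Pencil

open Polynomial

/-- Expansion of a determinant along its first row and column. -/
theorem Matrix.det_eq_sub_dotProduct_adjugate {K : Type*} [CommRing K] [IsDomain K] {n : ℕ}
    (A : Matrix (Fin (n + 1)) (Fin (n + 1)) K) (h : (A.submatrix Fin.succ Fin.succ).det ≠ 0) :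
    A.det = A 0 0 * (A.submatrix Fin.succ Fin.succ).det -
      (fun j : Fin n => A 0 j.succ) ⬝ᵥ
        (A.submatrix Fin.succ Fin.succ).adjugate *ᵥ (fun i : Fin n => A i.succ 0) := by
  set M := A.submatrix Fin.succ Fin.succ with hM
  set u := M.adjugate *ᵥ (fun i : Fin n => A i.succ 0) with hu
  let L : Matrix (Fin (n + 1)) (Fin (n + 1)) K := Matrix.of fun i j =>
    Fin.cases (Fin.cases M.det (fun _ => 0) j)
      (fun i' => Fin.cases (-u i') (fun j' => (1 : Matrix (Fin n) (Fin n) K) i' j') j) i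
  have hL : L.det = M.det := by
    rw [det_succ_row_zero, Fin.sum_univ_succ]
    have : L.submatrix Fin.succ Fin.succ = 1 := by ext i j; simp [L]
    simp [L, this, Fin.succAbove_zero]
  have hMu (i : Fin n) : ∑ j, M i j * u j = M.det * A i.succ 0 := by
    have : M *ᵥ u = M.det • (fun i : Fin n => A i.succ 0) := by
      rw [hu, mulVec_mulVec, mul_adjugate, smul_mulVec, one_mulVec]
    simpa [mulVec, dotProduct] using congrFun this i
  have hAL : (A * L).det = (A 0 0 * M.det - (fun j : Fin n => A 0 j.succ) ⬝ᵥ u) * M.det := by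
    have h0 : (A * L) 0 0 = A 0 0 * M.det - (fun j : Fin n => A 0 j.succ) ⬝ᵥ u := by
      simp [mul_apply, Fin.sum_univ_succ, L, dotProduct, sub_eq_add_neg]
    have h1 (i : Fin n) : (A * L) i.succ 0 = 0 := by
      have := hMu i
      rw [hM] at this
      simp only [submatrix_apply, ← hM] at this
      simp [mul_apply, Fin.sum_univ_succ, L, this, mul_comm]
    have h2 : (A * L).submatrix Fin.succ Fin.succ = M := by
      ext i j
      simp [mul_apply, Fin.sum_univ_succ, L, hM, one_apply]
    rw [det_succ_column_zero, Fin.sum_univ_succ]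
    simp [h1, h0, h2, Fin.succAbove_zero]
  rw [det_mul, hL] at hAL
  exact mul_right_cancel₀ h hAL

/-- The matrix coefficients of the adjugate of the characteristic matrix. -/
noncomputable def adjCoeff {K : Type*} [CommRing K] {n : ℕ} (B : Matrix (Fin n) (Fin n) K)
    (m : ℕ) : Matrix (Fin n) (Fin n) K :=
  (charmatrix B).adjugate.map fun p => p.coeff m

theorem adjCoeff_eq {K : Type*} [CommRing K] {n : ℕ} (B : Matrix (Fin n) (Fin n) K) (m : ℕ) :
    adjCoeff B m = B.charpoly.coeff (m + 1) • (1 : Matrix (Fin n) (Fin n) K) +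
      B * adjCoeff B (m + 1) := by
  ext i j
  have h : (scalar (Fin n) (X : K[X]) - C.mapMatrix B) * B.charmatrix.adjugate =
      B.charpoly • (1 : Matrix (Fin n) (Fin n) K[X]) := mul_adjugate _
  have h' := congrArg (fun M => (M i j).coeff (m + 1)) h
  simp only [sub_mul, scalar_apply, Matrix.sub_apply, diagonal_mul, coeff_sub, coeff_X_mul,
    Matrix.smul_apply, smul_eq_mul] at h'
  simp only [mul_apply, finsetSum_coeff, RingHom.mapMatrix_apply,
    map_apply, coeff_C_mul] at h'
  have h1 : (B.charpoly * (1 : Matrix (Fin n) (Fin n) K[X]) i j).coeff (m + 1) =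
      B.charpoly.coeff (m + 1) * (1 : Matrix (Fin n) (Fin n) K) i j := by
    rw [one_apply, one_apply]
    split_ifs <;> simp
  rw [h1] at h'
  simp only [adjCoeff, map_apply, Matrix.add_apply, Matrix.smul_apply, smul_eq_mul, mul_apply]
  linear_combination h'

theorem adjCoeff_eq_zero {K : Type*} [CommRing K] [Nontrivial K] {n : ℕ}
    (B : Matrix (Fin n) (Fin n) K) {m : ℕ} (hm : n ≤ m) : adjCoeff B m = 0 := by
  obtain ⟨N, hN⟩ : ∃ N, ∀ m, N ≤ m → adjCoeff B m = 0 := by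
    refine ⟨(∑ i, ∑ j, ((charmatrix B).adjugate i j).natDegree) + 1, fun m hm => ?_⟩
    ext i j
    refine coeff_eq_zero_of_natDegree_lt ?_
    have h1 := Finset.single_le_sum (f := fun j => ((charmatrix B).adjugate i j).natDegree)
      (fun _ _ => Nat.zero_le _) (Finset.mem_univ j)
    have h2 := Finset.single_le_sum
      (f := fun i => ∑ j, ((charmatrix B).adjugate i j).natDegree)
      (fun _ _ => Nat.zero_le _) (Finset.mem_univ i)
    exact lt_of_le_of_lt (h1.trans h2) hm
  have key (j : ℕ) : ∀ m, n ≤ m → N ≤ m + j → adjCoeff B m = 0 := by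
    induction j with
    | zero => exact fun m _ h => hN m h
    | succ j ih =>
      intro m hm h
      rw [adjCoeff_eq, ih (m + 1) (by omega) (by omega), coeff_eq_zero_of_natDegree_lt]
      · simp
      · rw [charpoly_natDegree_eq_dim, Fintype.card_fin]
        omega
  exact key N m hm (by omega)

theorem Matrix.coeff_charpoly_neg {K : Type*} [CommRing K] {n : ℕ} (A : Matrix (Fin n) (Fin n) K)
    (m : ℕ) : (-A).charpoly.coeff m = (-1) ^ (n + m) * A.charpoly.coeff m := by
  have h : (-A).charpoly.comp (C (-1) * X) = (-1) ^ n * A.charpoly := by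
    rw [charpoly, charpoly, ← coe_compRingHom_apply, RingHom.map_det]
    have : (compRingHom (C (-1) * X)).mapMatrix (-A).charmatrix = -A.charmatrix := by
      ext1 i j
      by_cases hij : i = j
      · subst hij
        simp [sub_eq_add_neg, add_comm]
      · simp [hij]
    rw [this, det_neg, Fintype.card_fin]
  have h' := congrArg (fun p => p.coeff m) h
  rw [show ((-1 : K[X]) ^ n) = C ((-1) ^ n) by simp] at h'
  simp only [comp_C_mul_X_coeff, coeff_C_mul] at h'
  have hs : ((-1 : K) ^ m) * (-1) ^ m = 1 := by rw [← mul_pow]; simp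
  rw [pow_add]
  linear_combination (-1) ^ m * h' - (-A).charpoly.coeff m * hs

theorem sigmaMat_eq {n : ℕ} (A : Matrix (Fin n) (Fin n) ℝ) {k : ℕ} (hk : k ≤ n) :
    sigmaMat A k = (-A).charpoly.coeff (n - k) := by
  rw [sigmaMat, coeff_charpoly_neg]
  obtain ⟨j, rfl⟩ := Nat.exists_eq_add_of_le hk
  rw [Nat.add_sub_cancel_left, add_assoc, pow_add, ← two_mul j, pow_mul]
  simp

theorem newtonT_eq_adjCoeff {n : ℕ} (A : Matrix (Fin n) (Fin n) ℝ) {k : ℕ} (hk : k < n) :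
    newtonT A k = adjCoeff (-A) (n - 1 - k) := by
  induction k with
  | zero =>
    rw [adjCoeff_eq, adjCoeff_eq_zero _ (by omega)]
    have := sigmaMat_eq A (Nat.zero_le n)
    rw [show n - 1 - 0 + 1 = n - 0 by omega, ← this]
    simp [newtonT]
  | succ k ih =>
    rw [adjCoeff_eq, show n - 1 - (k + 1) + 1 = n - (k + 1) by omega, ← sigmaMat_eq A hk.le,
      show n - (k + 1) = n - 1 - k by omega, ← ih (by omega), newtonT, newtonT,
      Finset.sum_range_succ', Finset.mul_sum, add_comm]
    congr 1
    · simp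
    · refine Finset.sum_congr rfl fun j _ => ?_
      rw [Nat.add_sub_add_right, mul_smul_comm, neg_mul, ← pow_succ', smul_neg, ← neg_smul]
      congr 1
      ring

/-- The diagonal matrix with first entry `a` and all other entries equal to one. -/
def cornerDiagonal {K : Type*} [Zero K] [One K] {n : ℕ} (a : K) :
    Matrix (Fin (n + 1)) (Fin (n + 1)) K :=
  diagonal (Fin.cons a fun _ => 1)

/-- The determinant of `Z + X • diag (0, 1, …, 1)` as a polynomial. -/
noncomputable def pencilDet {K : Type*} [CommRing K] {n : ℕ}
    (Z : Matrix (Fin (n + 1)) (Fin (n + 1)) K) : K[X] :=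
  (Z.map C + (X : K[X]) • cornerDiagonal 0).det

theorem cornerDiagonal_map {K L : Type*} [CommRing K] [CommRing L] {n : ℕ} (φ : K →+* L) (a : K) :
    (cornerDiagonal a : Matrix (Fin (n + 1)) (Fin (n + 1)) K).map φ = cornerDiagonal (φ a) := by
  rw [cornerDiagonal, diagonal_map (map_zero φ), cornerDiagonal]
  congr 1
  ext i
  refine Fin.cases ?_ (fun i => ?_) i <;> simp

theorem eval_pencilDet {K : Type*} [CommRing K] {n : ℕ}
    (Z : Matrix (Fin (n + 1)) (Fin (n + 1)) K) (u : K) :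
    (pencilDet Z).eval u = (Z + u • cornerDiagonal 0).det := by
  rw [pencilDet, ← coe_evalRingHom, RingHom.map_det]
  congr 1
  have := cornerDiagonal_map (n := n) (evalRingHom u) (0 : K[X])
  ext i j
  have := congrFun (congrFun this i) j
  simp only [map_apply, map_zero] at this
  simp [← this]

theorem pencilDet_map {K L : Type*} [CommRing K] [CommRing L] {n : ℕ} (φ : K →+* L)
    (Z : Matrix (Fin (n + 1)) (Fin (n + 1)) K) :
    pencilDet (Z.map φ) = (pencilDet Z).map φ := by
  rw [pencilDet, pencilDet, ← coe_mapRingHom, RingHom.map_det]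
  congr 1
  have := cornerDiagonal_map (n := n) (mapRingHom φ) (0 : K[X])
  ext1 i j
  have := congrFun (congrFun this i) j
  simp only [map_apply, map_zero] at this
  simp [← this]

theorem pencilDet_add_smul {K : Type*} [CommRing K] {n : ℕ}
    (Z : Matrix (Fin (n + 1)) (Fin (n + 1)) K) (t : K) :
    pencilDet (Z + t • cornerDiagonal 0) = taylor t (pencilDet Z) := by
  rw [pencilDet, pencilDet, ← taylorAlgHom_apply, AlgHom.map_det]
  congr 1
  have h1 := cornerDiagonal_map (n := n) (taylorAlgHom t : K[X] →+* K[X]) (0 : K[X])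
  have h2 := cornerDiagonal_map (n := n) (C : K →+* K[X]) (0 : K)
  ext1 i j
  have h1 := congrFun (congrFun h1 i) j
  have h2 := congrFun (congrFun h2 i) j
  simp only [map_apply, map_zero, RingHom.coe_coe] at h1 h2
  simp only [map_apply, Matrix.add_apply, Matrix.smul_apply, smul_eq_mul, map_add, map_mul, h2,
    AlgHom.mapMatrix_apply, h1]
  simp only [taylorAlgHom_apply, taylor_X, taylor_C]
  ring

theorem coeff_pencilDet_smul {K : Type*} [Field K] {n k : ℕ} (hk : k ≤ n) {c : K} (hc : c ≠ 0)
    (Z : Matrix (Fin (n + 1)) (Fin (n + 1)) K) :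
    (pencilDet (c • Z)).coeff (n - k) = c ^ (k + 1) * (pencilDet Z).coeff (n - k) := by
  have h : (pencilDet (c • Z)).comp (C c * X) = C (c ^ (n + 1)) * pencilDet Z := by
    have h0 : C (c ^ (n + 1)) * pencilDet Z =
        (C c • (Z.map C + (X : K[X]) • cornerDiagonal 0)).det := by
      rw [det_smul, Fintype.card_fin, C_pow, pencilDet]
    rw [h0, pencilDet, ← coe_compRingHom_apply, RingHom.map_det]
    congr 1
    have h1 := cornerDiagonal_map (n := n) (compRingHom (C c * X)) (0 : K[X])
    ext1 i j
    have h1 := congrFun (congrFun h1 i) j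
    simp only [map_apply, map_zero] at h1
    simp only [map_apply, Matrix.add_apply, Matrix.smul_apply, smul_eq_mul, map_add, map_mul,
      RingHom.mapMatrix_apply, h1, coe_compRingHom_apply, X_comp, C_comp]
    ring
  have h' := congrArg (fun p => p.coeff (n - k)) h
  simp only [comp_C_mul_X_coeff, coeff_C_mul] at h'
  have hpow : c ^ (n + 1) = c ^ (k + 1) * c ^ (n - k) := by
    rw [← pow_add]; congr 1; omega
  refine mul_right_cancel₀ (pow_ne_zero (n - k) hc) ?_
  rw [h', hpow]
  ring

theorem exists_eval_eq_coeff_pencilDet {K : Type*} [CommRing K] {n : ℕ} (m : ℕ)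
    (Z W : Matrix (Fin (n + 1)) (Fin (n + 1)) K) :
    ∃ p : K[X], ∀ z : K, p.eval z = (pencilDet (Z + z • W)).coeff m := by
  refine ⟨(pencilDet (Z.map C + (X : K[X]) • W.map C)).coeff m, fun z => ?_⟩
  have : (Z.map C + (X : K[X]) • W.map C).map (evalRingHom z) = Z + z • W := by
    ext i j
    simp only [map_apply, Matrix.add_apply, Matrix.smul_apply, smul_eq_mul,
      coe_evalRingHom, eval_add, eval_mul, eval_C, eval_X]
  rw [← this, pencilDet_map, coeff_map, coe_evalRingHom]

theorem coeff_pencilDet {K : Type*} [CommRing K] [IsDomain K] {n : ℕ}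
    (Z : Matrix (Fin (n + 1)) (Fin (n + 1)) K) (m : ℕ) :
    (pencilDet Z).coeff m = Z 0 0 * (-Z.submatrix Fin.succ Fin.succ).charpoly.coeff m -
      (fun j : Fin n => Z 0 j.succ) ⬝ᵥ
        adjCoeff (-Z.submatrix Fin.succ Fin.succ) m *ᵥ (fun i : Fin n => Z i.succ 0) := by
  set z := Z.submatrix Fin.succ Fin.succ with hz
  set P := Z.map C + (X : K[X]) • cornerDiagonal 0 with hP
  have hsub : P.submatrix Fin.succ Fin.succ = charmatrix (-z) := by
    ext1 i j
    by_cases hij : i = j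
    · subst hij
      simp [hP, hz, cornerDiagonal, add_comm]
    · simp [hP, hz, cornerDiagonal, hij]
  have h00 : P 0 0 = C (Z 0 0) := by simp [hP, cornerDiagonal]
  have h0 (j : Fin n) : P 0 j.succ = C (Z 0 j.succ) := by
    simp [hP, cornerDiagonal, (Fin.succ_ne_zero j).symm]
  have h1 (i : Fin n) : P i.succ 0 = C (Z i.succ 0) := by
    simp [hP, cornerDiagonal]
  have hdet : (P.submatrix Fin.succ Fin.succ).det = (-z).charpoly := by rw [hsub, charpoly]
  rw [pencilDet, ← hP, det_eq_sub_dotProduct_adjugate P (by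
    rw [hdet]; exact (charpoly_monic _).ne_zero), hdet, hsub, coeff_sub, h00, coeff_C_mul]
  congr 1
  simp only [h0, h1, dotProduct, mulVec, finsetSum_coeff, coeff_C_mul, coeff_mul_C, adjCoeff,
    map_apply]

theorem Fk_eq_coeff_pencilDet {n k : ℕ} (hk1 : 1 ≤ k) (hkn : k ≤ n)
    {R : Matrix (Fin (n + 1)) (Fin (n + 1)) ℝ} (hR : R.IsSymm) :
    Fk k R = (pencilDet R).coeff (n - k) := by
  have h1 : (fun i : Fin n => R i.succ 0) = xVec R := funext fun i => hR.apply _ _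
  have h2 : R.submatrix Fin.succ Fin.succ = lowerBlock R := rfl
  rw [coeff_pencilDet, h1, h2, Fk, sigmaMat_eq _ hkn, newtonT_eq_adjCoeff _ (by omega),
    show n - 1 - (k - 1) = n - k by omega]
  rfl

theorem coeff_pencilDet_eq_zero {K : Type*} [CommRing K] [IsDomain K] {n : ℕ}
    (Z : Matrix (Fin (n + 1)) (Fin (n + 1)) K) {m : ℕ} (hm : n < m) :
    (pencilDet Z).coeff m = 0 := by
  rw [coeff_pencilDet, adjCoeff_eq_zero _ hm.le, coeff_eq_zero_of_natDegree_lt]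
  · simp
  · rwa [charpoly_natDegree_eq_dim, Fintype.card_fin]

theorem coeff_pencilDet_self {K : Type*} [CommRing K] [IsDomain K] {n : ℕ}
    (Z : Matrix (Fin (n + 1)) (Fin (n + 1)) K) : (pencilDet Z).coeff n = Z 0 0 := by
  have h : (-Z.submatrix Fin.succ Fin.succ).charpoly.coeff n = 1 := by
    have := (charpoly_monic (-Z.submatrix Fin.succ Fin.succ)).coeff_natDegree
    rwa [charpoly_natDegree_eq_dim, Fintype.card_fin] at this
  rw [coeff_pencilDet, adjCoeff_eq_zero _ le_rfl, h]
  simp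

theorem Polynomial.continuous_coeff_prod {ι T : Type*} [TopologicalSpace T] {K : Type*}
    [CommRing K] [TopologicalSpace K] [IsTopologicalRing K] (s : Finset ι) {p : ι → T → K[X]}
    (h : ∀ i m, Continuous fun t => (p i t).coeff m) (m : ℕ) :
    Continuous fun t => (∏ i ∈ s, p i t).coeff m := by
  classical
  induction s using Finset.induction_on generalizing m with
  | empty => simpa using continuous_const
  | insert a s ha ih =>
    simp only [Finset.prod_insert ha, coeff_mul]
    exact continuous_finsetSum _ fun q _ => (h a q.1).mul (ih q.2)

theorem continuous_coeff_pencilDet {K : Type*} [CommRing K] [TopologicalSpace K]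
    [IsTopologicalRing K] {n : ℕ} (m : ℕ) :
    Continuous fun Z : Matrix (Fin (n + 1)) (Fin (n + 1)) K => (pencilDet Z).coeff m := by
  simp only [pencilDet, det_apply, finsetSum_coeff, coeff_smul]
  refine continuous_finsetSum _ fun σ _ => Continuous.const_smul ?_ _
  refine continuous_coeff_prod _ (fun i m => ?_) m
  simp only [Matrix.add_apply, map_apply, coeff_add]
  refine Continuous.add ?_ continuous_const
  rcases m with _ | m
  · simp only [coeff_C_zero]
    fun_prop
  · simp only [coeff_C_succ]
    exact continuous_const

/-- A Hermitian matrix plus an imaginary positive diagonal matrix is nonsingular. -/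
theorem Matrix.IsHermitian.det_add_I_smul_diagonal_ne_zero {ι : Type*} [Fintype ι] [DecidableEq ι]
    {A : Matrix ι ι ℂ} (hA : A.IsHermitian) {y : ι → ℝ} (hy : ∀ i, 0 < y i) :
    (A + Complex.I • diagonal fun i => (y i : ℂ)).det ≠ 0 := by
  intro h
  obtain ⟨v, hv, h0⟩ := exists_mulVec_eq_zero_iff.2 h
  have h1 : star v ⬝ᵥ A *ᵥ v + Complex.I * ∑ i, ((y i * Complex.normSq (v i) : ℝ) : ℂ) = 0 := by
    have := congrArg (fun w => star v ⬝ᵥ w) h0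
    simp only [add_mulVec, smul_mulVec, dotProduct_add, dotProduct_smul, dotProduct_zero,
      smul_eq_mul] at this
    rw [← this]
    congr 2
    simp only [dotProduct, mulVec_diagonal, Pi.star_apply, Complex.ofReal_mul,
      Complex.normSq_eq_conj_mul_self]
    refine Finset.sum_congr rfl fun i _ => ?_
    simp only [RCLike.star_def]
    ring
  have h2 := congrArg Complex.im h1
  have h3 : (star v ⬝ᵥ A *ᵥ v).im = 0 := hA.im_star_dotProduct_mulVec_self v
  rw [Complex.add_im, h3, ← Complex.ofReal_sum, mul_comm, Complex.im_ofReal_mul] at h2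
  simp only [Complex.I_im, mul_one, zero_add, Complex.zero_im] at h2
  have hnn : ∀ i ∈ Finset.univ, 0 ≤ y i * Complex.normSq (v i) := fun i _ =>
    mul_nonneg (hy i).le (Complex.normSq_nonneg _)
  apply hv
  ext i
  have := (Finset.sum_eq_zero_iff_of_nonneg hnn).1 h2 i (Finset.mem_univ i)
  simpa [(hy i).ne'] using this

end Pencil

section ConvexCone

open Polynomial

theorem isHyperbolicForm_coeff_pencilDet {n k : ℕ} (hk : k ≤ n) {M : ℝ} (hM : 0 < M) :
    IsHyperbolicForm
      (fun Z : Matrix (Fin (n + 1)) (Fin (n + 1)) ℂ => (pencilDet Z).coeff (n - k)) (k + 1)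
      (selfAdjoint (Matrix (Fin (n + 1)) (Fin (n + 1)) ℂ)) (cornerDiagonal (M : ℂ)) where
  continuous := continuous_coeff_pencilDet _
  map_smul c v hc := coeff_pencilDet_smul hk hc v
  exists_polynomial v w := exists_eval_eq_coeff_pencilDet _ v w
  mem := by
    rw [selfAdjoint.mem_iff, star_eq_conjTranspose, cornerDiagonal, diagonal_conjTranspose]
    congr 1
    ext i
    refine Fin.cases ?_ (fun i => ?_) i <;> simp
  real_smul_mem x v hv := by
    rw [selfAdjoint.mem_iff] at hv ⊢
    rw [star_smul, hv]
    simp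
  ne_zero v hv δ hδ := by
    have hv' : v.IsHermitian := hv
    set Z := v + (Complex.I * δ) • cornerDiagonal (M : ℂ) with hZ
    have h00 : Z 0 0 ≠ 0 := by
      intro h
      have h1 := congrArg Complex.im h
      have h2 : (v 0 0).im = 0 := Complex.conj_eq_iff_im.1 (hv'.apply 0 0)
      simp [hZ, cornerDiagonal, h2, hδ.ne', hM.ne'] at h1
    refine coeff_ne_zero_of_im_nonneg (fun u hu => ?_) ?_
    · have hE : (cornerDiagonal 0 : Matrix (Fin (n + 1)) (Fin (n + 1)) ℂ).IsHermitian := by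
        rw [IsHermitian, cornerDiagonal, diagonal_conjTranspose]
        congr 1
        ext i
        refine Fin.cases ?_ (fun i => ?_) i <;> simp
      have hA : (v + (u.re : ℂ) • cornerDiagonal 0).IsHermitian := by
        refine hv'.add ?_
        rw [IsHermitian, conjTranspose_smul, hE]
        simp
      have hy : ∀ i : Fin (n + 1),
          0 < (Fin.cons (δ * M) (fun _ => δ + u.im) : Fin (n + 1) → ℝ) i := by
        intro i
        refine Fin.cases ?_ (fun i => ?_) i
        · simpa using mul_pos hδ hM
        · simpa using by linarith
      have := hA.det_add_I_smul_diagonal_ne_zero hy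
      rw [eval_pencilDet]
      convert this using 2
      rw [hZ, add_assoc, add_assoc]
      congr 1
      ext i j
      by_cases hij : i = j
      · subst hij
        refine Fin.cases ?_ (fun i => ?_) i
        · simp [cornerDiagonal, mul_assoc]
        · simp only [cornerDiagonal, Matrix.add_apply, Matrix.smul_apply, diagonal_apply_eq,
            Fin.cons_succ, smul_eq_mul, mul_one, Complex.ofReal_add]
          conv_lhs => rw [← Complex.re_add_im u]
          ring
      · simp [cornerDiagonal, hij]
    · refine le_trans (Nat.sub_le n k) (le_natDegree_of_ne_zero ?_)
      rwa [coeff_pencilDet_self]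

/-- A polynomial with positive constant term becomes positive on the half line after adding a
large multiple of `X * b`, where `b` has positive coefficients. -/
theorem Polynomial.exists_forall_eval_add_pos {a b : ℝ[X]} {k : ℕ} (ha : 0 < a.coeff 0)
    (hak : ∀ i, k < i → a.coeff i = 0) (hb : ∀ i, i ≤ k → 0 < b.coeff i)
    (hbk : ∀ i, k < i → b.coeff i = 0) :
    ∃ M₀ : ℝ, ∀ M, M₀ ≤ M → ∀ t, 0 ≤ t → 0 < a.eval t + t * M * b.eval t := by
  refine ⟨∑ i ∈ Finset.range (k + 1), |a.coeff (i + 1)| / b.coeff i, fun M hM t ht => ?_⟩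
  have hnonneg : 0 ≤ (a.divX + C M * b).eval t := by
    rw [eval_eq_sum_range]
    refine Finset.sum_nonneg fun i _ => mul_nonneg ?_ (pow_nonneg ht i)
    rw [coeff_add, coeff_divX, coeff_C_mul]
    rcases le_or_gt i k with hi | hi
    · have h1 : |a.coeff (i + 1)| / b.coeff i ≤ M := by
        refine le_trans (Finset.single_le_sum
          (f := fun i => |a.coeff (i + 1)| / b.coeff i) (fun j hj => ?_)
          (Finset.mem_range.2 (Nat.lt_succ_of_le hi))) hM
        exact div_nonneg (abs_nonneg _) (hb j (by simpa [Nat.lt_succ_iff] using hj)).le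
      rw [div_le_iff₀ (hb i hi)] at h1
      linarith [neg_abs_le (a.coeff (i + 1))]
    · rw [hak (i + 1) (by omega), hbk i hi]
      simp
  have hsplit : a.eval t = t * a.divX.eval t + a.coeff 0 := by
    have := congrArg (eval t) (divX_mul_X_add a)
    simp only [eval_add, eval_mul, eval_X, eval_C] at this
    rw [← this, mul_comm]
  rw [eval_add, eval_mul, eval_C] at hnonneg
  rw [hsplit]
  nlinarith [mul_nonneg ht hnonneg]

theorem coeff_pencilDet_add_smul_cornerDiagonal {n : ℕ}
    (R : Matrix (Fin (n + 1)) (Fin (n + 1)) ℝ) (t M : ℝ) (m : ℕ) :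
    (pencilDet (R + t • cornerDiagonal M)).coeff m =
      (hasseDeriv m (pencilDet R)).eval t +
        t * M * (hasseDeriv m (-lowerBlock R).charpoly).eval t := by
  rw [← taylor_coeff, ← taylor_coeff, ← pencilDet_add_smul]
  have hsub (a : ℝ) : -(R + t • cornerDiagonal a).submatrix Fin.succ Fin.succ =
      -lowerBlock R - scalar (Fin n) t := by
    ext i j
    by_cases hij : i = j
    · subst hij
      simp [cornerDiagonal, lowerBlock]
      ring
    · simp [cornerDiagonal, lowerBlock, hij]
  have htaylor : (-lowerBlock R - scalar (Fin n) t).charpoly =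
      taylor t (-lowerBlock R).charpoly := by
    rw [charpoly_sub_scalar, taylor_apply]
  have hrow (a : ℝ) :
      (fun j : Fin n => (R + t • cornerDiagonal a : Matrix (Fin (n + 1)) (Fin (n + 1)) ℝ) 0 j.succ) =
        xVec R := by
    ext j
    simp [cornerDiagonal, xVec, (Fin.succ_ne_zero j).symm]
  have hcol (a : ℝ) :
      (fun i : Fin n => (R + t • cornerDiagonal a : Matrix (Fin (n + 1)) (Fin (n + 1)) ℝ) i.succ 0) =
        fun i : Fin n => R i.succ 0 := by
    ext j
    simp [cornerDiagonal]
  have hcorner (a : ℝ) :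
      (R + t • cornerDiagonal a : Matrix (Fin (n + 1)) (Fin (n + 1)) ℝ) 0 0 = R 0 0 + t * a := by
    simp [cornerDiagonal]
  rw [coeff_pencilDet, coeff_pencilDet, hsub, hsub, hrow, hrow, hcol, hcol, hcorner, hcorner,
    htaylor]
  ring

theorem inS.exists_forall_coeff_pencilDet_pos {n k : ℕ} (hk1 : 1 ≤ k) (hkn : k ≤ n)
    {R : Matrix (Fin (n + 1)) (Fin (n + 1)) ℝ} (hR : inS k R) :
    ∃ M₀ : ℝ, ∀ M, M₀ ≤ M → ∀ t : ℝ, 0 ≤ t →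
      0 < (pencilDet (R + t • cornerDiagonal M)).coeff (n - k) := by
  obtain ⟨hsymm, hgamma, hF⟩ := hR
  simp only [coeff_pencilDet_add_smul_cornerDiagonal]
  refine exists_forall_eval_add_pos (k := k) ?_ (fun i hi => ?_) (fun i hi => ?_) (fun i hi => ?_)
  · rw [hasseDeriv_coeff, zero_add, Nat.choose_self, ← Fk_eq_coeff_pencilDet hk1 hkn hsymm]
    simpa using hF
  · rw [hasseDeriv_coeff, coeff_pencilDet_eq_zero _ (by omega), mul_zero]
  · rw [hasseDeriv_coeff, show i + (n - k) = n - (k - i) by omega,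
      ← sigmaMat_eq _ (show k - i ≤ n by omega)]
    refine mul_pos (Nat.cast_pos.2 (Nat.choose_pos (by omega))) ?_
    rcases hi.eq_or_lt with rfl | hlt
    · rw [Nat.sub_self, sigmaMat_eq _ (Nat.zero_le n)]
      have := (charpoly_monic (-lowerBlock R)).coeff_natDegree
      rw [charpoly_natDegree_eq_dim, Fintype.card_fin] at this
      rw [Nat.sub_zero, this]
      exact one_pos
    · exact hgamma _ (by omega) (by omega)
  · rw [hasseDeriv_coeff, coeff_eq_zero_of_natDegree_lt, mul_zero]
    rw [charpoly_natDegree_eq_dim, Fintype.card_fin]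
    omega

theorem isHermitian_map_ofReal {ι : Type*} {R : Matrix ι ι ℝ} (hR : R.IsSymm) :
    (R.map Complex.ofRealHom).IsHermitian := by
  ext i j
  simp [hR.apply i j]

theorem inS.Fk_add_smul_pos {n k : ℕ} (hk1 : 1 ≤ k) (hkn : k ≤ n)
    {R R' : Matrix (Fin (n + 1)) (Fin (n + 1)) ℝ} (hR : inS k R) (hR' : inS k R')
    {s s' : ℝ} (hs : 0 < s) (hs' : 0 < s') : 0 < Fk k (s • R + s' • R') := by
  obtain ⟨M₁, h₁⟩ := hR.exists_forall_coeff_pencilDet_pos hk1 hkn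
  obtain ⟨M₂, h₂⟩ := hR'.exists_forall_coeff_pencilDet_pos hk1 hkn
  set M := max (max M₁ M₂) 1
  have hM1 : M₁ ≤ M := le_trans (le_max_left _ _) (le_max_left _ _)
  have hM2 : M₂ ≤ M := le_trans (le_max_right _ _) (le_max_left _ _)
  have hM0 : 0 < M := lt_of_lt_of_le one_pos (le_max_right _ _)
  have hray (Q : Matrix (Fin (n + 1)) (Fin (n + 1)) ℝ)
      (hQ : ∀ t : ℝ, 0 ≤ t → 0 < (pencilDet (Q + t • cornerDiagonal M)).coeff (n - k)) (t : ℝ)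
      (ht : 0 ≤ t) : (pencilDet (Q.map Complex.ofRealHom +
        (t : ℂ) • cornerDiagonal (M : ℂ))).coeff (n - k) ≠ 0 := by
    have hmap : (Q + t • cornerDiagonal M).map Complex.ofRealHom =
        Q.map Complex.ofRealHom + (t : ℂ) • cornerDiagonal (M : ℂ) := by
      have := cornerDiagonal_map (n := n) Complex.ofRealHom M
      rw [Complex.ofRealHom_eq_coe] at this
      rw [← this]
      ext i j
      simp
    rw [← hmap, pencilDet_map, coeff_map]
    exact Complex.ofReal_ne_zero.2 (hQ t ht).ne'
  have hne (b : ℝ) (hb : 0 ≤ b) : (pencilDet (s • R + b • R')).coeff (n - k) ≠ 0 := by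
    have := (isHyperbolicForm_coeff_pencilDet hkn hM0).ne_zero_of_mem_cone
      (isHermitian_map_ofReal hR.1) (isHermitian_map_ofReal hR'.1)
      (hray R (h₁ M hM1)) (hray R' (h₂ M hM2)) hs hb
    have hmap : (s • R + b • R').map Complex.ofRealHom =
        (s : ℂ) • R.map Complex.ofRealHom + (b : ℂ) • R'.map Complex.ofRealHom := by
      ext i j
      simp
    rw [← hmap, pencilDet_map, coeff_map] at this
    exact fun h0 => this (by rw [h0, map_zero])
  have hcont : Continuous fun b : ℝ => (pencilDet (s • R + b • R')).coeff (n - k) :=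
    (continuous_coeff_pencilDet (n - k)).comp (by fun_prop)
  have hstart : 0 < (pencilDet (s • R + (0 : ℝ) • R')).coeff (n - k) := by
    rw [zero_smul, add_zero, coeff_pencilDet_smul hkn hs.ne',
      ← Fk_eq_coeff_pencilDet hk1 hkn hR.1]
    exact mul_pos (pow_pos hs _) hR.2.2
  rw [Fk_eq_coeff_pencilDet hk1 hkn ((hR.1.smul s).add (hR'.1.smul s'))]
  by_contra hneg
  obtain ⟨b, hb, hb0⟩ := intermediate_value_Icc' hs'.le hcont.continuousOn
    ⟨not_lt.1 hneg, hstart.le⟩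
  exact hne b hb.1 hb0

/-- The block diagonal matrix with blocks `a` and `r`. -/
def cornerBlock {n : ℕ} (a : ℝ) (r : Matrix (Fin n) (Fin n) ℝ) :
    Matrix (Fin (n + 1)) (Fin (n + 1)) ℝ :=
  Matrix.of fun i j => Fin.cases (Fin.cases a (fun _ => 0) j)
    (fun i' => Fin.cases 0 (fun j' => r i' j') j) i

theorem lowerBlock_cornerBlock {n : ℕ} (a : ℝ) (r : Matrix (Fin n) (Fin n) ℝ) :
    lowerBlock (cornerBlock a r) = r := by
  ext i j
  simp [lowerBlock, cornerBlock]

theorem Fk_cornerBlock {n : ℕ} (k : ℕ) (a : ℝ) (r : Matrix (Fin n) (Fin n) ℝ) :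
    Fk k (cornerBlock a r) = a * sigmaMat r k := by
  have hx : xVec (cornerBlock a r) = 0 := by
    ext i
    simp [xVec, cornerBlock]
  rw [Fk, hx, lowerBlock_cornerBlock, zero_dotProduct, sub_zero]
  simp [cornerBlock]

theorem GammaPlus.inS_cornerBlock {n k : ℕ} (hk : 1 ≤ k) {r : Matrix (Fin n) (Fin n) ℝ}
    (hsymm : r.IsSymm) (hr : GammaPlus k r) : inS k (cornerBlock 1 r) := by
  refine ⟨?_, by rwa [lowerBlock_cornerBlock], ?_⟩
  · ext i j
    refine Fin.cases (Fin.cases ?_ (fun j => ?_) j) (fun i => Fin.cases ?_ (fun j => ?_) j) i <;>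
      simp [cornerBlock, hsymm.apply]
  · rw [Fk_cornerBlock, one_mul]
    exact hr k hk le_rfl

theorem GammaPlus.add_smul {n k : ℕ} (hkn : k ≤ n) {r r' : Matrix (Fin n) (Fin n) ℝ}
    (hsymm : r.IsSymm) (hsymm' : r'.IsSymm) (hr : GammaPlus k r) (hr' : GammaPlus k r')
    {s s' : ℝ} (hs : 0 < s) (hs' : 0 < s') : GammaPlus k (s • r + s' • r') := by
  intro j hj hjk
  have hpos := inS.Fk_add_smul_pos hj (hjk.trans hkn)
    (GammaPlus.inS_cornerBlock hj hsymm fun i hi hij => hr i hi (hij.trans hjk))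
    (GammaPlus.inS_cornerBlock hj hsymm' fun i hi hij => hr' i hi (hij.trans hjk)) hs hs'
  have hsum : s • cornerBlock 1 r + s' • cornerBlock 1 r' =
      cornerBlock (s + s') (s • r + s' • r') := by
    ext i j
    refine Fin.cases (Fin.cases ?_ (fun j => ?_) j) (fun i => Fin.cases ?_ (fun j => ?_) j) i <;>
      simp [cornerBlock]
  rw [hsum, Fk_cornerBlock] at hpos
  exact pos_of_mul_pos_right hpos (by positivity)

end ConvexCone

/-- `S` is a convex cone. -/
theorem S_is_convex_cone (n k : ℕ) (hn : 1 ≤ n) (hk1 : 1 ≤ k) (hkn : k ≤ n)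
    (R R' : Matrix (Fin (n + 1)) (Fin (n + 1)) ℝ)
    (hR : inS k R) (hR' : inS k R')
    (s s' : ℝ) (hs : 0 < s) (hs' : 0 < s') :
    inS k (s • R + s' • R') := by
  have hlower {Q : Matrix (Fin (n + 1)) (Fin (n + 1)) ℝ} (hQ : Q.IsSymm) :
      (lowerBlock Q).IsSymm := hQ.submatrix Fin.succ
  exact ⟨(hR.1.smul s).add (hR'.1.smul s'),
    GammaPlus.add_smul hkn (hlower hR.1) (hlower hR'.1) hR.2.1 hR'.2.1 hs hs',
    inS.Fk_add_smul_pos hk1 hkn hR hR' hs hs'⟩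
end

section
/- Let n ≥ 1 and 1 ≤ k ≤ n. The function R ↦ F_k(R)^{1/(k+1)} is concave on S: for all R₀, R₁ ∈ S and all s ∈ [0,1], one has F_k((1−s)R₀ + sR₁)^{1/(k+1)} ≥ (1−s) F_k(R₀)^{1/(k+1)} + s F_k(R₁)^{1/(k+1)}. -/
open Matrix

section HyperbolicPolynomials

open Polynomial

/-- If `P(t) = t ^ d * Q(1 / t)` for `t ≠ 0`, then `P` has degree at most `d` and its coefficient
of degree `d` is `Q(0)`. -/
lemma natDegree_le_and_coeff_of_eval_inv {P Q : ℂ[X]} {d : ℕ}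
    (h : ∀ t : ℂ, t ≠ 0 → P.eval t = t ^ d * Q.eval t⁻¹) :
    P.natDegree ≤ d ∧ P.coeff d = Q.eval 0 := by
  have key : X ^ Q.natDegree * P = X ^ d * Q.reverse := by
    have h0 : X * (X ^ Q.natDegree * P) = X * (X ^ d * Q.reverse) := by
      refine Polynomial.funext fun t => ?_
      rcases eq_or_ne t 0 with rfl | ht
      · simp
      · have hinv : t⁻¹ ≠ 0 := inv_ne_zero ht
        let _ : Invertible t⁻¹ := invertibleOfNonzero hinv
        have h1 := eval₂_reverse_mul_pow (RingHom.id ℂ) t⁻¹ Q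
        rw [invOf_eq_inv, inv_inv] at h1
        change Q.reverse.eval t * _ = Q.eval t⁻¹ at h1
        simp only [eval_mul, eval_X, eval_pow]
        rw [h t ht, ← h1, inv_pow]
        field_simp
    exact mul_left_cancel₀ X_ne_zero h0
  constructor
  · rcases eq_or_ne P 0 with rfl | hP
    · simp
    · have h1 := congrArg natDegree key
      rw [natDegree_X_pow_mul _ hP] at h1
      have h2 : (X ^ d * Q.reverse).natDegree ≤ d + Q.natDegree :=
        natDegree_mul_le.trans (by
          rw [natDegree_X_pow]
          exact Nat.add_le_add_left (reverse_natDegree_le Q) d)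
      lia
  · have h1 := congrArg (fun R => R.coeff (d + Q.natDegree)) key
    simp only [coeff_X_pow_mul] at h1
    rw [add_comm d, coeff_X_pow_mul] at h1
    rw [h1, coeff_reverse]
    simp [coeff_zero_eq_eval_zero]

/-- A polynomial whose roots all lie in the left half plane grows at least like `(re t) ^ d` in
the right half plane. -/
lemma le_norm_eval_of_roots_re_nonpos {P : ℂ[X]} (h : ∀ z, P.IsRoot z → z.re ≤ 0) {t : ℂ}
    (ht : 0 ≤ t.re) : ‖P.leadingCoeff‖ * t.re ^ P.natDegree ≤ ‖P.eval t‖ := by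
  have hs := IsAlgClosed.splits P
  rw [hs.eval_eq_prod_roots, norm_mul]
  refine mul_le_mul_of_nonneg_left ?_ (norm_nonneg _)
  rw [hs.natDegree_eq_card_roots]
  have key : ∀ m : Multiset ℂ, (∀ z ∈ m, z.re ≤ 0) →
      t.re ^ m.card ≤ ‖(m.map fun a => t - a).prod‖ := by
    intro m
    induction m using Multiset.induction_on with
    | empty => simp
    | cons a m ih =>
      intro hm
      simp only [Multiset.card_cons, Multiset.map_cons, Multiset.prod_cons, norm_mul, pow_succ']
      have ha : t.re ≤ ‖t - a‖ := by
        have h1 := Complex.re_le_norm (t - a)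
        have h2 := hm a (Multiset.mem_cons_self a m)
        rw [Complex.sub_re] at h1
        linarith
      exact mul_le_mul ha (ih fun z hz => hm z (Multiset.mem_cons_of_mem hz)) (by positivity)
        (norm_nonneg _)
  exact key _ fun z hz => h z (isRoot_of_mem_roots hz)

variable {ι : Type*}

/-- The complex values of the real polynomial `g` are homogeneous of degree `d`. -/
def HomogeneousValues (g : MvPolynomial ι ℝ) (d : ℕ) : Prop :=
  ∀ (c : ℂ) (z : ι → ℂ), c ≠ 0 → MvPolynomial.aeval (c • z) g = c ^ d * MvPolynomial.aeval z g

/-- The real vector `x` as a complex vector. -/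
def toComplexVec (x : ι → ℝ) : ι → ℂ := fun i => (x i : ℂ)

/-- `g` is hyperbolic in the direction `e`: it does not vanish at `x + z e` for real `x` and
nonreal `z`. -/
def HyperbolicIn (g : MvPolynomial ι ℝ) (e : ι → ℝ) : Prop :=
  ∀ (x : ι → ℝ) (z : ℂ), z.im ≠ 0 → MvPolynomial.aeval (toComplexVec x + z • toComplexVec e) g ≠ 0

/-- `g` does not vanish on the ray from `a` in the direction `e`. -/
def NonvanishingRay (g : MvPolynomial ι ℝ) (e a : ι → ℝ) : Prop :=
  ∀ t : ℝ, 0 ≤ t → MvPolynomial.eval (a + t • e) g ≠ 0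

/-- The univariate polynomial `t ↦ g (B + t A)`. -/
noncomputable def linePoly (g : MvPolynomial ι ℝ) (A B : ι → ℂ) : ℂ[X] :=
  MvPolynomial.aeval (fun i => C (B i) + C (A i) * X) g

lemma eval_linePoly (g : MvPolynomial ι ℝ) (A B : ι → ℂ) (t : ℂ) :
    (linePoly g A B).eval t = MvPolynomial.aeval (B + t • A) g := by
  have h := MvPolynomial.hom_eval₂ g (algebraMap ℝ ℂ[X]) (evalRingHom t)
    (fun i => C (B i) + C (A i) * X)
  simp only [coe_evalRingHom] at h
  rw [linePoly, MvPolynomial.aeval_def, h, MvPolynomial.aeval_def]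
  congr 1
  · ext x
    rw [RingHom.comp_apply, IsScalarTower.algebraMap_apply ℝ ℂ ℂ[X], Polynomial.algebraMap_eq,
      coe_evalRingHom, eval_C]
  · funext i
    simp only [eval_add, eval_mul, eval_C, eval_X, Pi.add_apply,
      Pi.smul_apply, smul_eq_mul, mul_comm t]

lemma aeval_toComplexVec (g : MvPolynomial ι ℝ) (x : ι → ℝ) :
    MvPolynomial.aeval (toComplexVec x) g = (MvPolynomial.eval x g : ℂ) := by
  have := MvPolynomial.aeval_algebraMap_apply (B := ℂ) x g
  simpa [toComplexVec, MvPolynomial.aeval_eq_eval] using! this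

lemma toComplexVec_add_smul (x y : ι → ℝ) (t : ℝ) :
    toComplexVec x + (t : ℂ) • toComplexVec y = toComplexVec (x + t • y) := by
  funext i
  simp [toComplexVec]

lemma aeval_conj (g : MvPolynomial ι ℝ) (z : ι → ℂ) :
    MvPolynomial.aeval (fun i => (starRingEnd ℂ) (z i)) g =
      (starRingEnd ℂ) (MvPolynomial.aeval z g) := by
  have := MvPolynomial.comp_aeval_apply (f := z) (Complex.conjAe : ℂ →ₐ[ℝ] ℂ) g
  simpa using! this.symm

lemma continuous_aeval (g : MvPolynomial ι ℝ) :
    Continuous fun z : ι → ℂ => MvPolynomial.aeval z g := by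
  have : (fun z : ι → ℂ => MvPolynomial.aeval z g) =
      fun z => MvPolynomial.eval z (MvPolynomial.map (algebraMap ℝ ℂ) g) := by
    funext z
    rw [MvPolynomial.eval_map, MvPolynomial.aeval_def]
  rw [this]
  exact MvPolynomial.continuous_eval _

namespace HomogeneousValues

variable {g : MvPolynomial ι ℝ} {d : ℕ}

lemma eval_smul (hg : HomogeneousValues g d) {c : ℝ} (hc : c ≠ 0) (x : ι → ℝ) :
    MvPolynomial.eval (c • x) g = c ^ d * MvPolynomial.eval x g := by
  have h := hg c (toComplexVec x) (by exact_mod_cast hc)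
  have h2 : (c : ℂ) • toComplexVec x = toComplexVec (c • x) := by
    funext i; simp [toComplexVec]
  rw [h2, aeval_toComplexVec, aeval_toComplexVec] at h
  exact_mod_cast h

lemma aeval_add_smul (hg : HomogeneousValues g d) {t : ℂ} (ht : t ≠ 0) (A B : ι → ℂ) :
    MvPolynomial.aeval (B + t • A) g = t ^ d * MvPolynomial.aeval (A + t⁻¹ • B) g := by
  rw [← hg t _ ht, smul_add, smul_inv_smul₀ ht, add_comm]

lemma linePoly_degree (hg : HomogeneousValues g d) (A B : ι → ℂ) :
    (linePoly g A B).natDegree ≤ d ∧ (linePoly g A B).coeff d = MvPolynomial.aeval A g := by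
  have h := natDegree_le_and_coeff_of_eval_inv (P := linePoly g A B) (Q := linePoly g B A) (d := d)
    fun t ht => by rw [eval_linePoly, eval_linePoly, hg.aeval_add_smul ht]
  rwa [eval_linePoly, zero_smul, add_zero] at h

lemma natDegree_linePoly (hg : HomogeneousValues g d) {A : ι → ℂ}
    (hA : MvPolynomial.aeval A g ≠ 0) (B : ι → ℂ) : (linePoly g A B).natDegree = d :=
  le_antisymm (hg.linePoly_degree A B).1
    (le_natDegree_of_ne_zero (by rwa [(hg.linePoly_degree A B).2]))

lemma leadingCoeff_linePoly (hg : HomogeneousValues g d) {A : ι → ℂ}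
    (hA : MvPolynomial.aeval A g ≠ 0) (B : ι → ℂ) :
    (linePoly g A B).leadingCoeff = MvPolynomial.aeval A g := by
  rw [leadingCoeff, hg.natDegree_linePoly hA, (hg.linePoly_degree A B).2]

lemma le_norm_aeval (hg : HomogeneousValues g d) {A : ι → ℂ}
    (hA : MvPolynomial.aeval A g ≠ 0) {B : ι → ℂ}
    (h : ∀ t : ℂ, 0 < t.re → MvPolynomial.aeval (B + t • A) g ≠ 0) {t : ℂ} (ht : 0 ≤ t.re) :
    ‖MvPolynomial.aeval A g‖ * t.re ^ d ≤ ‖MvPolynomial.aeval (B + t • A) g‖ := by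
  have := le_norm_eval_of_roots_re_nonpos (P := linePoly g A B) (t := t) (fun z hz => by
    by_contra! hlt
    exact h z hlt (by rw [← eval_linePoly]; exact hz)) ht
  rwa [hg.leadingCoeff_linePoly hA, hg.natDegree_linePoly hA, eval_linePoly] at this

/-- The roots of `t ↦ g (B s + t A)` stay out of the closed right half plane along a path `B` if
they never cross the imaginary axis. -/
lemma nonvanishing_of_path (hg : HomogeneousValues g d) {A : ι → ℂ}
    (hA : MvPolynomial.aeval A g ≠ 0) {B : ℝ → ι → ℂ} (hB : Continuous B)
    (hcross : ∀ s ∈ Set.Icc (0 : ℝ) 1, ∀ t : ℂ, t.re = 0 →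
      MvPolynomial.aeval (B s + t • A) g ≠ 0)
    (hstart : ∀ t : ℂ, 0 ≤ t.re → MvPolynomial.aeval (B 0 + t • A) g ≠ 0) :
    ∀ t : ℂ, 0 ≤ t.re → MvPolynomial.aeval (B 1 + t • A) g ≠ 0 := by
  set S : Set unitInterval :=
    {s | ∀ t : ℂ, 0 ≤ t.re → MvPolynomial.aeval (B s + t • A) g ≠ 0} with hS
  have hcont : Continuous fun q : unitInterval × ℂ => MvPolynomial.aeval (B q.1 + q.2 • A) g :=
    (continuous_aeval g).comp (by fun_prop)
  have hclosed : IsClosed S := by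
    have : S = ⋂ t : {t : ℂ // 0 < t.re}, {s : unitInterval |
        ‖MvPolynomial.aeval A g‖ * t.1.re ^ d ≤ ‖MvPolynomial.aeval (B s + t.1 • A) g‖} := by
      ext s
      simp only [hS, Set.mem_ofPred_eq, Set.mem_iInter]
      constructor
      · exact fun h t => hg.le_norm_aeval hA (fun t ht => h t ht.le) t.2.le
      · intro h t ht
        rcases ht.eq_or_lt with h0 | hlt
        · exact hcross s s.2 t h0.symm
        · intro h0
          have h1 := h ⟨t, hlt⟩
          simp only [h0, norm_zero] at h1
          have : 0 < ‖MvPolynomial.aeval A g‖ * t.re ^ d := by positivity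
          linarith
    rw [this]
    refine isClosed_iInter fun t => isClosed_le continuous_const ?_
    exact (hcont.comp (by fun_prop : Continuous fun s : unitInterval => (s, t.1))).norm
  have hopen : IsOpen S := by
    obtain ⟨ε, hε, hεB⟩ : ∃ ε > 0, ∀ s : unitInterval, ∀ τ : ℂ, ‖τ‖ < ε →
        MvPolynomial.aeval (A + τ • B s) g ≠ 0 := by
      have hc : Continuous fun q : ℂ × unitInterval => MvPolynomial.aeval (A + q.1 • B q.2) g :=
        (continuous_aeval g).comp (by fun_prop)
      have hU : IsOpen {q : ℂ × unitInterval | MvPolynomial.aeval (A + q.1 • B q.2) g ≠ 0} :=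
        isOpen_ne.preimage hc
      obtain ⟨u, v, hu, -, h0, hv, huv⟩ := generalized_tube_lemma (s := {(0 : ℂ)})
        isCompact_singleton (t := (Set.univ : Set unitInterval)) isCompact_univ hU (by
          rintro ⟨τ, s⟩ ⟨h, -⟩
          rw [Set.mem_singleton_iff] at h
          subst h
          simpa using hA)
      obtain ⟨ε, hε, hball⟩ := Metric.isOpen_iff.1 hu 0 (h0 rfl)
      exact ⟨ε, hε, fun s τ hτ => huv (a := (τ, s))
        ⟨hball (by simpa using hτ), hv trivial⟩⟩
    rw [← isClosed_compl_iff]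
    set K : Set (unitInterval × ℂ) := (Set.univ ×ˢ Metric.closedBall 0 ε⁻¹) ∩
      {q | 0 ≤ q.2.re ∧ MvPolynomial.aeval (B q.1 + q.2 • A) g = 0} with hK
    have hKc : IsCompact K := by
      refine (isCompact_univ.prod (isCompact_closedBall _ _)).inter_right ?_
      exact (isClosed_le continuous_const (Complex.continuous_re.comp continuous_snd)).inter
        (isClosed_eq hcont continuous_const)
    have : Sᶜ = Prod.fst '' K := by
      ext s
      simp only [hS, Set.mem_compl_iff, Set.mem_ofPred_eq, not_forall, not_not, Set.mem_image,
        Prod.exists, exists_and_right, exists_eq_right]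
      constructor
      · rintro ⟨t, ht, h0⟩
        refine ⟨t, ⟨trivial, ?_⟩, ht, h0⟩
        rw [mem_closedBall_zero_iff]
        by_contra! hlt
        have htpos : 0 < ‖t‖ := (inv_pos.2 hε).trans hlt
        have ht0 : t ≠ 0 := norm_pos_iff.1 htpos
        rw [hg.aeval_add_smul ht0] at h0
        refine hεB s t⁻¹ ?_ ((mul_eq_zero.1 h0).resolve_left (pow_ne_zero _ ht0))
        rw [norm_inv]
        exact inv_lt_of_inv_lt₀ hε hlt
      · rintro ⟨t, -, ht, h0⟩
        exact ⟨t, ht, h0⟩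
    rw [this]
    exact (hKc.image continuous_fst).isClosed
  have huniv : S = Set.univ :=
    IsClopen.eq_univ ⟨hclosed, hopen⟩ ⟨0, by simpa [hS] using hstart⟩
  have h1 : (1 : unitInterval) ∈ S := huniv ▸ Set.mem_univ _
  simpa [hS] using h1

lemma hyperbolicIn_of_im_pos {e : ι → ℝ}
    (h : ∀ (x : ι → ℝ) (z : ℂ), 0 < z.im →
      MvPolynomial.aeval (toComplexVec x + z • toComplexVec e) g ≠ 0) : HyperbolicIn g e := by
  intro x z hz
  rcases hz.lt_or_gt with hneg | hpos
  · intro h0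
    refine h x ((starRingEnd ℂ) z) (by simpa using hneg) ?_
    have h1 := aeval_conj g (toComplexVec x + z • toComplexVec e)
    rw [h0, map_zero] at h1
    rw [← h1]
    congr 2
    funext i
    simp [toComplexVec]
  · exact h x z hpos

lemma eval_ne_zero_of_hyperbolicIn (hg : HomogeneousValues g d) {e : ι → ℝ}
    (he : HyperbolicIn g e) : MvPolynomial.eval e g ≠ 0 := by
  intro h0
  refine he 0 Complex.I (by simp) ?_
  have h1 : toComplexVec (0 : ι → ℝ) = 0 := by funext i; simp [toComplexVec]
  rw [h1, zero_add, hg _ _ Complex.I_ne_zero, aeval_toComplexVec, h0]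
  simp

lemma aeval_ne_zero_of_nonvanishingRay {e a : ι → ℝ} (he : HyperbolicIn g e)
    (ha : NonvanishingRay g e a) {z : ℂ} (hz : z.im = 0 → 0 ≤ z.re) :
    MvPolynomial.aeval (toComplexVec a + z • toComplexVec e) g ≠ 0 := by
  by_cases him : z.im = 0
  · have hzr : z = (z.re : ℂ) := Complex.ext (by simp) (by simp [him])
    rw [hzr, toComplexVec_add_smul, aeval_toComplexVec]
    exact_mod_cast ha z.re (hz him)
  · exact he a z him

/-- Gårding's theorem: a polynomial hyperbolic in the direction `e` is hyperbolic in every direction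
of the hyperbolicity cone of `e`. -/
theorem hyperbolicIn_of_nonvanishingRay (hg : HomogeneousValues g d) {e a : ι → ℝ}
    (he : HyperbolicIn g e) (ha : NonvanishingRay g e a) : HyperbolicIn g a := by
  have hga : MvPolynomial.aeval (toComplexVec a) g ≠ 0 := by
    have := ha 0 le_rfl
    rw [zero_smul, add_zero] at this
    rw [aeval_toComplexVec]
    exact_mod_cast this
  have hge : MvPolynomial.aeval (toComplexVec e) g ≠ 0 := by
    rw [aeval_toComplexVec]
    exact_mod_cast hg.eval_ne_zero_of_hyperbolicIn he
  have hA : MvPolynomial.aeval (Complex.I • toComplexVec a) g ≠ 0 := by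
    rw [hg _ _ Complex.I_ne_zero]
    exact mul_ne_zero (pow_ne_zero _ Complex.I_ne_zero) hga
  have hpert : ∀ (b : ι → ℝ) (α : ℝ), 0 < α → ∀ t : ℂ, 0 ≤ t.re →
      MvPolynomial.aeval (toComplexVec b + ((α : ℂ) * Complex.I) • toComplexVec e +
        t • Complex.I • toComplexVec a) g ≠ 0 := by
    intro b α hα
    have hαI : (α : ℂ) * Complex.I ≠ 0 :=
      mul_ne_zero (by exact_mod_cast hα.ne') Complex.I_ne_zero
    have := hg.nonvanishing_of_path hA
      (B := fun s => (s : ℂ) • toComplexVec b + ((α : ℂ) * Complex.I) • toComplexVec e)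
      (by fun_prop) ?_ ?_
    · simpa using this
    · intro s _ t ht
      have hreal : t * Complex.I = ((-t.im : ℝ) : ℂ) := by
        apply Complex.ext <;> simp [ht]
      have hvec : (s : ℂ) • toComplexVec b + ((α : ℂ) * Complex.I) • toComplexVec e +
          t • Complex.I • toComplexVec a =
          toComplexVec (s • b + (-t.im) • a) + ((α : ℂ) * Complex.I) • toComplexVec e := by
        rw [smul_smul, hreal]
        funext i
        simp only [toComplexVec, Pi.add_apply, Pi.smul_apply, smul_eq_mul]
        push_cast
        ring
      rw [hvec]
      exact he _ _ (by simp [hα.ne'])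
    · intro t ht
      simp only [Complex.ofReal_zero, zero_smul, zero_add]
      rcases eq_or_ne t 0 with rfl | ht0
      · rw [zero_smul, add_zero, hg _ _ hαI]
        exact mul_ne_zero (pow_ne_zero _ hαI) hge
      · have htI : t * Complex.I ≠ 0 := mul_ne_zero ht0 Complex.I_ne_zero
        rw [smul_smul, hg.aeval_add_smul htI, smul_smul]
        refine mul_ne_zero (pow_ne_zero _ htI) (aeval_ne_zero_of_nonvanishingRay he ha ?_)
        have hq : (t * Complex.I)⁻¹ * ((α : ℂ) * Complex.I) = (α : ℂ) * t⁻¹ := by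
          field_simp [Complex.I_ne_zero]
        intro _
        rw [hq, Complex.re_ofReal_mul, Complex.inv_re]
        exact mul_nonneg hα.le (div_nonneg ht (Complex.normSq_nonneg _))
  refine hyperbolicIn_of_im_pos fun b z hz => ?_
  have hzt : 0 < (-(Complex.I * z)).re := by simpa using hz
  have hbound : ∀ᶠ α : ℝ in nhdsWithin (0 : ℝ) (Set.Ioi 0),
      ‖MvPolynomial.aeval (Complex.I • toComplexVec a) g‖ * (-(Complex.I * z)).re ^ d ≤
      ‖MvPolynomial.aeval (toComplexVec b + ((α : ℂ) * Complex.I) • toComplexVec e +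
        (-(Complex.I * z)) • Complex.I • toComplexVec a) g‖ := by
    filter_upwards [self_mem_nhdsWithin] with α hα
    exact hg.le_norm_aeval hA (fun t ht => hpert b α hα t ht.le) hzt.le
  have hlim : Filter.Tendsto (fun α : ℝ =>
      ‖MvPolynomial.aeval (toComplexVec b + ((α : ℂ) * Complex.I) • toComplexVec e +
        (-(Complex.I * z)) • Complex.I • toComplexVec a) g‖) (nhdsWithin 0 (Set.Ioi 0))
      (nhds ‖MvPolynomial.aeval (toComplexVec b + z • toComplexVec a) g‖) := by
    have hc : Continuous fun α : ℝ =>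
        ‖MvPolynomial.aeval (toComplexVec b + ((α : ℂ) * Complex.I) • toComplexVec e +
          (-(Complex.I * z)) • Complex.I • toComplexVec a) g‖ :=
      ((continuous_aeval g).comp (by fun_prop)).norm
    have h0 := (hc.tendsto 0).mono_left (nhdsWithin_le_nhds (s := Set.Ioi 0))
    have hz' : -(Complex.I * z) * Complex.I = z := by
      linear_combination -z * Complex.I_mul_I
    simpa only [Complex.ofReal_zero, zero_mul, zero_smul, add_zero, smul_smul, hz'] using h0
  have hle := ge_of_tendsto hlim hbound
  have hpos : 0 < ‖MvPolynomial.aeval (Complex.I • toComplexVec a) g‖ *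
      (-(Complex.I * z)).re ^ d := by positivity
  exact norm_pos_iff.1 (hpos.trans_le hle)

/-- Lying in the hyperbolicity cone is preserved along paths on which `g` does not vanish. -/
lemma nonvanishingRay_of_path (hg : HomogeneousValues g d) {e : ι → ℝ} (he : HyperbolicIn g e)
    {γ : ℝ → ι → ℝ} (hγ : Continuous γ)
    (hne : ∀ s ∈ Set.Icc (0 : ℝ) 1, MvPolynomial.eval (γ s) g ≠ 0)
    (h0 : NonvanishingRay g e (γ 0)) : NonvanishingRay g e (γ 1) := by
  have hge : MvPolynomial.aeval (toComplexVec e) g ≠ 0 := by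
    rw [aeval_toComplexVec]
    exact_mod_cast hg.eval_ne_zero_of_hyperbolicIn he
  have hcont : Continuous fun s => toComplexVec (γ s) := by
    refine continuous_pi fun i => ?_
    exact Complex.continuous_ofReal.comp ((continuous_apply i).comp hγ)
  have h1 := hg.nonvanishing_of_path hge hcont ?_ ?_
  · intro t ht h
    refine h1 t (by simpa using ht) ?_
    rw [toComplexVec_add_smul, aeval_toComplexVec, h]
    simp
  · intro s hs t ht
    by_cases him : t.im = 0
    · have : t = 0 := Complex.ext ht him
      rw [this, zero_smul, add_zero, aeval_toComplexVec]
      exact_mod_cast hne s hs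
    · exact he _ _ him
  · exact fun t ht => aeval_ne_zero_of_nonvanishingRay he h0 fun _ => ht

lemma nonvanishingRay_self (hg : HomogeneousValues g d) {e : ι → ℝ} (he : HyperbolicIn g e) :
    NonvanishingRay g e e := by
  intro t ht
  have h1 : e + t • e = (1 + t) • e := by rw [add_smul, one_smul]
  have hpos : 0 < 1 + t := by linarith
  rw [h1, hg.eval_smul hpos.ne']
  exact mul_ne_zero (pow_ne_zero _ hpos.ne') (hg.eval_ne_zero_of_hyperbolicIn he)

lemma nonvanishingRay_symm (hg : HomogeneousValues g d) {e a : ι → ℝ} (he : HyperbolicIn g e)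
    (ha : NonvanishingRay g e a) : NonvanishingRay g a e := by
  intro t ht
  rcases ht.eq_or_lt with rfl | hpos
  · rw [zero_smul, add_zero]
    exact hg.eval_ne_zero_of_hyperbolicIn he
  · have h1 : e + t • a = t • (a + t⁻¹ • e) := by
      rw [smul_add, smul_inv_smul₀ hpos.ne', add_comm]
    rw [h1, hg.eval_smul hpos.ne']
    exact mul_ne_zero (pow_ne_zero _ hpos.ne') (ha _ (by positivity))

/-- On a line in a direction of the hyperbolicity cone, starting from a point of the cone, a
hyperbolic polynomial is a product of linear factors with negative roots. -/
lemma exists_eval_add_smul_eq_prod (hg : HomogeneousValues g d) {a b : ι → ℝ}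
    (ha : HyperbolicIn g a) (hb : NonvanishingRay g a b) :
    ∃ m : Multiset ℝ, m.card = d ∧ (∀ r ∈ m, 0 < r) ∧ ∀ t : ℝ,
      MvPolynomial.eval (b + t • a) g = MvPolynomial.eval a g * (m.map fun r => t + r).prod := by
  have hga : MvPolynomial.aeval (toComplexVec a) g ≠ 0 := by
    rw [aeval_toComplexVec]
    exact_mod_cast hg.eval_ne_zero_of_hyperbolicIn ha
  set P := linePoly g (toComplexVec a) (toComplexVec b) with hP
  have hs := IsAlgClosed.splits P
  have hroot : ∀ z ∈ P.roots, z.im = 0 ∧ z.re < 0 := by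
    intro z hz
    by_contra hcon
    refine aeval_ne_zero_of_nonvanishingRay ha hb (z := z) (fun h => ?_) ?_
    · by_contra! hlt
      exact hcon ⟨h, hlt⟩
    · rw [← eval_linePoly]
      exact isRoot_of_mem_roots hz
  refine ⟨P.roots.map fun z => -z.re, ?_, ?_, fun t => ?_⟩
  · rw [Multiset.card_map, ← hs.natDegree_eq_card_roots, hg.natDegree_linePoly hga]
  · intro r hr
    obtain ⟨z, hz, rfl⟩ := Multiset.mem_map.1 hr
    linarith [(hroot z hz).2]
  · have h1 := hs.eval_eq_prod_roots (t : ℂ)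
    rw [hg.leadingCoeff_linePoly hga, hP, eval_linePoly, ← hP, toComplexVec_add_smul,
      aeval_toComplexVec, aeval_toComplexVec] at h1
    have h2 : (P.roots.map fun z => (t : ℂ) - z).prod =
        (((P.roots.map fun z => -z.re).map fun r => t + r).prod : ℝ) := by
      change _ = Complex.ofRealHom _
      rw [map_multiset_prod, Multiset.map_map, Multiset.map_map]
      congr 1
      refine Multiset.map_congr rfl fun z hz => ?_
      apply Complex.ext <;> simp [(hroot z hz).1, sub_eq_add_neg]
    rw [h2] at h1
    exact_mod_cast h1

end HomogeneousValues

/-- Superadditivity of the geometric mean, for a constant sequence. -/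
lemma add_geom_mean_le {m : Multiset ℝ} {d : ℕ} (hd : d ≠ 0) (hcard : m.card = d)
    (hm : ∀ r ∈ m, 0 < r) {t : ℝ} (ht : 0 ≤ t) :
    t + m.prod ^ (1 / (d : ℝ)) ≤ (m.map fun r => t + r).prod ^ (1 / (d : ℝ)) := by
  obtain ⟨l, rfl⟩ := Quot.exists_rep m
  change l.length = d at hcard
  subst hcard
  set f : Fin l.length → ℝ := l.get with hf
  have hfpos : ∀ i, 0 < f i := fun i => hm _ (by simp [hf])
  have h1 : Multiset.prod (Quot.mk _ l : Multiset ℝ) = ∏ i, f i := by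
    change Multiset.prod (l : Multiset ℝ) = _
    rw [Multiset.prod_coe, hf, ← List.prod_ofFn, List.ofFn_get]
  have h2 : (Multiset.map (fun r => t + r) (Quot.mk _ l : Multiset ℝ)).prod = ∏ i, (t + f i) := by
    change (Multiset.map (fun r => t + r) (l : Multiset ℝ)).prod = _
    rw [Multiset.map_coe, Multiset.prod_coe, ← List.prod_ofFn]
    congr 1
    have h3 : (List.ofFn f).map (fun r => t + r) = List.ofFn fun i => t + f i := List.map_ofFn
    rw [hf, List.ofFn_get] at h3
    exact h3
  rw [h1, h2]
  set w : ℝ := 1 / (l.length : ℝ) with hw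
  have hlpos : (0 : ℝ) < l.length := by exact_mod_cast Nat.pos_of_ne_zero hd
  have hw0 : 0 ≤ w := by positivity
  have hwsum : ∑ _i : Fin l.length, w = 1 := by
    simp [hw, hlpos.ne']
  have hsum : ∀ i, 0 < t + f i := fun i => by linarith [hfpos i]
  have hA := Real.geom_mean_le_arith_mean_weighted Finset.univ (fun _ => w)
    (fun i => t / (t + f i)) (fun _ _ => hw0) hwsum
    (fun i _ => div_nonneg ht (hsum i).le)
  have hB := Real.geom_mean_le_arith_mean_weighted Finset.univ (fun _ => w)
    (fun i => f i / (t + f i)) (fun _ _ => hw0) hwsum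
    (fun i _ => div_nonneg (hfpos i).le (hsum i).le)
  have hAB : ∑ i, w * (t / (t + f i)) + ∑ i, w * (f i / (t + f i)) = 1 := by
    rw [← Finset.sum_add_distrib, ← hwsum]
    refine Finset.sum_congr rfl fun i _ => ?_
    rw [← mul_add, ← add_div, div_self (hsum i).ne', mul_one]
  rw [Real.finsetProd_rpow _ _ (fun i _ => div_nonneg ht (hsum i).le), Finset.prod_div_distrib,
    Real.div_rpow (Finset.prod_nonneg fun _ _ => ht) (Finset.prod_nonneg fun i _ => (hsum i).le)]
    at hA
  rw [Real.finsetProd_rpow _ _ (fun i _ => div_nonneg (hfpos i).le (hsum i).le),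
    Finset.prod_div_distrib, Real.div_rpow (Finset.prod_nonneg fun i _ => (hfpos i).le)
    (Finset.prod_nonneg fun i _ => (hsum i).le)] at hB
  have hconst : (∏ _i : Fin l.length, t) ^ w = t := by
    rw [Finset.prod_const, Finset.card_univ, Fintype.card_fin, hw, one_div,
      Real.pow_rpow_inv_natCast ht hd]
  rw [hconst] at hA
  have hpos : 0 < (∏ i, (t + f i)) ^ w := Real.rpow_pos_of_pos (Finset.prod_pos fun i _ => hsum i) _
  have : (t + (∏ i, f i) ^ w) / (∏ i, (t + f i)) ^ w ≤ 1 := by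
    rw [add_div]
    linarith
  rwa [div_le_one hpos] at this

/-- Concavity of the `d`-th root of a hyperbolic polynomial of degree `d` on its hyperbolicity
cone, in homogeneous form. -/
theorem HomogeneousValues.rpow_add_le {g : MvPolynomial ι ℝ} {d : ℕ} (hg : HomogeneousValues g d)
    (hd : d ≠ 0) {a b : ι → ℝ} (ha : HyperbolicIn g a) (hb : NonvanishingRay g a b)
    (hga : 0 < MvPolynomial.eval a g) {t : ℝ} (ht : 0 ≤ t) :
    MvPolynomial.eval b g ^ (1 / (d : ℝ)) + t * MvPolynomial.eval a g ^ (1 / (d : ℝ)) ≤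
      MvPolynomial.eval (b + t • a) g ^ (1 / (d : ℝ)) := by
  obtain ⟨m, hcard, hm, heval⟩ := hg.exists_eval_add_smul_eq_prod ha hb
  have h0 : MvPolynomial.eval b g = MvPolynomial.eval a g * m.prod := by
    simpa using heval 0
  have hmap : 0 ≤ (m.map fun r => t + r).prod := Multiset.prod_nonneg fun x hx => by
    obtain ⟨r, hr, rfl⟩ := Multiset.mem_map.1 hx
    linarith [hm r hr]
  rw [h0, heval t, Real.mul_rpow hga.le (Multiset.prod_nonneg fun r hr => (hm r hr).le),
    Real.mul_rpow hga.le hmap]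
  have h1 := mul_le_mul_of_nonneg_left (add_geom_mean_le hd hcard hm ht)
    (Real.rpow_nonneg hga.le (1 / (d : ℝ)))
  linarith

end HyperbolicPolynomials

section BorderedDeterminants

open Polynomial

variable {n : ℕ}

/-- Expansion of a bordered determinant in terms of the adjugate of the lower-right block. -/
lemma det_eq_mul_det_sub_adjugate {K : Type*} [CommRing K] [IsDomain K]
    (D : Matrix (Fin (n + 1)) (Fin (n + 1)) K) (hD : (D.submatrix Fin.succ Fin.succ).det ≠ 0) :
    D.det = D 0 0 * (D.submatrix Fin.succ Fin.succ).det -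
      (fun j : Fin n => D 0 j.succ) ⬝ᵥ
        ((D.submatrix Fin.succ Fin.succ).adjugate *ᵥ fun i : Fin n => D i.succ 0) := by
  set r := D.submatrix Fin.succ Fin.succ with hr
  set x : Fin n → K := fun j => D 0 j.succ with hx
  set y : Fin n → K := fun i => D i.succ 0 with hy
  set v : Fin (n + 1) → K := Fin.cons r.det (-(r.adjugate *ᵥ y)) with hv
  have hcr : (D.updateCol 0 (D *ᵥ v)).det = D.det * r.det := by
    rw [← cramer_apply, cramer_eq_adjugate_mulVec, mulVec_mulVec, adjugate_mul, smul_mulVec,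
      one_mulVec]
    simp [hv]
  have hDv0 : (D *ᵥ v) 0 = D 0 0 * r.det - x ⬝ᵥ (r.adjugate *ᵥ y) := by
    simp [mulVec, dotProduct, Fin.sum_univ_succ, hv, hx, sub_eq_add_neg]
  have hDvs : ∀ i : Fin n, (D *ᵥ v) i.succ = 0 := by
    intro i
    have h1 : (r *ᵥ (r.adjugate *ᵥ y)) i = r.det * y i := by
      rw [mulVec_mulVec, mul_adjugate, smul_mulVec, one_mulVec]
      simp
    have h2 : (D *ᵥ v) i.succ = D i.succ 0 * r.det - (r *ᵥ (r.adjugate *ᵥ y)) i := by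
      simp only [mulVec, dotProduct, Fin.sum_univ_succ, hv, hr, Fin.cons_zero, Fin.cons_succ,
        Pi.neg_apply, mul_neg, Finset.sum_neg_distrib, submatrix_apply, sub_eq_add_neg]
    rw [h2, h1, hy]
    ring
  have hexp : (D.updateCol 0 (D *ᵥ v)).det = (D *ᵥ v) 0 * r.det := by
    rw [det_succ_column_zero, Fin.sum_univ_succ, Finset.sum_eq_zero]
    · have hsub : (D.updateCol 0 (D *ᵥ v)).submatrix Fin.succ Fin.succ = r := by
        ext i j
        simp [hr]
      simp [hsub]
    · intro i _
      simp [hDvs]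
  exact mul_right_cancel₀ hD (by rw [← hcr, hexp, hDv0])

variable {K : Type*} [Field K]

/-- The `j`-th elementary symmetric function of `L`, read off from `det (X + L)`. -/
noncomputable def esymmCoeff (L : Matrix (Fin n) (Fin n) K) (j : ℕ) : K :=
  (-L).charpoly.coeff (n - j)

/-- The `j`-th Newton transform of `L`, over an arbitrary field. -/
noncomputable def newtonTransform (L : Matrix (Fin n) (Fin n) K) (j : ℕ) :
    Matrix (Fin n) (Fin n) K :=
  ∑ i ∈ Finset.range (j + 1), ((-1 : K) ^ i * esymmCoeff L (j - i)) • L ^ i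

lemma natDegree_charpoly_fin (L : Matrix (Fin n) (Fin n) K) : L.charpoly.natDegree = n := by
  rw [charpoly_natDegree_eq_dim, Fintype.card_fin]

lemma newtonTransform_succ (L : Matrix (Fin n) (Fin n) K) (j : ℕ) :
    newtonTransform L (j + 1) = esymmCoeff L (j + 1) • 1 - L * newtonTransform L j := by
  rw [newtonTransform, Finset.sum_range_succ', newtonTransform, Finset.mul_sum, add_comm,
    sub_eq_add_neg, ← Finset.sum_neg_distrib]
  congr 1
  · simp
  · refine Finset.sum_congr rfl fun i _ => ?_
    rw [Nat.add_sub_add_right, mul_smul_comm, ← pow_succ', ← neg_smul]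
    congr 1
    ring

lemma newtonTransform_zero (L : Matrix (Fin n) (Fin n) K) : newtonTransform L 0 = 1 := by
  have h : (-L).charpoly.coeff n = 1 := by
    have h1 := (-L).charpoly_monic
    rwa [Monic, leadingCoeff, natDegree_charpoly_fin] at h1
  simp [newtonTransform, esymmCoeff, h]

lemma newtonTransform_top (L : Matrix (Fin n) (Fin n) K) : newtonTransform L n = 0 := by
  have h := aeval_self_charpoly (-L)
  rw [aeval_eq_sum_range, natDegree_charpoly_fin] at h
  rw [newtonTransform, ← h]
  refine Finset.sum_congr rfl fun i hi => ?_
  have hi' : i ≤ n := Nat.lt_succ_iff.1 (Finset.mem_range.1 hi)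
  rw [esymmCoeff, Nat.sub_sub_self hi', ← neg_one_smul K L,
    _root_.smul_pow, smul_smul, mul_comm]

lemma charpoly_neg_eq_sum (L : Matrix (Fin n) (Fin n) K) :
    (-L).charpoly = X ^ n + ∑ j ∈ Finset.range n, C (esymmCoeff L (j + 1)) * X ^ (n - 1 - j) := by
  have h1 := (-L).charpoly_monic.as_sum
  rw [natDegree_charpoly_fin] at h1
  rw [h1, ← Finset.sum_range_reflect]
  congr 1
  refine Finset.sum_congr rfl fun j hj => ?_
  have hj' := Finset.mem_range.1 hj
  rw [esymmCoeff, Nat.sub_sub, add_comm 1 j]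

lemma charmatrix_neg_mul_sum_newtonTransform (L : Matrix (Fin n) (Fin n) K) :
    charmatrix (-L) * ∑ j ∈ Finset.range n, (X ^ (n - 1 - j) : K[X]) • (newtonTransform L j).map C =
      (-L).charpoly • (1 : Matrix (Fin n) (Fin n) K[X]) := by
  have hcm : charmatrix (-L) = (X : K[X]) • (1 : Matrix (Fin n) (Fin n) K[X]) + L.map C := by
    ext i j : 1
    by_cases hij : i = j
    · subst hij; simp
    · simp [hij]
  have hterm : ∀ j ∈ Finset.range n,
      charmatrix (-L) * ((X ^ (n - 1 - j) : K[X]) • (newtonTransform L j).map C) =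
      ((X ^ (n - j) : K[X]) • (newtonTransform L j).map C -
        (X ^ (n - (j + 1)) : K[X]) • (newtonTransform L (j + 1)).map C) +
      (C (esymmCoeff L (j + 1)) * X ^ (n - 1 - j)) • (1 : Matrix (Fin n) (Fin n) K[X]) := by
    intro j hj
    have hj' := Finset.mem_range.1 hj
    have hmap : (newtonTransform L (j + 1)).map C =
        C (esymmCoeff L (j + 1)) • (1 : Matrix (Fin n) (Fin n) K[X]) -
          L.map C * (newtonTransform L j).map C := by
      rw [newtonTransform_succ, ← Matrix.map_mul]
      ext a b : 1
      by_cases hab : a = b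
      · subst hab; simp [-Matrix.map_mul]
      · simp [-Matrix.map_mul, hab]
    have he : n - j = (n - 1 - j) + 1 := by lia
    have he' : n - (j + 1) = n - 1 - j := by lia
    rw [hmap, hcm, he, he', add_mul, smul_mul_smul_comm, one_mul, mul_smul_comm, smul_sub,
      smul_smul, mul_comm (C _), pow_succ']
    abel
  rw [Finset.mul_sum, Finset.sum_congr rfl hterm, Finset.sum_add_distrib,
    Finset.sum_range_sub' (fun j => (X ^ (n - j) : K[X]) • (newtonTransform L j).map C),
    newtonTransform_top, newtonTransform_zero, ← Finset.sum_smul, charpoly_neg_eq_sum, add_smul]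
  simp

lemma adjugate_charmatrix_neg (L : Matrix (Fin n) (Fin n) K) :
    (charmatrix (-L)).adjugate =
      ∑ j ∈ Finset.range n, (X ^ (n - 1 - j) : K[X]) • (newtonTransform L j).map C := by
  have h := congrArg (fun M => (charmatrix (-L)).adjugate * M)
    (charmatrix_neg_mul_sum_newtonTransform L)
  simp only [← mul_assoc, adjugate_mul, smul_mul_assoc, one_mul, mul_smul_comm, mul_one] at h
  exact (smul_right_injective _ (-L).charpoly_monic.ne_zero h).symm

/-- The polynomial `det (M + X J)`, where `J` is the diagonal matrix with entries `0, 1, …, 1`. -/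
noncomputable def borderedPoly {K : Type*} [CommRing K]
    (M : Matrix (Fin (n + 1)) (Fin (n + 1)) K) : K[X] :=
  (M.map C + diagonal (Fin.cons 0 fun _ => X)).det

lemma borderedPoly_eq (M : Matrix (Fin (n + 1)) (Fin (n + 1)) K) :
    borderedPoly M = C (M 0 0) * (-(M.submatrix Fin.succ Fin.succ)).charpoly -
      ∑ j ∈ Finset.range n, C ((fun j : Fin n => M 0 j.succ) ⬝ᵥ
        (newtonTransform (M.submatrix Fin.succ Fin.succ) j *ᵥ fun i : Fin n => M i.succ 0)) *
        X ^ (n - 1 - j) := by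
  have hsub : (M.map C + diagonal (Fin.cons 0 fun _ => X)).submatrix Fin.succ Fin.succ =
      charmatrix (-(M.submatrix Fin.succ Fin.succ)) := by
    ext i j : 1
    by_cases hij : i = j
    · subst hij; simp [add_comm]
    · simp [hij]
  have hdet := det_eq_mul_det_sub_adjugate (M.map C + diagonal (Fin.cons 0 fun _ => X))
    (by rw [hsub]; exact (charpoly_monic _).ne_zero)
  rw [borderedPoly, hdet, hsub, adjugate_charmatrix_neg]
  congr 1
  · simp [Matrix.charpoly]
  · have hx : (fun j : Fin n => (M.map C + diagonal (Fin.cons 0 fun _ => X) :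
        Matrix (Fin (n + 1)) (Fin (n + 1)) K[X]) 0 j.succ) =
        C ∘ fun j : Fin n => M 0 j.succ := by
      funext j
      simp [diagonal_apply_ne _ (Fin.succ_ne_zero j).symm]
    have hy : (fun i : Fin n => (M.map C + diagonal (Fin.cons 0 fun _ => X) :
        Matrix (Fin (n + 1)) (Fin (n + 1)) K[X]) i.succ 0) =
        C ∘ fun i : Fin n => M i.succ 0 := by
      funext j
      simp
    rw [hx, hy, sum_mulVec, dotProduct_sum]
    refine Finset.sum_congr rfl fun j _ => ?_
    rw [smul_mulVec, dotProduct_smul, smul_eq_mul, mul_comm, RingHom.map_dotProduct]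
    congr 2
    funext i
    exact (RingHom.map_mulVec (C : K →+* K[X]) _ _ i).symm

/-- The coefficient of `det (M + X J)` that generalizes `Fk`. -/
noncomputable def borderedCoeff {K : Type*} [CommRing K] (k : ℕ)
    (M : Matrix (Fin (n + 1)) (Fin (n + 1)) K) : K :=
  (borderedPoly M).coeff (n - k)

lemma borderedPoly_coeff_top (M : Matrix (Fin (n + 1)) (Fin (n + 1)) K) :
    (borderedPoly M).coeff n = M 0 0 := by
  have h1 := (-(M.submatrix Fin.succ Fin.succ)).charpoly_monic
  rw [Monic, leadingCoeff, natDegree_charpoly_fin] at h1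
  rw [borderedPoly_eq, coeff_sub, coeff_C_mul, h1, mul_one, finsetSum_coeff, Finset.sum_eq_zero,
    sub_zero]
  intro j hj
  have hj' := Finset.mem_range.1 hj
  rw [coeff_C_mul, coeff_X_pow, if_neg (by lia), mul_zero]

lemma borderedCoeff_eq {k : ℕ} (hk1 : 1 ≤ k) (hkn : k ≤ n)
    (M : Matrix (Fin (n + 1)) (Fin (n + 1)) K) :
    borderedCoeff k M = M 0 0 * esymmCoeff (M.submatrix Fin.succ Fin.succ) k -
      (fun j : Fin n => M 0 j.succ) ⬝ᵥ
        (newtonTransform (M.submatrix Fin.succ Fin.succ) (k - 1) *ᵥ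
          fun i : Fin n => M i.succ 0) := by
  rw [borderedCoeff, borderedPoly_eq, coeff_sub, coeff_C_mul, finsetSum_coeff,
    Finset.sum_eq_single (k - 1)]
  · rw [coeff_C_mul, coeff_X_pow, if_pos (by lia), mul_one, esymmCoeff]
  · intro j hj hne
    have hj' := Finset.mem_range.1 hj
    rw [coeff_C_mul, coeff_X_pow, if_neg (by lia), mul_zero]
  · intro h
    exact absurd (Finset.mem_range.2 (by lia)) h

lemma map_borderedCoeff {R S : Type*} [CommRing R] [CommRing S] (f : R →+* S) (k : ℕ)
    (M : Matrix (Fin (n + 1)) (Fin (n + 1)) R) :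
    f (borderedCoeff k M) = borderedCoeff k (M.map f) := by
  rw [borderedCoeff, borderedCoeff, ← coeff_map, borderedPoly, borderedPoly]
  congr 1
  rw [← coe_mapRingHom, RingHom.map_det]
  congr 1
  ext i j : 1
  by_cases hij : i = j
  · subst hij
    cases i using Fin.cases <;> simp
  · simp [hij]

lemma borderedCoeff_smul {k : ℕ} (hkn : k ≤ n) {c : K} (hc : c ≠ 0)
    (M : Matrix (Fin (n + 1)) (Fin (n + 1)) K) :
    borderedCoeff k (c • M) = c ^ (k + 1) * borderedCoeff k M := by
  have h : (borderedPoly (c • M)).comp (C c * X) = C (c ^ (n + 1)) * borderedPoly M := by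
    rw [borderedPoly, ← coe_compRingHom_apply, RingHom.map_det, borderedPoly, C_pow]
    have h2 := det_smul (M.map C + diagonal (Fin.cons 0 fun _ => X)) (C c)
    rw [Fintype.card_fin] at h2
    rw [← h2]
    congr 1
    ext i j : 1
    by_cases hij : i = j
    · subst hij
      cases i using Fin.cases <;> simp [mul_add]
    · simp [hij]
  have h1 := congrArg (fun P => P.coeff (n - k)) h
  simp only [comp_C_mul_X_coeff, coeff_C_mul] at h1
  have h3 : c ^ (n + 1) = c ^ (k + 1) * c ^ (n - k) := by
    rw [← pow_add]; congr 1; lia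
  rw [h3] at h1
  refine mul_right_cancel₀ (pow_ne_zero (n - k) hc) ?_
  rw [borderedCoeff, borderedCoeff, h1]
  ring

lemma esymmCoeff_eq_sigmaMat (L : Matrix (Fin n) (Fin n) ℝ) {j : ℕ} (hj : j ≤ n) :
    esymmCoeff L j = sigmaMat L j := by
  have h : L.charpoly.comp (C (-1) * X) = C ((-1) ^ n) * (-L).charpoly := by
    rw [Matrix.charpoly, ← coe_compRingHom_apply, RingHom.map_det, Matrix.charpoly, C_pow]
    have h2 := det_smul (charmatrix (-L)) (C (-1 : ℝ))
    rw [Fintype.card_fin] at h2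
    rw [← h2]
    congr 1
    ext i j : 1
    by_cases hij : i = j
    · subst hij
      simp
      ring
    · simp [hij]
  have h1 := congrArg (fun P => P.coeff (n - j)) h
  simp only [comp_C_mul_X_coeff, coeff_C_mul] at h1
  have h3 : (-1 : ℝ) ^ n = (-1) ^ (n - j) * (-1) ^ j := by
    rw [← pow_add]; congr 1; lia
  have h4 : (-1 : ℝ) ^ j * (-1) ^ j = 1 := by rw [← mul_pow]; simp
  have h5 : (-1 : ℝ) ^ (n - j) ≠ 0 := pow_ne_zero _ (by norm_num)
  have h6 : L.charpoly.coeff (n - j) = (-1) ^ j * esymmCoeff L j := by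
    refine mul_right_cancel₀ h5 ?_
    rw [h1, h3, esymmCoeff]
    ring
  rw [sigmaMat, h6, ← mul_assoc, h4, one_mul]

lemma borderedCoeff_eq_Fk {k : ℕ} (hk1 : 1 ≤ k) (hkn : k ≤ n)
    {R : Matrix (Fin (n + 1)) (Fin (n + 1)) ℝ} (hR : R.IsSymm) : borderedCoeff k R = Fk k R := by
  have hnewton : newtonTransform (lowerBlock R) (k - 1) = newtonT (lowerBlock R) (k - 1) := by
    rw [newtonTransform, newtonT]
    refine Finset.sum_congr rfl fun i _ => ?_
    rw [esymmCoeff_eq_sigmaMat _ (by lia)]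
  have hy : (fun i : Fin n => R i.succ 0) = xVec R := by
    funext i
    exact hR.apply 0 i.succ
  have hsub : R.submatrix Fin.succ Fin.succ = lowerBlock R := rfl
  rw [borderedCoeff_eq hk1 hkn, hy, hsub, hnewton, esymmCoeff_eq_sigmaMat _ hkn, Fk]
  rfl

end BorderedDeterminants

section Hyperbolicity

open Polynomial

/-- A Hermitian matrix plus a diagonal matrix with entries in the upper half plane is regular. -/
lemma det_isHermitian_add_diagonal_ne_zero {m : Type*} [Fintype m] [DecidableEq m]
    {H : Matrix m m ℂ} (hH : H.IsHermitian) {w : m → ℂ} (hw : ∀ i, 0 < (w i).im) :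
    (H + diagonal w).det ≠ 0 := by
  intro h0
  obtain ⟨v, hv, hzero⟩ := exists_mulVec_eq_zero_iff.2 h0
  have h1 : star v ⬝ᵥ ((H + diagonal w) *ᵥ v) = 0 := by rw [hzero, dotProduct_zero]
  rw [add_mulVec, dotProduct_add] at h1
  have h2 := congrArg Complex.im h1
  have h3 : (star v ⬝ᵥ (H *ᵥ v)).im = 0 := hH.im_star_dotProduct_mulVec_self v
  have h4 : (star v ⬝ᵥ (diagonal w *ᵥ v)).im = ∑ i, (w i).im * Complex.normSq (v i) := by
    rw [dotProduct, Complex.im_sum]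
    refine Finset.sum_congr rfl fun i _ => ?_
    rw [mulVec_diagonal, Pi.star_apply, Complex.normSq_apply]
    simp [Complex.mul_im]
    ring
  rw [Complex.add_im, h3, h4, zero_add, Complex.zero_im] at h2
  have h5 := (Finset.sum_eq_zero_iff_of_nonneg fun i _ =>
    mul_nonneg (hw i).le (Complex.normSq_nonneg (v i))).1 h2
  refine hv (funext fun i => ?_)
  have h6 := (mul_eq_zero.1 (h5 i (Finset.mem_univ i))).resolve_left (hw i).ne'
  exact Complex.normSq_eq_zero.1 h6

/-- By the Gauss–Lucas theorem, having all roots in the open lower half plane is inherited by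
iterated derivatives. -/
lemma iterate_derivative_eval_ne_zero {P : ℂ[X]} (hP : ∀ u : ℂ, 0 ≤ u.im → P.eval u ≠ 0) {m : ℕ}
    (hm : m ≤ P.natDegree) : ∀ u : ℂ, 0 ≤ u.im → (derivative^[m] P).eval u ≠ 0 := by
  induction m with
  | zero => simpa using hP
  | succ m ih =>
    intro u hu h0
    set Q := derivative^[m] P with hQ
    have hQroots := ih (by lia)
    rw [Function.iterate_succ_apply', ← hQ] at h0
    have hdeg : Q.natDegree = P.natDegree - m := by
      have hiter : ∀ i, (derivative^[i] P).natDegree = P.natDegree - i := by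
        intro i
        induction i with
        | zero => simp
        | succ i hi => rw [Function.iterate_succ_apply', natDegree_derivative, hi]; lia
      exact hiter m
    have hpos : 0 < Q.natDegree := by lia
    have hQ' : derivative Q ≠ 0 := derivative_ne_zero.2 hpos.ne'
    have hmem : u ∈ (derivative Q).rootSet ℂ := by
      rw [mem_rootSet]
      exact ⟨hQ', by simpa using h0⟩
    have hsub : Q.rootSet ℂ ⊆ {z : ℂ | z.im < 0} := by
      intro z hz
      rw [mem_rootSet] at hz
      by_contra hcon
      refine hQroots z (not_lt.1 hcon) ?_
      simpa using hz.2
    have hhull := convexHull_min hsub (convex_halfSpace_im_lt 0)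
      (rootSet_derivative_subset_convexHull_rootSet (natDegree_pos_iff_degree_pos.1 hpos) hmem)
    exact absurd hu (not_le.2 hhull)

variable {n k : ℕ}

lemma borderedCoeff_isHermitian_add_smul_ne_zero
    {H : Matrix (Fin (n + 1)) (Fin (n + 1)) ℂ} (hH : H.IsHermitian) {z : ℂ} (hz : 0 < z.im) :
    borderedCoeff k (H + z • 1) ≠ 0 := by
  set P := borderedPoly (H + z • 1) with hP
  have hroots : ∀ u : ℂ, 0 ≤ u.im → P.eval u ≠ 0 := by
    intro u hu
    have heval : P.eval u = (H + diagonal (Fin.cons z fun _ => z + u)).det := by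
      rw [hP, borderedPoly, ← coe_evalRingHom, RingHom.map_det]
      congr 1
      ext i j : 1
      by_cases hij : i = j
      · subst hij
        cases i using Fin.cases <;> simp [add_assoc]
      · simp [hij]
    rw [heval]
    refine det_isHermitian_add_diagonal_ne_zero hH fun i => ?_
    cases i using Fin.cases with
    | zero => simpa using hz
    | succ i => simpa using add_pos_of_pos_of_nonneg hz hu
  have htop : P.coeff n ≠ 0 := by
    rw [hP, borderedPoly_coeff_top]
    intro h0
    have h1 := congrArg Complex.im h0
    have h2 : (H 0 0).im = 0 := Complex.conj_eq_iff_im.1 (hH.apply 0 0)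
    simp [h2] at h1
    exact hz.ne' h1
  have hdeg : n - k ≤ P.natDegree := (Nat.sub_le n k).trans (le_natDegree_of_ne_zero htop)
  have h0 := iterate_derivative_eval_ne_zero hroots hdeg 0 (by simp)
  rw [← coeff_zero_eq_eval_zero, coeff_iterate_derivative] at h0
  intro hcon
  rw [borderedCoeff, ← hP] at hcon
  exact h0 (by simp [hcon])

/-- `Fk`, symmetrized in the matrix entries, as a polynomial in these entries. -/
noncomputable def FkPoly (n k : ℕ) : MvPolynomial (Fin (n + 1) × Fin (n + 1)) ℝ :=
  borderedCoeff k (of fun i j =>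
    MvPolynomial.C (1 / 2) * (MvPolynomial.X (i, j) + MvPolynomial.X (j, i)))

/-- The entries of a matrix as a vector. -/
def matrixEntries (R : Matrix (Fin (n + 1)) (Fin (n + 1)) ℝ) : Fin (n + 1) × Fin (n + 1) → ℝ :=
  fun q => R q.1 q.2

lemma aeval_FkPoly {S : Type*} [CommRing S] [Algebra ℝ S] (z : Fin (n + 1) × Fin (n + 1) → S) :
    MvPolynomial.aeval z (FkPoly n k) =
      borderedCoeff k (of fun i j => algebraMap ℝ S (1 / 2) * (z (i, j) + z (j, i))) := by
  rw [FkPoly, ← AlgHom.coe_toRingHom, map_borderedCoeff]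
  congr 1
  ext i j : 1
  simp only [map_apply, of_apply, AlgHom.coe_toRingHom, map_mul, map_add, MvPolynomial.aeval_X,
    MvPolynomial.aeval_C]

lemma eval_FkPoly (hk1 : 1 ≤ k) (hkn : k ≤ n) {R : Matrix (Fin (n + 1)) (Fin (n + 1)) ℝ}
    (hR : R.IsSymm) : MvPolynomial.eval (matrixEntries R) (FkPoly n k) = Fk k R := by
  rw [← MvPolynomial.aeval_eq_eval, aeval_FkPoly, ← borderedCoeff_eq_Fk hk1 hkn hR]
  congr 1
  ext i j
  simp only [of_apply, matrixEntries, hR.apply i j, Algebra.algebraMap_self, RingHom.id_apply]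
  ring

lemma homogeneousValues_FkPoly (hkn : k ≤ n) : HomogeneousValues (FkPoly n k) (k + 1) := by
  intro c z hc
  rw [aeval_FkPoly, aeval_FkPoly, ← borderedCoeff_smul hkn hc]
  congr 1
  ext i j
  simp only [of_apply, Pi.smul_apply, Matrix.smul_apply, smul_eq_mul]
  ring

lemma hyperbolicIn_FkPoly_one : HyperbolicIn (FkPoly n k) (matrixEntries 1) := by
  refine HomogeneousValues.hyperbolicIn_of_im_pos fun x z hz => ?_
  rw [aeval_FkPoly]
  set H : Matrix (Fin (n + 1)) (Fin (n + 1)) ℂ :=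
    of fun i j => (1 / 2) * ((x (i, j) : ℂ) + (x (j, i) : ℂ)) with hH
  have hherm : H.IsHermitian := by
    ext i j
    simp [hH, add_comm]
  convert borderedCoeff_isHermitian_add_smul_ne_zero hherm hz using 2
  ext i j : 1
  by_cases hij : i = j
  · subst hij
    simp [hH, toComplexVec, matrixEntries]
    ring
  · simp [hH, toComplexVec, matrixEntries, hij, Ne.symm hij]

lemma esymmCoeff_zero_right {K : Type*} [Field K] (L : Matrix (Fin n) (Fin n) K) :
    esymmCoeff L 0 = 1 := by
  have h1 := (-L).charpoly_monic
  rwa [Monic, leadingCoeff, natDegree_charpoly_fin] at h1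

lemma esymmCoeff_smul {K : Type*} [Field K] {c : K} (hc : c ≠ 0) (L : Matrix (Fin n) (Fin n) K)
    {j : ℕ} (hj : j ≤ n) : esymmCoeff (c • L) j = c ^ j * esymmCoeff L j := by
  have h : (-(c • L)).charpoly.comp (C c * X) = C (c ^ n) * (-L).charpoly := by
    rw [Matrix.charpoly, ← coe_compRingHom_apply, RingHom.map_det, Matrix.charpoly, C_pow]
    have h2 := det_smul (charmatrix (-L)) (C c)
    rw [Fintype.card_fin] at h2
    rw [← h2]
    congr 1
    ext i j : 1
    by_cases hij : i = j
    · subst hij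
      simp [mul_add]
    · simp [hij]
  have h1 := congrArg (fun P => P.coeff (n - j)) h
  simp only [comp_C_mul_X_coeff, coeff_C_mul] at h1
  have h3 : c ^ n = c ^ j * c ^ (n - j) := by
    rw [← pow_add]; congr 1; lia
  refine mul_right_cancel₀ (pow_ne_zero (n - j) hc) ?_
  rw [esymmCoeff, h1, h3, esymmCoeff]
  ring

/-- `Γ_k^+` is star-shaped with respect to the identity, as far as `σ_k` is concerned. -/
lemma sigmaMat_convex_comb_one_pos (hk1 : 1 ≤ k) (hkn : k ≤ n) {L : Matrix (Fin n) (Fin n) ℝ}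
    (hL : GammaPlus k L) {s : ℝ} (hs : s ∈ Set.Icc (0 : ℝ) 1) :
    0 < sigmaMat ((1 - s) • (1 : Matrix (Fin n) (Fin n) ℝ) + s • L) k := by
  rcases hs.2.eq_or_lt with rfl | hs1
  · simpa using hL k hk1 le_rfl
  set P := (-(s • L)).charpoly with hP
  have hnonneg : ∀ i, n - k ≤ i → 0 ≤ P.coeff i := by
    intro i hi
    rcases lt_or_ge n i with hni | hin
    · rw [coeff_eq_zero_of_natDegree_lt (by rwa [hP, natDegree_charpoly_fin])]
    rcases hs.1.eq_or_lt with rfl | hspos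
    · rw [hP]
      simp only [zero_smul, neg_zero, charpoly_zero, Fintype.card_fin, coeff_X_pow]
      split_ifs <;> norm_num
    · have h1 : P.coeff i = esymmCoeff (s • L) (n - i) := by
        rw [esymmCoeff, Nat.sub_sub_self hin]
      rw [h1, esymmCoeff_smul hspos.ne' L (Nat.sub_le n i)]
      refine mul_nonneg (pow_nonneg hs.1 _) ?_
      rcases Nat.eq_zero_or_pos (n - i) with h0 | hpos
      · rw [h0, esymmCoeff_zero_right]
        exact zero_le_one
      · rw [esymmCoeff_eq_sigmaMat _ (Nat.sub_le n i)]
        exact (hL _ hpos (by lia)).le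
  have htop : P.coeff n = 1 := esymmCoeff_zero_right (s • L)
  have hchar : (-((1 - s) • (1 : Matrix (Fin n) (Fin n) ℝ) + s • L)).charpoly =
      P.comp (X + C (1 - s)) := by
    rw [hP, ← charpoly_sub_scalar]
    congr 1
    rw [scalar_apply, ← smul_one_eq_diagonal]
    abel
  rw [← esymmCoeff_eq_sigmaMat _ hkn, esymmCoeff, hchar, ← taylor_apply, taylor_coeff,
    eval_eq_sum_range' (n := n + 1)
      (lt_of_le_of_lt (natDegree_hasseDeriv_le _ _) (by rw [hP, natDegree_charpoly_fin]; lia))]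
  have hc : 0 < 1 - s := by linarith
  refine Finset.sum_pos' (fun i _ => ?_) ⟨k, Finset.mem_range.2 (by lia), ?_⟩
  · rw [hasseDeriv_coeff]
    exact mul_nonneg (mul_nonneg (Nat.cast_nonneg _) (hnonneg _ (Nat.le_add_left _ _)))
      (pow_nonneg hc.le _)
  · rw [hasseDeriv_coeff, Nat.add_sub_cancel' hkn, htop, mul_one]
    have : 0 < n.choose (n - k) := Nat.choose_pos (Nat.sub_le n k)
    positivity

/-- The symmetric bordered matrix with corner `c`, border `x` and lower-right block `L`. -/
def borderedMatrix (c : ℝ) (x : Fin n → ℝ) (L : Matrix (Fin n) (Fin n) ℝ) :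
    Matrix (Fin (n + 1)) (Fin (n + 1)) ℝ :=
  of (Fin.cons (Fin.cons c x) fun i => Fin.cons (x i) (L i))

lemma isSymm_borderedMatrix (c : ℝ) (x : Fin n → ℝ) {L : Matrix (Fin n) (Fin n) ℝ}
    (hL : L.IsSymm) : (borderedMatrix c x L).IsSymm := by
  ext i j
  cases i using Fin.cases <;> cases j using Fin.cases <;>
    simp [borderedMatrix, hL.apply]

lemma Fk_borderedMatrix (c : ℝ) (x : Fin n → ℝ) (L : Matrix (Fin n) (Fin n) ℝ) :
    Fk k (borderedMatrix c x L) = c * sigmaMat L k - x ⬝ᵥ (newtonT L (k - 1) *ᵥ x) := by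
  have h1 : lowerBlock (borderedMatrix c x L) = L := by
    ext i j
    simp [lowerBlock, borderedMatrix]
  have h2 : xVec (borderedMatrix c x L) = x := by
    funext i
    simp [xVec, borderedMatrix]
  rw [Fk, h1, h2]
  simp [borderedMatrix]

lemma borderedMatrix_lowerBlock {R : Matrix (Fin (n + 1)) (Fin (n + 1)) ℝ} (hR : R.IsSymm) :
    borderedMatrix (R 0 0) (xVec R) (lowerBlock R) = R := by
  ext i j
  cases i using Fin.cases <;> cases j using Fin.cases <;>
    simp [borderedMatrix, lowerBlock, xVec, hR.apply]

lemma borderedMatrix_one : borderedMatrix 1 (0 : Fin n → ℝ) 1 = 1 := by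
  ext i j
  cases i using Fin.cases <;> cases j using Fin.cases <;>
    simp [borderedMatrix, one_apply, (Fin.succ_ne_zero _).symm]

lemma continuous_matrixEntries_borderedMatrix {c : ℝ → ℝ} {x : ℝ → Fin n → ℝ}
    {L : ℝ → Matrix (Fin n) (Fin n) ℝ} (hc : Continuous c) (hx : Continuous x)
    (hL : Continuous L) :
    Continuous fun s => matrixEntries (borderedMatrix (c s) (x s) (L s)) := by
  refine continuous_pi fun ⟨i, j⟩ => ?_
  cases i using Fin.cases <;> cases j using Fin.cases <;>
    simp only [matrixEntries, borderedMatrix, of_apply, Fin.cons_zero, Fin.cons_succ]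
  · exact hc
  · exact (continuous_apply _).comp hx
  · exact (continuous_apply _).comp hx
  · exact hL.matrix_elem _ _

/-- `S` lies in the connected component of the identity matrix in the set where `Fk` does not
vanish, and hence in the hyperbolicity cone. -/
lemma nonvanishingRay_of_inS (hk1 : 1 ≤ k) (hkn : k ≤ n)
    {e : Fin (n + 1) × Fin (n + 1) → ℝ} (he : HyperbolicIn (FkPoly n k) e)
    (h1 : NonvanishingRay (FkPoly n k) e (matrixEntries 1))
    {R : Matrix (Fin (n + 1)) (Fin (n + 1)) ℝ} (hR : inS k R) :
    NonvanishingRay (FkPoly n k) e (matrixEntries R) := by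
  obtain ⟨hsymm, hgamma, hpos⟩ := hR
  have hhom := homogeneousValues_FkPoly hkn
  have hLsymm : (lowerBlock R).IsSymm := by
    ext i j
    exact hsymm.apply _ _
  have hblock : NonvanishingRay (FkPoly n k) e
      (matrixEntries (borderedMatrix 1 0 (lowerBlock R))) := by
    have := hhom.nonvanishingRay_of_path he
      (γ := fun s => matrixEntries (borderedMatrix 1 0
        ((1 - s) • (1 : Matrix (Fin n) (Fin n) ℝ) + s • lowerBlock R)))
      (continuous_matrixEntries_borderedMatrix continuous_const continuous_const (by fun_prop))
      (fun s hs => ?_) ?_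
    · simpa using this
    · rw [eval_FkPoly hk1 hkn (isSymm_borderedMatrix _ _
        ((isSymm_one.smul _).add (hLsymm.smul _))), Fk_borderedMatrix]
      simpa using (sigmaMat_convex_comb_one_pos hk1 hkn hgamma hs).ne'
    · simpa [borderedMatrix_one] using h1
  have := hhom.nonvanishingRay_of_path he
    (γ := fun s => matrixEntries (borderedMatrix ((1 - s) + s ^ 2 * R 0 0) (s • xVec R)
      (lowerBlock R)))
    (continuous_matrixEntries_borderedMatrix (by fun_prop) (by fun_prop) continuous_const)
    (fun s hs => ?_) ?_
  · simpa [borderedMatrix_lowerBlock hsymm] using this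
  · rw [eval_FkPoly hk1 hkn (isSymm_borderedMatrix _ _ hLsymm), Fk_borderedMatrix, mulVec_smul,
      dotProduct_smul, smul_dotProduct, smul_eq_mul, smul_eq_mul]
    have hF : ((1 - s) + s ^ 2 * R 0 0) * sigmaMat (lowerBlock R) k -
        s * (s * (xVec R ⬝ᵥ (newtonT (lowerBlock R) (k - 1) *ᵥ xVec R))) =
        (1 - s) * sigmaMat (lowerBlock R) k + s ^ 2 * Fk k R := by
      rw [Fk]
      ring
    rw [hF]
    have hsig := hgamma k hk1 le_rfl
    refine ne_of_gt ?_
    rcases hs.2.eq_or_lt with rfl | hlt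
    · simpa using hpos
    · have : 0 < 1 - s := by linarith
      positivity
  · simpa using hblock

end Hyperbolicity

/-- `R ↦ F_k(R)^{1/(k+1)}` is concave on `S`. -/
theorem Fk_rpow_concave (n k : ℕ) (hn : 1 ≤ n) (hk1 : 1 ≤ k) (hkn : k ≤ n)
    (R₀ R₁ : Matrix (Fin (n + 1)) (Fin (n + 1)) ℝ)
    (hR₀ : inS k R₀) (hR₁ : inS k R₁)
    (s : ℝ) (hs0 : 0 ≤ s) (hs1 : s ≤ 1) :
    (1 - s) * (Fk k R₀) ^ (1 / (k + 1 : ℝ)) + s * (Fk k R₁) ^ (1 / (k + 1 : ℝ)) ≤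
      (Fk k ((1 - s) • R₀ + s • R₁)) ^ (1 / (k + 1 : ℝ)) := by
  rcases hs1.eq_or_lt with rfl | hlt
  · simp
  have hc : 0 < 1 - s := by linarith
  have hhom := homogeneousValues_FkPoly hkn
  have hone := hyperbolicIn_FkPoly_one (n := n) (k := k)
  have hray₁ := nonvanishingRay_of_inS hk1 hkn hone (hhom.nonvanishingRay_self hone) hR₁
  have hhyp₁ := hhom.hyperbolicIn_of_nonvanishingRay hone hray₁
  have hray₀ := nonvanishingRay_of_inS hk1 hkn hhyp₁ (hhom.nonvanishingRay_symm hone hray₁) hR₀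
  have hray : NonvanishingRay (FkPoly n k) (matrixEntries R₁) ((1 - s) • matrixEntries R₀) := by
    intro t ht
    have h1 : (1 - s) • matrixEntries R₀ + t • matrixEntries R₁ =
        (1 - s) • (matrixEntries R₀ + ((1 - s)⁻¹ * t) • matrixEntries R₁) := by
      rw [smul_add, smul_smul, mul_inv_cancel_left₀ hc.ne']
    rw [h1, hhom.eval_smul hc.ne']
    exact mul_ne_zero (pow_ne_zero _ hc.ne') (hray₀ _ (by positivity))
  have heval₁ := eval_FkPoly hk1 hkn hR₁.1
  have heval₀ := eval_FkPoly hk1 hkn hR₀.1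
  have hsum := eval_FkPoly hk1 hkn ((hR₀.1.smul (1 - s)).add (hR₁.1.smul s))
  have hvec : matrixEntries ((1 - s) • R₀ + s • R₁) =
      (1 - s) • matrixEntries R₀ + s • matrixEntries R₁ := rfl
  have key := hhom.rpow_add_le k.succ_ne_zero hhyp₁ hray (by rw [heval₁]; exact hR₁.2.2) hs0
  rw [← hvec, hsum, hhom.eval_smul hc.ne', heval₀, heval₁,
    Real.mul_rpow (by positivity) hR₀.2.2.le, one_div,
    Real.pow_rpow_inv_natCast hc.le k.succ_ne_zero] at key
  rw [one_div]
  exact_mod_cast key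
end

section
/- Let n ≥ 1, 1 ≤ k ≤ n, let r₀₀, r₁, …, r_n be real numbers and x ∈ ℝ^n, and let p_{k+1}(t) = (r₀₀ + t) σ_k(r+tI) − Σ_{i=1}^n q_{i,k}(t) x_i². Let α₁ ≤ α₂ ≤ … ≤ α_{k+1} be the k+1 real roots of p_{k+1} and β₁ ≤ … ≤ β_k the k real roots of σ_k(r+tI), each listed with multiplicity in nondecreasing order. Then σ_k(r+tI) interlaces p_{k+1}: α₁ ≤ β₁ ≤ α₂ ≤ β₂ ≤ … ≤ β_k ≤ α_{k+1}. -/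
open Polynomial

/-- `σ_m(r+tI) = Σ_{1≤i₁<…<i_m≤n} (t+r_{i₁})⋯(t+r_{i_m})` as a real polynomial in `t`. -/
noncomputable def sigmaTP (n : ℕ) (r : Fin n → ℝ) (m : ℕ) : Polynomial ℝ :=
  ∑ s ∈ Finset.powersetCard m (Finset.univ : Finset (Fin n)),
    ∏ i ∈ s, (X + C (r i))

/-- `q_{i,k}(t) = Σ_{j=0}^{k−1} (−1)^j σ_{k−1−j}(r+tI) (t+r_i)^j`. -/
noncomputable def qPoly (n : ℕ) (r : Fin n → ℝ) (i : Fin n) (k : ℕ) : Polynomial ℝ :=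
  ∑ j ∈ Finset.range k, ((-1 : ℝ) ^ j) • (sigmaTP n r (k - 1 - j) * (X + C (r i)) ^ j)

/-- `p_{k+1}(t) = (r₀₀ + t) σ_k(r+tI) − Σ_{i=1}^n q_{i,k}(t) x_i²`. -/
noncomputable def pPoly (n k : ℕ) (r₀₀ : ℝ) (r : Fin n → ℝ) (x : Fin n → ℝ) :
    Polynomial ℝ :=
  (X + C r₀₀) * sigmaTP n r k - ∑ i : Fin n, ((x i) ^ 2) • qPoly n r i k

/-- `π_n(t) = (t+r₁)⋯(t+r_n)`. -/
noncomputable def piN (n : ℕ) (r : Fin n → ℝ) : Polynomial ℝ :=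
  ∏ i : Fin n, (X + C (r i))

/-- `π_{i,n}(t) = ∏_{j≠i} (t+r_j)`. -/
noncomputable def piIN (n : ℕ) (r : Fin n → ℝ) (i : Fin n) : Polynomial ℝ :=
  ∏ j ∈ Finset.univ.erase i, (X + C (r j))

open Filter Topology

section ElementarySymmetric

variable {ι R : Type*} [CommRing R]

/-- The elementary symmetric polynomial of degree `m` in the values `y i`, `i ∈ s`. -/
def esymmOn (y : ι → R) (s : Finset ι) (m : ℕ) : R :=
  ∑ u ∈ s.powersetCard m, ∏ i ∈ u, y i

theorem esymmOn_zero (y : ι → R) (s : Finset ι) : esymmOn y s 0 = 1 := by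
  simp [esymmOn]

theorem esymmOn_of_card_lt (y : ι → R) {s : Finset ι} {m : ℕ} (h : s.card < m) :
    esymmOn y s m = 0 := by
  simp [esymmOn, Finset.powersetCard_eq_empty.2 h]

theorem esymmOn_insert [DecidableEq ι] (y : ι → R) {s : Finset ι} {a : ι} (ha : a ∉ s) (m : ℕ) :
    esymmOn y (insert a s) (m + 1) = esymmOn y s (m + 1) + y a * esymmOn y s m := by
  have hmem : ∀ u ∈ s.powersetCard m, a ∉ u := fun u hu hau =>
    ha ((Finset.mem_powersetCard.1 hu).1 hau)
  unfold esymmOn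
  rw [Finset.powersetCard_succ_insert ha, Finset.sum_union, Finset.sum_image, Finset.mul_sum]
  · congr 1
    exact Finset.sum_congr rfl fun u hu => Finset.prod_insert (hmem u hu)
  · intro u hu v hv huv
    rw [← Finset.erase_insert (hmem u hu), huv, Finset.erase_insert (hmem v hv)]
  · rw [Finset.disjoint_left]
    intro u hu hu'
    obtain ⟨v, -, rfl⟩ := Finset.mem_image.1 hu'
    exact ha ((Finset.mem_powersetCard.1 hu).1 (Finset.mem_insert_self a v))

theorem esymmOn_erase [DecidableEq ι] (y : ι → R) {s : Finset ι} {a : ι} (ha : a ∈ s) (m : ℕ) :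
    esymmOn y s (m + 1) = esymmOn y (s.erase a) (m + 1) + y a * esymmOn y (s.erase a) m := by
  rw [← esymmOn_insert y (Finset.notMem_erase a s), Finset.insert_erase ha]

/-- Euler's identity for the elementary symmetric polynomials. -/
theorem sum_mul_esymmOn_erase [DecidableEq ι] (y : ι → R) (s : Finset ι) (m : ℕ) :
    ∑ a ∈ s, y a * esymmOn y (s.erase a) m = (m + 1) * esymmOn y s (m + 1) := by
  induction s using Finset.induction_on generalizing m with
  | empty => simp [esymmOn_of_card_lt y (s := (∅ : Finset ι)) (Nat.succ_pos m)]
  | insert b s hb ih =>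
    have herase : ∀ a ∈ s, (insert b s).erase a = insert b (s.erase a) := fun a ha =>
      Finset.erase_insert_of_ne (fun h => hb (h ▸ ha))
    have hb' : ∀ a, b ∉ s.erase a := fun a h => hb (Finset.mem_of_mem_erase h)
    rw [Finset.sum_insert hb, Finset.erase_insert hb, esymmOn_insert y hb]
    rw [Finset.sum_congr rfl fun a ha => by rw [herase a ha]]
    cases m with
    | zero =>
      have := ih 0
      simp only [esymmOn_zero] at this ⊢
      rw [this]
      push_cast
      ring
    | succ m =>
      have hsum : ∑ a ∈ s, y a * esymmOn y (insert b (s.erase a)) (m + 1) =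
          ∑ a ∈ s, y a * esymmOn y (s.erase a) (m + 1) +
            y b * ∑ a ∈ s, y a * esymmOn y (s.erase a) m := by
        rw [Finset.mul_sum, ← Finset.sum_add_distrib]
        refine Finset.sum_congr rfl fun a _ => ?_
        rw [esymmOn_insert y (hb' a)]
        ring
      rw [hsum, ih, ih]
      push_cast
      ring

theorem sum_range_neg_pow_mul_esymmOn [DecidableEq ι] (y : ι → R) {s : Finset ι} {a : ι}
    (ha : a ∈ s) (m : ℕ) :
    ∑ j ∈ Finset.range (m + 1), (-1) ^ j * (esymmOn y s (m - j) * y a ^ j) =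
      esymmOn y (s.erase a) m := by
  induction m with
  | zero => simp [esymmOn_zero]
  | succ m ih =>
    rw [Finset.sum_range_succ']
    have hshift : ∑ j ∈ Finset.range (m + 1),
        (-1) ^ (j + 1) * (esymmOn y s (m + 1 - (j + 1)) * y a ^ (j + 1)) =
          -y a * esymmOn y (s.erase a) m := by
      rw [← ih, Finset.mul_sum]
      refine Finset.sum_congr rfl fun j _ => ?_
      rw [Nat.add_sub_add_right]
      ring
    rw [hshift, Nat.sub_zero, esymmOn_erase y ha m]
    ring

theorem map_esymmOn {S : Type*} [CommRing S] (f : R →+* S) (y : ι → R) (s : Finset ι) (m : ℕ) :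
    f (esymmOn y s m) = esymmOn (fun i => f (y i)) s m := by
  simp [esymmOn]

end ElementarySymmetric

section UpperHalfPlane

theorem Complex.im_inv_neg {z : ℂ} (hz : 0 < z.im) : z⁻¹.im < 0 := by
  have hz0 : z ≠ 0 := fun h => by simp [h] at hz
  rw [Complex.inv_im]
  exact div_neg_of_neg_of_pos (neg_neg_of_pos hz) (Complex.normSq_pos.2 hz0)

theorem Complex.im_inv_pos {z : ℂ} (hz : z.im < 0) : 0 < z⁻¹.im := by
  have hz0 : z ≠ 0 := fun h => by simp [h] at hz
  rw [Complex.inv_im]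
  exact div_pos (neg_pos.2 hz) (Complex.normSq_pos.2 hz0)

variable {ι : Type*} [DecidableEq ι] {y : ι → ℂ}

theorem esymmOn_ne_zero_and_im_div_pos (hy : ∀ i, 0 < (y i).im) (m : ℕ) (s : Finset ι)
    (hm : m ≤ s.card) : esymmOn y s m ≠ 0 ∧
      (m < s.card → 0 < (esymmOn y s (m + 1) / esymmOn y s m).im) := by
  induction m generalizing s with
  | zero =>
    simp only [esymmOn_zero, ne_eq, one_ne_zero, not_false_eq_true, true_and, div_one]
    intro hs
    have h := sum_mul_esymmOn_erase y s 0
    simp only [esymmOn_zero, mul_one, Nat.cast_zero, zero_add, one_mul] at h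
    rw [zero_add, ← h, Complex.im_sum]
    exact Finset.sum_pos (fun i _ => hy i) (Finset.card_pos.1 hs)
  | succ m ih =>
    have hne : esymmOn y s (m + 1) ≠ 0 := by
      intro h0
      have h := (ih s (by omega)).2 (by omega)
      simp [h0] at h
    refine ⟨hne, fun hs => ?_⟩
    have hterm : ∀ a ∈ s,
        0 < (y a * esymmOn y (s.erase a) (m + 1) / esymmOn y s (m + 1)).im := by
      intro a ha
      have hcard : (s.erase a).card = s.card - 1 := Finset.card_erase_of_mem ha
      obtain ⟨hE, hR⟩ := ih (s.erase a) (by omega)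
      have hR := hR (by omega)
      have hE' : esymmOn y (s.erase a) (m + 1) ≠ 0 := fun h0 => by simp [h0] at hR
      have hya : y a ≠ 0 := fun h0 => by simpa [h0] using hy a
      rw [esymmOn_erase y ha] at hne ⊢
      have heq : y a * esymmOn y (s.erase a) (m + 1) /
          (esymmOn y (s.erase a) (m + 1) + y a * esymmOn y (s.erase a) m) =
            ((y a)⁻¹ + (esymmOn y (s.erase a) (m + 1) / esymmOn y (s.erase a) m)⁻¹)⁻¹ := by
        rw [div_eq_iff hne, inv_div]
        have hsum : (y a)⁻¹ + esymmOn y (s.erase a) m / esymmOn y (s.erase a) (m + 1) =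
            (esymmOn y (s.erase a) (m + 1) + y a * esymmOn y (s.erase a) m) /
              (y a * esymmOn y (s.erase a) (m + 1)) := by
          field_simp
        rw [hsum, inv_div, div_mul_cancel₀ _ hne]
      rw [heq]
      apply Complex.im_inv_pos
      rw [Complex.add_im]
      exact add_neg (Complex.im_inv_neg (hy a)) (Complex.im_inv_neg hR)
    have hsum : 0 < (∑ a ∈ s, y a * esymmOn y (s.erase a) (m + 1) / esymmOn y s (m + 1)).im := by
      rw [Complex.im_sum]
      exact Finset.sum_pos hterm (Finset.card_pos.1 (by omega))
    rw [← Finset.sum_div, sum_mul_esymmOn_erase, mul_div_assoc] at hsum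
    have hcast : (((m + 1 : ℕ) : ℂ) + 1) = (((m : ℝ) + 2 : ℝ) : ℂ) := by
      push_cast
      ring
    rw [hcast, Complex.im_ofReal_mul] at hsum
    exact pos_of_mul_pos_right hsum (by positivity)

theorem im_esymmOn_erase_div_neg (hy : ∀ i, 0 < (y i).im) {m : ℕ} {s : Finset ι} {a : ι}
    (ha : a ∈ s) (hm : m + 1 ≤ s.card) :
    (esymmOn y (s.erase a) m / esymmOn y s (m + 1)).im < 0 := by
  have hcard : (s.erase a).card = s.card - 1 := Finset.card_erase_of_mem ha
  obtain ⟨hE, hR⟩ := esymmOn_ne_zero_and_im_div_pos hy m (s.erase a) (by omega)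
  rw [← inv_div]
  apply Complex.im_inv_neg
  rw [esymmOn_erase y ha, add_div, mul_div_cancel_right₀ _ hE, Complex.add_im]
  refine add_pos_of_nonneg_of_pos ?_ (hy a)
  rcases (show m ≤ (s.erase a).card by omega).lt_or_eq with h | h
  · exact (hR h).le
  · simp [esymmOn_of_card_lt y (show (s.erase a).card < m + 1 by omega)]

end UpperHalfPlane

section Degree

variable {ι : Type*}

theorem natDegree_esymmOn_X_add_C_le (r : ι → ℝ) (s : Finset ι) (m : ℕ) :
    (esymmOn (fun i => X + C (r i)) s m).natDegree ≤ m := by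
  refine natDegree_sum_le_of_forall_le _ _ fun u hu => ?_
  rw [natDegree_prod_of_monic _ _ fun i _ => monic_X_add_C (r i)]
  simp [(Finset.mem_powersetCard.1 hu).2]

theorem coeff_esymmOn_X_add_C (r : ι → ℝ) (s : Finset ι) (m : ℕ) :
    (esymmOn (fun i => X + C (r i)) s m).coeff m = (s.card.choose m : ℝ) := by
  rw [esymmOn, finsetSum_coeff, Finset.sum_congr rfl (g := fun _ => (1 : ℝ))]
  · simp
  · intro u hu
    have hmonic : (∏ i ∈ u, (X + C (r i))).Monic :=
      monic_prod_of_monic _ _ fun i _ => monic_X_add_C (r i)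
    have hdeg : (∏ i ∈ u, (X + C (r i))).natDegree = m := by
      rw [natDegree_prod_of_monic _ _ fun i _ => monic_X_add_C (r i)]
      simp [(Finset.mem_powersetCard.1 hu).2]
    rw [← hdeg]
    exact hmonic

theorem sigmaTP_eq_esymmOn (n : ℕ) (r : Fin n → ℝ) (m : ℕ) :
    sigmaTP n r m = esymmOn (fun i => X + C (r i)) Finset.univ m := rfl

theorem qPoly_succ_eq_esymmOn (n : ℕ) (r : Fin n → ℝ) (i : Fin n) (m : ℕ) :
    qPoly n r i (m + 1) = esymmOn (fun i => X + C (r i)) (Finset.univ.erase i) m := by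
  rw [← sum_range_neg_pow_mul_esymmOn _ (Finset.mem_univ i), qPoly]
  refine Finset.sum_congr rfl fun j _ => ?_
  rw [Nat.add_sub_cancel, sigmaTP_eq_esymmOn, smul_eq_C_mul]
  simp

theorem natDegree_sum_smul_qPoly_succ_le (n : ℕ) (r x : Fin n → ℝ) (m : ℕ) :
    (∑ i, (x i) ^ 2 • qPoly n r i (m + 1)).natDegree ≤ m := by
  refine natDegree_sum_le_of_forall_le _ _ fun i _ => (natDegree_smul_le _ _).trans ?_
  rw [qPoly_succ_eq_esymmOn]
  exact natDegree_esymmOn_X_add_C_le _ _ _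

theorem natDegree_pPoly_succ_le (n m : ℕ) (r₀₀ : ℝ) (r x : Fin n → ℝ) :
    (pPoly n (m + 1) r₀₀ r x).natDegree ≤ m + 2 := by
  refine (natDegree_sub_le _ _).trans (max_le ?_ ?_)
  · refine natDegree_mul_le.trans ?_
    have := natDegree_esymmOn_X_add_C_le r Finset.univ (m + 1)
    rw [natDegree_X_add_C, sigmaTP_eq_esymmOn]
    omega
  · exact (natDegree_sum_smul_qPoly_succ_le n r x m).trans (by omega)

theorem coeff_pPoly_succ (n m : ℕ) (r₀₀ : ℝ) (r x : Fin n → ℝ) :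
    (pPoly n (m + 1) r₀₀ r x).coeff (m + 2) = n.choose (m + 1) := by
  have hσ := natDegree_esymmOn_X_add_C_le r Finset.univ (m + 1)
  rw [pPoly, coeff_sub, coeff_eq_zero_of_natDegree_lt
    (lt_of_le_of_lt (natDegree_sum_smul_qPoly_succ_le n r x m) (by omega)), sub_zero, add_mul,
    coeff_add, coeff_X_mul, coeff_C_mul, sigmaTP_eq_esymmOn,
    coeff_eq_zero_of_natDegree_lt (lt_of_le_of_lt hσ (Nat.lt_succ_self _)), coeff_esymmOn_X_add_C]
  simp

/-- A polynomial of degree at most `d` with `d` listed roots splits over them. -/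
theorem aeval_eq_coeff_mul_prod {p : ℝ[X]} {d : ℕ} {γ : Fin d → ℝ} (hdeg : p.natDegree ≤ d)
    (hroots : p.roots = Multiset.map γ Finset.univ.val) (t : ℂ) :
    aeval t p = p.coeff d * ∏ j, (t - γ j) := by
  have hcard : Multiset.card p.roots = d := by simp [hroots]
  have hd : p.natDegree = d := le_antisymm hdeg (hcard ▸ p.card_roots')
  have hp := C_leadingCoeff_mul_prod_multiset_X_sub_C (hcard.trans hd.symm)
  rw [leadingCoeff, hd, hroots, Multiset.map_map] at hp
  conv_lhs => rw [← hp]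
  rw [map_mul, aeval_C]
  congr 1
  change aeval t (∏ j, (X - C (γ j))) = _
  simp

theorem im_aeval_pPoly_div_sigmaTP_pos (n k : ℕ) (hk1 : 1 ≤ k) (hkn : k ≤ n) (r₀₀ : ℝ)
    (r x : Fin n → ℝ) {t : ℂ} (ht : 0 < t.im) :
    0 < (aeval t (pPoly n k r₀₀ r x) / aeval t (sigmaTP n r k)).im := by
  obtain ⟨m, rfl⟩ : ∃ m, k = m + 1 := ⟨k - 1, by omega⟩
  have heval : ∀ (s : Finset (Fin n)) l, aeval t (esymmOn (fun i => X + C (r i)) s l) =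
      esymmOn (fun i => t + (r i : ℂ)) s l := by
    intro s l
    have := map_esymmOn (aeval t : ℝ[X] →ₐ[ℝ] ℂ).toRingHom (fun i => X + C (r i)) s l
    simpa using this
  have hy : ∀ i, 0 < (t + (r i : ℂ)).im := by simpa using fun _ => ht
  have hcard : m + 1 ≤ (Finset.univ : Finset (Fin n)).card := by simpa using hkn
  have hσ := (esymmOn_ne_zero_and_im_div_pos hy (m + 1) Finset.univ hcard).1
  rw [pPoly, sigmaTP_eq_esymmOn, map_sub, map_mul, map_sum]
  simp only [map_smul, qPoly_succ_eq_esymmOn, heval]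
  rw [sub_div, mul_div_cancel_right₀ _ hσ, Finset.sum_div, Complex.sub_im, Complex.im_sum]
  have hsum : ∑ i, ((x i) ^ 2 • esymmOn (fun i => t + (r i : ℂ)) (Finset.univ.erase i) m /
      esymmOn (fun i => t + (r i : ℂ)) Finset.univ (m + 1)).im ≤ 0 := by
    refine Finset.sum_nonpos fun i _ => ?_
    rw [smul_div_assoc, Complex.smul_im, smul_eq_mul]
    exact mul_nonpos_of_nonneg_of_nonpos (sq_nonneg _)
      (im_esymmOn_erase_div_neg hy (Finset.mem_univ i) hcard).le
  simp only [map_add, aeval_X, aeval_C, Complex.add_im]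
  simp only [Complex.coe_algebraMap, Complex.ofReal_im]
  linarith

end Degree

section Argument

/-- The limit of `arg (u + iy)` as `y` decreases to `0`. -/
noncomputable def boundaryArg (u : ℝ) : ℝ :=
  if u < 0 then Real.pi else if u = 0 then Real.pi / 2 else 0

theorem boundaryArg_of_neg {u : ℝ} (hu : u < 0) : boundaryArg u = Real.pi := if_pos hu

theorem boundaryArg_of_pos {u : ℝ} (hu : 0 < u) : boundaryArg u = 0 := by
  simp [boundaryArg, hu.le, hu.ne']

theorem boundaryArg_nonneg (u : ℝ) : 0 ≤ boundaryArg u := by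
  unfold boundaryArg
  split_ifs <;> positivity

theorem boundaryArg_le_pi (u : ℝ) : boundaryArg u ≤ Real.pi := by
  unfold boundaryArg
  split_ifs <;> linarith [Real.pi_pos]

theorem tendsto_arg_boundaryArg (u : ℝ) :
    Tendsto (fun y : ℝ => Complex.arg (u + y * Complex.I)) (𝓝[>] 0) (𝓝 (boundaryArg u)) := by
  have hlim : Tendsto (fun y : ℝ => (u + y * Complex.I : ℂ)) (𝓝[>] 0) (𝓝 (u : ℂ)) := by
    have hc : Continuous fun y : ℝ => (u + y * Complex.I : ℂ) := by fun_prop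
    simpa using (hc.tendsto 0).mono_left nhdsWithin_le_nhds
  rcases lt_trichotomy u 0 with hu | rfl | hu
  · rw [boundaryArg_of_neg hu]
    refine (Complex.tendsto_arg_nhdsWithin_im_nonneg_of_re_neg_of_im_zero
      (z := (u : ℂ)) (by simpa using hu) (by simp)).comp
      (tendsto_nhdsWithin_iff.2 ⟨hlim, ?_⟩)
    filter_upwards [self_mem_nhdsWithin] with y hy
    simpa using (le_of_lt hy : (0 : ℝ) ≤ y)
  · have hb : boundaryArg 0 = Real.pi / 2 := by simp [boundaryArg]
    rw [hb]
    refine tendsto_const_nhds.congr' ?_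
    filter_upwards [self_mem_nhdsWithin] with y hy
    rw [Complex.ofReal_zero, zero_add, Complex.arg_real_mul _ hy, Complex.arg_I]
  · rw [boundaryArg_of_pos hu]
    have harg := (Complex.continuousAt_arg (Complex.ofReal_mem_slitPlane.2 hu)).tendsto.comp hlim
    rwa [Complex.arg_ofReal_of_nonneg hu.le] at harg

theorem tendsto_arg_atTop (u : ℝ) :
    Tendsto (fun y : ℝ => Complex.arg (u + y * Complex.I)) atTop (𝓝 (Real.pi / 2)) := by
  have hlim : Tendsto (fun y : ℝ => ((u / y : ℝ) + Complex.I : ℂ)) atTop (𝓝 Complex.I) := by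
    have h0 : Tendsto (fun y : ℝ => u / y) atTop (𝓝 0) := tendsto_const_nhds.div_atTop tendsto_id
    simpa using ((Complex.continuous_ofReal.tendsto 0).comp h0).add_const Complex.I
  have hI : Complex.I ∈ Complex.slitPlane := by simp [Complex.mem_slitPlane_iff]
  rw [← Complex.arg_I]
  refine ((Complex.continuousAt_arg hI).tendsto.comp hlim).congr' ?_
  filter_upwards [eventually_gt_atTop 0] with y hy
  rw [Function.comp_apply, ← Complex.arg_real_mul _ hy]
  congr 1
  have : (y : ℂ) ≠ 0 := by exact_mod_cast hy.ne'
  push_cast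
  field_simp

theorem prod_eq_norm_mul_exp_sum_arg {κ : Type*} (s : Finset κ) (z : κ → ℂ) :
    ∏ j ∈ s, z j =
      (∏ j ∈ s, ‖z j‖ : ℝ) * Complex.exp ((∑ j ∈ s, (z j).arg : ℝ) * Complex.I) := by
  push_cast
  rw [Finset.sum_mul, Complex.exp_sum, ← Finset.prod_mul_distrib]
  exact Finset.prod_congr rfl fun j _ => (Complex.norm_mul_exp_arg_mul_I (z j)).symm

variable {k : ℕ} {α : Fin (k + 1) → ℝ} {β : Fin k → ℝ}

/-- If `∏ (t - α j) / ∏ (t - β j)` maps the upper half-plane to itself, then its argument stays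
in `[0, π]` up to the boundary. -/
theorem sum_boundaryArg_sub_mem_Icc
    (h : ∀ t : ℂ, 0 < t.im → 0 < ((∏ j, (t - α j)) / ∏ j, (t - β j)).im) (c : ℝ) :
    ∑ j, boundaryArg (c - α j) - ∑ j, boundaryArg (c - β j) ∈ Set.Icc 0 Real.pi := by
  set θ : ℝ → ℝ := fun y => ∑ j, Complex.arg ((c - α j : ℝ) + y * Complex.I) -
    ∑ j, Complex.arg ((c - β j : ℝ) + y * Complex.I) with hθ
  have hsin : ∀ y ∈ Set.Ioi (0 : ℝ), 0 < Real.sin (θ y) := by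
    intro y hy
    have hpos := h (c + y * Complex.I) (by simpa using hy)
    have hshift : ∀ a : ℝ, (c + y * Complex.I - a : ℂ) = (c - a : ℝ) + y * Complex.I := by
      intro a
      push_cast
      ring
    simp only [hshift] at hpos
    rw [prod_eq_norm_mul_exp_sum_arg, prod_eq_norm_mul_exp_sum_arg, mul_div_mul_comm,
      ← Complex.exp_sub, ← sub_mul, ← Complex.ofReal_sub, ← Complex.ofReal_div,
      Complex.im_ofReal_mul, Complex.exp_ofReal_mul_I_im] at hpos
    exact pos_of_mul_pos_right hpos (by positivity)
  have hcont : ContinuousOn θ (Set.Ioi 0) := by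
    have harg : ∀ a : ℝ,
        ContinuousOn (fun y : ℝ => Complex.arg ((a : ℂ) + y * Complex.I)) (Set.Ioi 0) := by
      intro a y hy
      have hmem : ((a : ℂ) + y * Complex.I) ∈ Complex.slitPlane := by
        rw [Complex.mem_slitPlane_iff]
        right
        simpa using (ne_of_gt hy : y ≠ 0)
      have hc : Continuous fun y : ℝ => ((a : ℂ) + y * Complex.I) := by fun_prop
      exact (ContinuousAt.comp (f := fun y : ℝ => ((a : ℂ) + y * Complex.I))
        (Complex.continuousAt_arg hmem) hc.continuousAt).continuousWithinAt
    exact (continuousOn_finsetSum _ fun j _ => harg _).sub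
      (continuousOn_finsetSum _ fun j _ => harg _)
  have htop : Tendsto θ atTop (𝓝 (Real.pi / 2)) := by
    have hlim := (tendsto_finsetSum Finset.univ fun j _ => tendsto_arg_atTop (c - α j)).sub
      (tendsto_finsetSum Finset.univ fun j _ => tendsto_arg_atTop (c - β j))
    convert hlim using 2
    simp
    ring
  obtain ⟨y₀, hy₀, hy₀mem⟩ : ∃ y₀ ∈ Set.Ioi (0 : ℝ), θ y₀ ∈ Set.Ioo 0 Real.pi := by
    have hnhds : Set.Ioo 0 Real.pi ∈ 𝓝 (Real.pi / 2) :=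
      Ioo_mem_nhds (by positivity) (by linarith [Real.pi_pos])
    obtain ⟨y₀, hy₀, hpos⟩ := ((htop.eventually hnhds).and (eventually_gt_atTop 0)).exists
    exact ⟨y₀, hpos, hy₀⟩
  have himage : (θ '' Set.Ioi 0).OrdConnected :=
    (isPreconnected_Ioi.image θ hcont).ordConnected
  have havoid : ∀ v ∈ θ '' Set.Ioi 0, 0 < Real.sin v := by
    rintro _ ⟨y, hy, rfl⟩
    exact hsin y hy
  have hmem : ∀ y ∈ Set.Ioi (0 : ℝ), θ y ∈ Set.Icc 0 Real.pi := by
    intro y hy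
    constructor
    · by_contra! hneg
      have := havoid 0 (himage.out ⟨y, hy, rfl⟩ ⟨y₀, hy₀, rfl⟩ ⟨hneg.le, hy₀mem.1.le⟩)
      simp at this
    · by_contra! hgt
      have := havoid Real.pi (himage.out ⟨y₀, hy₀, rfl⟩ ⟨y, hy, rfl⟩ ⟨hy₀mem.2.le, hgt.le⟩)
      simp at this
  have hzero : Tendsto θ (𝓝[>] 0)
      (𝓝 (∑ j, boundaryArg (c - α j) - ∑ j, boundaryArg (c - β j))) :=
    (tendsto_finsetSum Finset.univ fun j _ => tendsto_arg_boundaryArg (c - α j)).sub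
      (tendsto_finsetSum Finset.univ fun j _ => tendsto_arg_boundaryArg (c - β j))
  refine isClosed_Icc.mem_of_tendsto hzero ?_
  filter_upwards [self_mem_nhdsWithin] with y hy using hmem y hy

theorem interlaces_of_im_pos (hα : Monotone α) (hβ : Monotone β)
    (h : ∀ t : ℂ, 0 < t.im → 0 < ((∏ j, (t - α j)) / ∏ j, (t - β j)).im) (i : Fin k) :
    α i.castSucc ≤ β i ∧ β i ≤ α i.succ := by
  constructor
  · by_contra! hlt
    obtain ⟨c, hβc, hcα⟩ := exists_between hlt
    have hπ := (sum_boundaryArg_sub_mem_Icc h c).2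
    rw [Fin.sum_univ_succAbove _ i.castSucc, boundaryArg_of_neg (sub_neg.2 hcα), add_sub_assoc,
      ← Finset.sum_sub_distrib] at hπ
    have hnonneg : ∀ j ∈ Finset.univ,
        0 ≤ boundaryArg (c - α (i.castSucc.succAbove j)) - boundaryArg (c - β j) := by
      intro j _
      rcases le_or_gt j i with hj | hj
      · rw [boundaryArg_of_pos (sub_pos.2 ((hβ hj).trans_lt hβc)), sub_zero]
        exact boundaryArg_nonneg _
      · have hle : i.castSucc ≤ i.castSucc.succAbove j := by
          rw [Fin.succAbove_of_le_castSucc _ _ (Fin.castSucc_le_castSucc_iff.2 hj.le)]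
          exact ((Fin.castSucc_lt_castSucc_iff.2 hj).trans Fin.castSucc_lt_succ).le
        rw [boundaryArg_of_neg (sub_neg.2 (hcα.trans_le (hα hle))), sub_nonneg]
        exact boundaryArg_le_pi _
    have hi := Finset.single_le_sum hnonneg (Finset.mem_univ i)
    rw [Fin.succAbove_castSucc_self, boundaryArg_of_pos (sub_pos.2 hβc), boundaryArg_of_neg
      (sub_neg.2 (hcα.trans_le (hα Fin.castSucc_lt_succ.le)))] at hi
    linarith [Real.pi_pos]
  · by_contra! hlt
    obtain ⟨c, hαc, hcβ⟩ := exists_between hlt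
    have hzero := (sum_boundaryArg_sub_mem_Icc h c).1
    rw [Fin.sum_univ_succAbove _ i.succ, boundaryArg_of_pos (sub_pos.2 hαc), zero_add,
      ← neg_sub, ← Finset.sum_sub_distrib] at hzero
    have hnonneg : ∀ j ∈ Finset.univ,
        0 ≤ boundaryArg (c - β j) - boundaryArg (c - α (i.succ.succAbove j)) := by
      intro j _
      rcases lt_or_ge j i with hj | hj
      · have hle : i.succ.succAbove j ≤ i.succ := by
          have hlt := (Fin.castSucc_lt_castSucc_iff.2 hj).trans (Fin.castSucc_lt_succ (i := i))
          rw [Fin.succAbove_of_castSucc_lt _ _ hlt]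
          exact hlt.le
        rw [boundaryArg_of_pos (sub_pos.2 ((hα hle).trans_lt hαc)), sub_zero]
        exact boundaryArg_nonneg _
      · rw [boundaryArg_of_neg (sub_neg.2 (hcβ.trans_le (hβ hj))), sub_nonneg]
        exact boundaryArg_le_pi _
    have hi := Finset.single_le_sum hnonneg (Finset.mem_univ i)
    rw [Fin.succAbove_succ_self, boundaryArg_of_neg (sub_neg.2 hcβ), boundaryArg_of_pos
      (sub_pos.2 ((hα Fin.castSucc_lt_succ.le).trans_lt hαc))] at hi
    linarith [Real.pi_pos]

end Argument

/-- the roots of `σ_k(r+tI)` separate (interlace) the roots of `p_{k+1}`: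
`α₁ ≤ β₁ ≤ α₂ ≤ β₂ ≤ … ≤ β_k ≤ α_{k+1}`. -/
theorem sigma_interlaces_pPoly (n k : ℕ) (hn : 1 ≤ n) (hk1 : 1 ≤ k) (hkn : k ≤ n)
    (r₀₀ : ℝ) (r x : Fin n → ℝ)
    (α : Fin (k + 1) → ℝ) (β : Fin k → ℝ)
    (hα : Monotone α) (hβ : Monotone β)
    (hαroots : (pPoly n k r₀₀ r x).roots = Multiset.map α Finset.univ.val)
    (hβroots : (sigmaTP n r k).roots = Multiset.map β Finset.univ.val) :
    ∀ i : Fin k, α i.castSucc ≤ β i ∧ β i ≤ α i.succ := by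
  refine interlaces_of_im_pos hα hβ fun t ht => ?_
  have hpos := im_aeval_pPoly_div_sigmaTP_pos n k hk1 hkn r₀₀ r x ht
  obtain ⟨m, rfl⟩ : ∃ m, k = m + 1 := ⟨k - 1, by omega⟩
  have hchoose : ((n.choose (m + 1) : ℝ) : ℂ) ≠ 0 := by
    exact_mod_cast (Nat.choose_pos hkn).ne'
  rwa [aeval_eq_coeff_mul_prod (natDegree_pPoly_succ_le n m r₀₀ r x) hαroots,
    aeval_eq_coeff_mul_prod (p := sigmaTP n r (m + 1))
      (natDegree_esymmOn_X_add_C_le r Finset.univ (m + 1)) hβroots,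
    coeff_pPoly_succ, sigmaTP_eq_esymmOn, coeff_esymmOn_X_add_C, Finset.card_univ,
    Fintype.card_fin, mul_div_mul_left _ _ hchoose] at hpos
end

section
/- Let n ≥ 1, 1 ≤ k ≤ n, 1 ≤ i ≤ n, and let r₁, …, r_n be real numbers. Then q_{i,k} interlaces σ_k(r+tI): if μ₁ ≤ … ≤ μ_{k−1} are the real roots of q_{i,k} and ν₁ ≤ … ≤ ν_k are the real roots of σ_k(r+tI), each listed with multiplicity in nondecreasing order, then ν₁ ≤ μ₁ ≤ ν₂ ≤ μ₂ ≤ … ≤ μ_{k−1} ≤ ν_k. -/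
open Polynomial

open Lagrange

/-- The entries of `μ` strictly separate those of `ν`. -/
def StrictlyInterlaces {k : ℕ} (μ : Fin k → ℝ) (ν : Fin (k + 1) → ℝ) : Prop :=
  ∀ j, ν j.castSucc < μ j ∧ μ j < ν j.succ

theorem StrictlyInterlaces.strictMono {k : ℕ} {μ : Fin k → ℝ} {ν : Fin (k + 1) → ℝ}
    (h : StrictlyInterlaces μ ν) : StrictMono ν :=
  Fin.strictMono_iff_lt_succ.2 fun j => (h j).1.trans (h j).2

theorem StrictlyInterlaces.strictMono_left {k : ℕ} {μ : Fin k → ℝ} {ν : Fin (k + 1) → ℝ}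
    (h : StrictlyInterlaces μ ν) : StrictMono μ := by
  intro a b hab
  exact ((h a).2.trans_le (h.strictMono.monotone (by
    rw [Fin.le_def]; simpa using hab))).trans (h b).1

/-- The polynomial with roots `μ` is a positive combination of the cofactors of the polynomial
with roots `ν`. -/
theorem StrictlyInterlaces.exists_pos_nodal_eq_sum {k : ℕ} {μ : Fin k → ℝ}
    {ν : Fin (k + 1) → ℝ} (h : StrictlyInterlaces μ ν) :
    ∃ w : Fin (k + 1) → ℝ, (∀ j, 0 < w j) ∧
      nodal Finset.univ μ = ∑ j, C (w j) * nodal Finset.univ (ν ∘ j.succAbove) := by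
  have hne : ∀ j (l : Fin k), ν j - ν (j.succAbove l) ≠ 0 := fun j l =>
    sub_ne_zero.2 (h.strictMono.injective.ne (Fin.succAbove_ne j l).symm)
  refine ⟨fun j => ∏ l, (ν j - μ l) / (ν j - ν (j.succAbove l)), fun j => ?_, ?_⟩
  · refine Finset.prod_pos fun l _ => ?_
    rcases lt_or_ge l.castSucc j with hl | hl
    · have h1 : ν (j.succAbove l) < μ l := by
        rw [Fin.succAbove_of_castSucc_lt _ _ hl]; exact (h l).1
      have h2 : μ l < ν j := (h l).2.trans_le (h.strictMono.monotone (by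
        rw [Fin.le_def]; rw [Fin.lt_def] at hl; simpa using hl))
      exact div_pos (by linarith) (by linarith)
    · have h1 : μ l < ν (j.succAbove l) := by
        rw [Fin.succAbove_of_le_castSucc _ _ hl]; exact (h l).2
      have h2 : ν j < μ l := (h.strictMono.monotone hl).trans_lt (h l).1
      exact div_pos_of_neg_of_neg (by linarith) (by linarith)
  · refine eq_of_degrees_lt_of_eval_index_eq (s := Finset.univ) (v := ν)
      h.strictMono.injective.injOn ?_ ?_ fun l _ => ?_
    · rw [degree_nodal]; simp; norm_cast; omega
    · refine (degree_sum_le _ _).trans_lt ((Finset.sup_lt_iff (by simp)).2 fun j _ => ?_)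
      rw [← smul_eq_C_mul]
      refine (degree_smul_le _ _).trans_lt ?_
      rw [degree_nodal]; simp; norm_cast; omega
    · rw [eval_finsetSum, Finset.sum_eq_single l]
      · rw [eval_mul, eval_C, eval_nodal, eval_nodal, ← Finset.prod_mul_distrib]
        refine Finset.prod_congr rfl fun j _ => ?_
        simp [div_mul_cancel₀ _ (hne l j)]
      · intro j _ hj
        obtain ⟨p, hp⟩ := Fin.exists_succAbove_eq hj.symm
        rw [eval_mul, ← hp, ← Function.comp_apply (f := ν),
          eval_nodal_at_node (Finset.mem_univ _), mul_zero]
      · simp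

theorem nodal_univ_succAbove {k : ℕ} (ν : Fin (k + 1) → ℝ) (j : Fin (k + 1)) :
    nodal Finset.univ ν = (X - C (ν j)) * nodal Finset.univ (ν ∘ j.succAbove) := by
  simp only [nodal, Fin.prod_univ_succAbove _ j, Function.comp]

/-- The Wronskian of strictly interlacing polynomials is positive. -/
theorem StrictlyInterlaces.wronskian_pos {k : ℕ} {μ : Fin k → ℝ} {ν : Fin (k + 1) → ℝ}
    (h : StrictlyInterlaces μ ν) (x : ℝ) :
    0 < (derivative (nodal Finset.univ ν) * nodal Finset.univ μ
      - nodal Finset.univ ν * derivative (nodal Finset.univ μ)).eval x := by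
  obtain ⟨w, hw, hμ⟩ := h.exists_pos_nodal_eq_sum
  have key : derivative (nodal Finset.univ ν) * nodal Finset.univ μ
      - nodal Finset.univ ν * derivative (nodal Finset.univ μ)
      = ∑ j, C (w j) * nodal Finset.univ (ν ∘ j.succAbove) ^ 2 := by
    rw [hμ, derivative_sum, Finset.mul_sum, Finset.mul_sum, ← Finset.sum_sub_distrib]
    refine Finset.sum_congr rfl fun j _ => ?_
    rw [nodal_univ_succAbove ν j]
    simp only [derivative_mul, derivative_C, derivative_sub, derivative_X]
    ring
  rw [key, eval_finsetSum]
  simp only [eval_mul, eval_C, eval_pow]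
  have hx : ∃ j, (nodal Finset.univ (ν ∘ Fin.succAbove j)).eval x ≠ 0 := by
    by_cases hx : ∃ j, x = ν j
    · obtain ⟨j, rfl⟩ := hx
      refine ⟨j, eval_nodal_not_at_node fun l _ => ?_⟩
      exact h.strictMono.injective.ne (Fin.succAbove_ne j l).symm
    · exact ⟨0, eval_nodal_not_at_node fun l _ hl => hx ⟨_, hl⟩⟩
  obtain ⟨j, hj⟩ := hx
  exact Finset.sum_pos' (fun j _ => mul_nonneg (hw j).le (sq_nonneg _))
    ⟨j, Finset.mem_univ _, mul_pos (hw j) (by positivity)⟩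

/-- A derivative of a monic product of linear factors is determined by enough distinct roots. -/
theorem derivative_nodal_eq_of_roots {k : ℕ} (ν : Fin (k + 1) → ℝ) (ξ : Fin k → ℝ)
    (hξ : Function.Injective ξ)
    (h : ∀ j, (derivative (nodal Finset.univ ν)).eval (ξ j) = 0) :
    derivative (nodal Finset.univ ν) = C ((k : ℝ) + 1) * nodal Finset.univ ξ := by
  have hdeg : (nodal Finset.univ ν).natDegree = k + 1 := by simp
  have hco : (derivative (nodal Finset.univ ν)).coeff k = (k : ℝ) + 1 := by
    have := (nodal_monic (s := Finset.univ) (v := ν)).coeff_natDegree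
    rw [hdeg] at this
    rw [coeff_derivative, this, one_mul]
  have hco' : (nodal Finset.univ ξ).coeff k = 1 := by
    simpa only [natDegree_nodal, Finset.card_univ, Fintype.card_fin] using
      (nodal_monic (s := Finset.univ) (v := ξ)).coeff_natDegree
  have hd : (derivative (nodal Finset.univ ν)).natDegree ≤ k := by
    exact (natDegree_derivative_le _).trans (by simp)
  have hd' : (C ((k : ℝ) + 1) * nodal Finset.univ ξ).natDegree ≤ k := by
    exact (natDegree_C_mul_le _ _).trans (by simp)
  refine eq_of_degree_sub_lt_of_eval_index_eq (s := Finset.univ) (v := ξ) hξ.injOn ?_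
    fun j _ => ?_
  · rw [Finset.card_univ, Fintype.card_fin]
    refine (degree_lt_iff_coeff_zero _ _).2 fun m hm => ?_
    rcases hm.eq_or_lt with rfl | hm
    · rw [coeff_sub, coeff_C_mul, hco, hco', mul_one, sub_self]
    · rw [coeff_sub, coeff_eq_zero_of_natDegree_lt (hd.trans_lt hm),
        coeff_eq_zero_of_natDegree_lt (hd'.trans_lt hm), sub_zero]
  · rw [h, eval_mul, eval_nodal_at_node (Finset.mem_univ j), mul_zero]

/-- Differentiation preserves strict interlacing. -/
theorem StrictlyInterlaces.derivative {k : ℕ} {μ : Fin (k + 1) → ℝ} {ν : Fin (k + 2) → ℝ}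
    (h : StrictlyInterlaces μ ν) :
    ∃ (η : Fin k → ℝ) (ξ : Fin (k + 1) → ℝ), StrictlyInterlaces η ξ ∧
      StrictlyInterlaces ξ ν ∧
      derivative (nodal Finset.univ ν) = C (((k + 1 : ℕ) : ℝ) + 1) * nodal Finset.univ ξ ∧
      derivative (nodal Finset.univ μ) = C ((k : ℝ) + 1) * nodal Finset.univ η := by
  have hrolle : ∀ j : Fin (k + 1), ∃ x, (ν j.castSucc < x ∧ x < ν j.succ) ∧
      (Polynomial.derivative (nodal Finset.univ ν)).eval x = 0 := by
    intro j
    obtain ⟨x, hx, hx'⟩ := exists_deriv_eq_zero (f := fun x => (nodal Finset.univ ν).eval x)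
      ((h j).1.trans (h j).2) (by fun_prop)
      (by rw [eval_nodal_at_node (Finset.mem_univ _), eval_nodal_at_node (Finset.mem_univ _)])
    exact ⟨x, hx, by simpa using hx'⟩
  choose ξ hξ hξ' using hrolle
  have hξν : StrictlyInterlaces ξ ν := hξ
  have hsign : ∀ j, (nodal Finset.univ ν).eval (ξ j)
      * (Polynomial.derivative (nodal Finset.univ μ)).eval (ξ j) < 0 := by
    intro j
    have := h.wronskian_pos (ξ j)
    simp only [eval_sub, eval_mul, hξ' j] at this
    linarith
  have halt : ∀ j : Fin k, (nodal Finset.univ ν).eval (ξ j.castSucc)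
      * (nodal Finset.univ ν).eval (ξ j.succ) < 0 := by
    intro j
    rw [eval_nodal, eval_nodal, ← Finset.prod_mul_distrib,
      Fin.prod_univ_succAbove _ j.castSucc.succ]
    refine mul_neg_of_neg_of_pos ?_ (Finset.prod_pos fun l _ => ?_)
    · have h1 := (hξ j.castSucc).2
      have h2 := (hξ j.succ).1
      rw [← Fin.succ_castSucc] at h2
      exact mul_neg_of_neg_of_pos (by linarith) (by linarith)
    · have hlt := hξν.strictMono_left (Fin.castSucc_lt_succ (i := j))
      rcases lt_or_ge l.castSucc j.castSucc.succ with hl | hl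
      · rw [Fin.succAbove_of_castSucc_lt _ _ hl]
        have h1 : ν l.castSucc ≤ ν j.castSucc.castSucc := h.strictMono.monotone (by
          rw [Fin.le_def]; rw [Fin.lt_def] at hl; simp at hl ⊢; omega)
        have h2 := (hξ j.castSucc).1
        exact mul_pos (by linarith) (by linarith)
      · rw [Fin.succAbove_of_le_castSucc _ _ hl]
        have h1 : ν j.succ.succ ≤ ν l.succ := h.strictMono.monotone (by
          rw [Fin.le_def] at hl ⊢; simp at hl ⊢; omega)
        have h2 := (hξ j.succ).2
        exact mul_pos_of_neg_of_neg (by linarith) (by linarith)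
  have hroot : ∀ j : Fin k, ∃ y, (ξ j.castSucc < y ∧ y < ξ j.succ) ∧
      (Polynomial.derivative (nodal Finset.univ μ)).eval y = 0 := by
    intro j
    have hlt := hξν.strictMono_left (Fin.castSucc_lt_succ (i := j))
    have h1 := hsign j.castSucc
    have h2 := hsign j.succ
    have h3 := halt j
    have hc : ContinuousOn (fun x => (Polynomial.derivative (nodal Finset.univ μ)).eval x)
      (Set.Icc (ξ j.castSucc) (ξ j.succ)) := by fun_prop
    rcases lt_or_gt_of_ne (left_ne_zero_of_mul h1.ne) with ha | ha
    · have hb := pos_of_mul_neg_right h1 ha.le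
      have hc' := pos_of_mul_neg_right h3 ha.le
      have hd := neg_of_mul_neg_right h2 hc'.le
      obtain ⟨y, hy, hy'⟩ := intermediate_value_Ioo' hlt.le hc ⟨hd, hb⟩
      exact ⟨y, hy, hy'⟩
    · have hb := neg_of_mul_neg_right h1 ha.le
      have hc' := neg_of_mul_neg_right h3 ha.le
      have hd := pos_of_mul_neg_right h2 hc'.le
      obtain ⟨y, hy, hy'⟩ := intermediate_value_Ioo hlt.le hc ⟨hb, hd⟩
      exact ⟨y, hy, hy'⟩
  choose η hη hη' using hroot
  have hηξ : StrictlyInterlaces η ξ := hη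
  exact ⟨η, ξ, hηξ, hξν,
    derivative_nodal_eq_of_roots ν ξ hξν.strictMono_left.injective hξ',
    derivative_nodal_eq_of_roots μ η hηξ.strictMono_left.injective hη'⟩

theorem StrictlyInterlaces.mem_Icc {k : ℕ} {μ : Fin k → ℝ} {ν : Fin (k + 1) → ℝ} {a b : ℝ}
    (h : StrictlyInterlaces μ ν) (hν : ∀ j, ν j ∈ Set.Icc a b) (j : Fin k) :
    μ j ∈ Set.Icc a b :=
  ⟨(hν _).1.trans (h j).1.le, (h j).2.le.trans (hν _).2⟩

/-- Iterated differentiation preserves strict interlacing, with leading coefficients that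
depend only on the degrees. -/
theorem exists_strictlyInterlaces_iterate_derivative (k m : ℕ) :
    ∃ c d : ℝ, c ≠ 0 ∧ d ≠ 0 ∧ ∀ (μ : Fin (k + m) → ℝ) (ν : Fin (k + m + 1) → ℝ) (a b : ℝ),
      StrictlyInterlaces μ ν → (∀ j, ν j ∈ Set.Icc a b) →
      ∃ (η : Fin k → ℝ) (ξ : Fin (k + 1) → ℝ), StrictlyInterlaces η ξ ∧
        (∀ j, ξ j ∈ Set.Icc a b) ∧
        derivative^[m] (nodal Finset.univ ν) = C c * nodal Finset.univ ξ ∧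
        derivative^[m] (nodal Finset.univ μ) = C d * nodal Finset.univ η := by
  induction m with
  | zero => exact ⟨1, 1, one_ne_zero, one_ne_zero, fun μ ν a b h hν => ⟨μ, ν, h, hν, by simp⟩⟩
  | succ m ih =>
    obtain ⟨c, d, hc, hd, H⟩ := ih
    refine ⟨(((k + m + 1 : ℕ) : ℝ) + 1) * c, (((k + m : ℕ) : ℝ) + 1) * d, by positivity,
      by positivity, fun μ ν a b h hν => ?_⟩
    obtain ⟨η, ξ, h₁, h₂, h₃, h₄⟩ := StrictlyInterlaces.derivative (k := k + m) h
    obtain ⟨η', ξ', h₁', h₂', h₃', h₄'⟩ := H η ξ a b h₁ (h₂.mem_Icc hν)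
    refine ⟨η', ξ', h₁', h₂', ?_, ?_⟩
    · rw [Function.iterate_succ_apply, h₃, iterate_derivative_C_mul, h₃', C_mul, mul_assoc]
    · rw [Function.iterate_succ_apply, h₄, iterate_derivative_C_mul, h₄', C_mul, mul_assoc]

theorem continuous_coeff_nodal {ι : Type*} (s : Finset ι) (l : ℕ) :
    Continuous fun v : ι → ℝ => (nodal s v).coeff l := by
  classical
  induction s using Finset.induction_on generalizing l with
  | empty => simp only [nodal_empty]; exact continuous_const
  | insert a s ha ih =>
    simp only [nodal_insert_eq_nodal ha, sub_mul, coeff_sub, coeff_C_mul]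
    refine Continuous.sub ?_ ((continuous_apply a).mul (ih l))
    cases l with
    | zero => simpa using continuous_const
    | succ l => simpa only [coeff_X_mul] using ih l

/-- Iterated differentiation preserves interlacing. -/
theorem exists_interlaces_iterate_derivative {k m : ℕ} (μ : Fin (k + m) → ℝ)
    (ν : Fin (k + m + 1) → ℝ) (h : ∀ j, ν j.castSucc ≤ μ j ∧ μ j ≤ ν j.succ) :
    ∃ (c d : ℝ) (η : Fin k → ℝ) (ξ : Fin (k + 1) → ℝ), c ≠ 0 ∧ d ≠ 0 ∧
      (∀ j, ξ j.castSucc ≤ η j ∧ η j ≤ ξ j.succ) ∧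
      derivative^[m] (nodal Finset.univ ν) = C c * nodal Finset.univ ξ ∧
      derivative^[m] (nodal Finset.univ μ) = C d * nodal Finset.univ η := by
  obtain ⟨c, d, hc, hd, H⟩ := exists_strictlyInterlaces_iterate_derivative k m
  obtain ⟨M, hM⟩ := Finite.exists_le fun j => |ν j|
  have hstrict : ∀ n : ℕ, StrictlyInterlaces
      (fun j => μ j + (2 * (j : ℝ) + 1) * (1 / ((n : ℝ) + 1)))
      (fun j => ν j + 2 * (j : ℝ) * (1 / ((n : ℝ) + 1))) := by
    intro n j
    have hn : 0 < 1 / ((n : ℝ) + 1) := by positivity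
    have := h j
    simp only [Fin.val_castSucc, Fin.val_succ]
    push_cast
    constructor <;> nlinarith
  have hbound : ∀ (n : ℕ) (j : Fin (k + m + 1)), ν j + 2 * (j : ℝ) * (1 / ((n : ℝ) + 1))
      ∈ Set.Icc (-M) (M + 2 * ((k + m : ℕ) : ℝ)) := by
    intro n j
    have hn : 0 < 1 / ((n : ℝ) + 1) := by positivity
    have hn' : 1 / ((n : ℝ) + 1) ≤ 1 := by
      rw [div_le_one (by positivity)]; linarith [Nat.cast_nonneg (α := ℝ) n]
    have hj : (j : ℝ) ≤ ((k + m : ℕ) : ℝ) := by exact_mod_cast Nat.lt_succ_iff.1 j.2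
    have hj0 : (0 : ℝ) ≤ j := Nat.cast_nonneg _
    have := abs_le.1 (hM j)
    have h1 : 2 * (j : ℝ) * (1 / ((n : ℝ) + 1)) ≤ 2 * (j : ℝ) :=
      mul_le_of_le_one_right (by positivity) hn'
    have h2 : 0 ≤ 2 * (j : ℝ) * (1 / ((n : ℝ) + 1)) := by positivity
    constructor <;> linarith
  choose η ξ hηξ hξ hνξ hμη using fun n => H _ _ _ _ (hstrict n) (hbound n)
  obtain ⟨⟨ξ₀, η₀⟩, -, φ, hφ, hlim⟩ := IsCompact.tendsto_subseq
    (x := fun n => (ξ n, η n))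
    (isCompact_Icc (a := ((fun _ => -M : Fin (k + 1) → ℝ), (fun _ => -M : Fin k → ℝ)))
      (b := ((fun _ => M + 2 * ((k + m : ℕ) : ℝ)), (fun _ => M + 2 * ((k + m : ℕ) : ℝ)))))
    (fun n => ⟨⟨fun j => (hξ n j).1, fun j => ((hηξ n).mem_Icc (hξ n) j).1⟩,
      ⟨fun j => (hξ n j).2, fun j => ((hηξ n).mem_Icc (hξ n) j).2⟩⟩)
  rw [Prod.tendsto_iff] at hlim
  obtain ⟨hlimξ, hlimη⟩ := hlim
  simp only [Function.comp_apply] at hlimξ hlimη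
  have hε : Filter.Tendsto (fun n => 1 / ((φ n : ℝ) + 1)) Filter.atTop (nhds 0) :=
    tendsto_one_div_add_atTop_nhds_zero_nat.comp hφ.tendsto_atTop
  have hlimit : ∀ {p q : ℕ} (e : ℝ) (u : Fin p → ℝ) (w : Fin p → ℝ) (y : ℕ → Fin q → ℝ)
      (y₀ : Fin q → ℝ), Filter.Tendsto (fun n => y (φ n)) Filter.atTop (nhds y₀) →
      (∀ n : ℕ, derivative^[m] (nodal Finset.univ fun j => u j + w j * (1 / ((n : ℝ) + 1)))
        = C e * nodal Finset.univ (y n)) →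
      derivative^[m] (nodal Finset.univ u) = C e * nodal Finset.univ y₀ := by
    intro p q e u w y y₀ hy hn
    ext l
    have h1 : Filter.Tendsto (fun n => (C e * nodal Finset.univ (y (φ n))).coeff l)
        Filter.atTop (nhds ((C e * nodal Finset.univ y₀).coeff l)) := by
      simp only [coeff_C_mul]
      exact (((continuous_coeff_nodal Finset.univ l).tendsto y₀).comp hy).const_mul e
    have h2 : Filter.Tendsto (fun n j => u j + w j * (1 / ((φ n : ℝ) + 1)))
        Filter.atTop (nhds u) := by
      refine tendsto_pi_nhds.2 fun j => ?_
      simpa using (hε.const_mul (w j)).const_add (u j)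
    refine tendsto_nhds_unique ?_ h1
    simp only [← hn, coeff_iterate_derivative]
    exact (((continuous_coeff_nodal Finset.univ (l + m)).tendsto u).comp h2).const_smul _
  refine ⟨c, d, η₀, ξ₀, hc, hd, fun j => ⟨?_, ?_⟩, hlimit c ν _ ξ ξ₀ hlimξ hνξ,
    hlimit d μ _ η η₀ hlimη hμη⟩
  · exact le_of_tendsto_of_tendsto' (tendsto_pi_nhds.1 hlimξ _) (tendsto_pi_nhds.1 hlimη _)
      fun n => (hηξ _ j).1.le
  · exact le_of_tendsto_of_tendsto' (tendsto_pi_nhds.1 hlimη _) (tendsto_pi_nhds.1 hlimξ _)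
      fun n => (hηξ _ j).2.le

/-- The `m`-th elementary symmetric polynomial of the translates `X + r i`, `i ∈ s`. -/
noncomputable def esymmTranslate {ι : Type*} (r : ι → ℝ) (s : Finset ι) (m : ℕ) : ℝ[X] :=
  ∑ t ∈ Finset.powersetCard m s, ∏ i ∈ t, (X + C (r i))

theorem esymmTranslate_zero {ι : Type*} (r : ι → ℝ) (s : Finset ι) :
    esymmTranslate r s 0 = 1 := by
  simp [esymmTranslate]

theorem esymmTranslate_of_card_eq {ι : Type*} (r : ι → ℝ) {s : Finset ι} {m : ℕ}
    (h : s.card = m) : esymmTranslate r s m = ∏ i ∈ s, (X + C (r i)) := by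
  simp [esymmTranslate, ← h]

theorem esymmTranslate_insert_succ {ι : Type*} [DecidableEq ι] (r : ι → ℝ) {s : Finset ι}
    {a : ι} (ha : a ∉ s) (m : ℕ) :
    esymmTranslate r (insert a s) (m + 1) =
      esymmTranslate r s (m + 1) + (X + C (r a)) * esymmTranslate r s m := by
  have hmem : ∀ t ∈ Finset.powersetCard m s, a ∉ t := fun t ht hat =>
    ha ((Finset.mem_powersetCard.1 ht).1 hat)
  rw [esymmTranslate, Finset.powersetCard_succ_insert ha, Finset.sum_union, Finset.sum_image,
    esymmTranslate, esymmTranslate, Finset.mul_sum]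
  · congr 1
    exact Finset.sum_congr rfl fun t ht => Finset.prod_insert (hmem t ht)
  · intro t ht t' ht' heq
    rw [← Finset.erase_insert (hmem t ht), ← Finset.erase_insert (hmem t' ht')]
    exact congrArg (Finset.erase · a) heq
  · rw [Finset.disjoint_left]
    intro t ht ht'
    obtain ⟨t', -, rfl⟩ := Finset.mem_image.1 ht'
    exact ha ((Finset.mem_powersetCard.1 ht).1 (Finset.mem_insert_self _ _))

theorem derivative_esymmTranslate_succ {ι : Type*} (r : ι → ℝ) (s : Finset ι) (m : ℕ) :
    derivative (esymmTranslate r s (m + 1)) =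
      C ((s.card : ℝ) - m) * esymmTranslate r s m := by
  classical
  induction s using Finset.induction_on generalizing m with
  | empty =>
    have hzero : ∀ m, esymmTranslate r ∅ (m + 1) = 0 := fun m => by
      rw [esymmTranslate, Finset.powersetCard_eq_empty.2 (by simp), Finset.sum_empty]
    cases m <;> simp [hzero]
  | insert a s ha ih =>
    rw [esymmTranslate_insert_succ r ha, derivative_add, derivative_mul, ih,
      Finset.card_insert_of_notMem ha]
    cases m with
    | zero => simp [esymmTranslate_zero]
    | succ m =>
      rw [ih, esymmTranslate_insert_succ r ha]
      simp only [derivative_add, derivative_X, derivative_C, Nat.cast_add, Nat.cast_one, C_sub,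
        C_add, C_1]
      ring

theorem exists_iterate_derivative_esymmTranslate {ι : Type*} (r : ι → ℝ) (s : Finset ι)
    (j m : ℕ) (h : j + m ≤ s.card) :
    ∃ c : ℝ, c ≠ 0 ∧ derivative^[m] (esymmTranslate r s (j + m)) = C c * esymmTranslate r s j := by
  induction m with
  | zero => exact ⟨1, one_ne_zero, by simp⟩
  | succ m ih =>
    obtain ⟨c, hc, hc'⟩ := ih (by omega)
    refine ⟨((s.card : ℝ) - (j + m : ℕ)) * c, mul_ne_zero (sub_ne_zero.2 ?_) hc, ?_⟩
    · exact_mod_cast (show s.card ≠ j + m by omega)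
    · rw [Function.iterate_succ_apply, ← add_assoc, derivative_esymmTranslate_succ,
        iterate_derivative_C_mul, hc', C_mul, mul_assoc]

theorem qPoly_succ_eq_esymmTranslate (n : ℕ) (r : Fin n → ℝ) (i : Fin n) (k : ℕ) :
    qPoly n r i (k + 1) = esymmTranslate r (Finset.univ.erase i) k := by
  have hrec : ∀ k, qPoly n r i (k + 1) = sigmaTP n r k - (X + C (r i)) * qPoly n r i k := by
    intro k
    have hterm : ∀ j, ((-1 : ℝ) ^ (j + 1)) •
        (sigmaTP n r (k + 1 - 1 - (j + 1)) * (X + C (r i)) ^ (j + 1)) =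
        -((X + C (r i)) * ((-1 : ℝ) ^ j • (sigmaTP n r (k - 1 - j) * (X + C (r i)) ^ j))) := by
      intro j
      rw [show k + 1 - 1 - (j + 1) = k - 1 - j by omega]
      simp only [smul_eq_C_mul, pow_succ, C_mul, C_neg, C_1]
      ring
    rw [qPoly, Finset.sum_range_succ', Finset.sum_congr rfl fun j _ => hterm j,
      Finset.sum_neg_distrib, ← Finset.mul_sum, ← qPoly, sub_eq_neg_add]
    simp only [pow_zero, one_smul, mul_one, Nat.add_sub_cancel, Nat.sub_zero]
  induction k with
  | zero => rw [hrec, esymmTranslate_zero]; simp [qPoly, sigmaTP]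
  | succ k ih =>
    have h := esymmTranslate_insert_succ r (Finset.notMem_erase i Finset.univ) k
    rw [Finset.insert_erase (Finset.mem_univ i)] at h
    rw [hrec, ih, show sigmaTP n r (k + 1) = esymmTranslate r Finset.univ (k + 1) from rfl, h]
    ring

theorem roots_nodal_univ {k : ℕ} (ν : Fin k → ℝ) :
    (nodal Finset.univ ν).roots = Multiset.map ν Finset.univ.val := by
  have h := roots_multiset_prod_X_sub_C (Multiset.map ν Finset.univ.val)
  rwa [Multiset.map_map] at h

theorem Monotone.eq_of_map_univ_eq {k : ℕ} {μ ν : Fin k → ℝ} (hμ : Monotone μ)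
    (hν : Monotone ν)
    (h : Multiset.map μ Finset.univ.val = Multiset.map ν Finset.univ.val) : μ = ν := by
  have hperm : (List.ofFn μ).Perm (List.ofFn ν) := by
    rw [← Multiset.coe_eq_coe]
    simpa [Fin.univ_def, List.ofFn_eq_map] using h
  exact List.ofFn_injective
    (hperm.eq_of_pairwise' hμ.sortedLE_ofFn.pairwise hν.sortedLE_ofFn.pairwise)

/-- The product of all the translates and the product omitting one factor have interlacing roots. -/
theorem exists_interlaces_prod_erase {N : ℕ} (r : Fin (N + 1) → ℝ) (i : Fin (N + 1)) :
    ∃ (μ : Fin N → ℝ) (ν : Fin (N + 1) → ℝ), (∀ j, ν j.castSucc ≤ μ j ∧ μ j ≤ ν j.succ) ∧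
      ∏ l, (X + C (r l)) = nodal Finset.univ ν ∧
      ∏ l ∈ Finset.univ.erase i, (X + C (r l)) = nodal Finset.univ μ := by
  set σ := Tuple.sort (fun l => -r l)
  set ν : Fin (N + 1) → ℝ := (fun l => -r l) ∘ σ with hνdef
  have hν : Monotone ν := Tuple.monotone_sort _
  have hprod : ∏ l, (X + C (r l)) = nodal Finset.univ ν := by
    rw [nodal, ← Equiv.prod_comp σ]
    exact Finset.prod_congr rfl fun l _ => by simp [hνdef]
  have hi : X - C (ν (σ.symm i)) = X + C (r i) := by simp [hνdef]
  refine ⟨ν ∘ (σ.symm i).succAbove, ν, fun j => ⟨hν ?_, hν ?_⟩, hprod, ?_⟩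
  · rw [Fin.succAbove]
    split_ifs
    exacts [le_rfl, Fin.castSucc_lt_succ.le]
  · rw [Fin.succAbove]
    split_ifs
    exacts [Fin.castSucc_lt_succ.le, le_rfl]
  · refine mul_left_cancel₀ (X_add_C_ne_zero (r i)) ?_
    rw [Finset.mul_prod_erase _ (fun l => X + C (r l)) (Finset.mem_univ i), hprod,
      nodal_univ_succAbove ν (σ.symm i), hi]

/-- `q_{i,k}` interlaces `σ_k(r+tI)`:
`ν₁ ≤ μ₁ ≤ ν₂ ≤ μ₂ ≤ … ≤ μ_{k−1} ≤ ν_k`. -/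
theorem qPoly_interlaces_sigmaTP (n k : ℕ) (hn : 1 ≤ n) (hk1 : 1 ≤ k) (hkn : k ≤ n)
    (i : Fin n) (r : Fin n → ℝ)
    (μ : Fin (k - 1) → ℝ) (ν : Fin k → ℝ)
    (hμ : Monotone μ) (hν : Monotone ν)
    (hμroots : (qPoly n r i k).roots = Multiset.map μ Finset.univ.val)
    (hνroots : (sigmaTP n r k).roots = Multiset.map ν Finset.univ.val) :
    ∀ j : Fin (k - 1),
      ν ⟨j.1, by have := j.2; omega⟩ ≤ μ j ∧
        μ j ≤ ν ⟨j.1 + 1, by have := j.2; omega⟩ := by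
  obtain ⟨K, rfl⟩ : ∃ K, k = K + 1 := ⟨k - 1, by omega⟩
  obtain ⟨m, rfl⟩ : ∃ m, n = K + m + 1 := ⟨n - (K + 1), by omega⟩
  obtain ⟨μ₀, ν₀, h₀, hν₀, hμ₀⟩ := exists_interlaces_prod_erase r i
  obtain ⟨c, d, η, ξ, hc, hd, hηξ, hξ, hη⟩ := exists_interlaces_iterate_derivative μ₀ ν₀ h₀
  have hξmono : Monotone ξ :=
    Fin.monotone_iff_le_succ.2 fun j => (hηξ j).1.trans (hηξ j).2
  have hηmono : Monotone η := fun a b hab => by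
    rcases hab.eq_or_lt with rfl | hab
    · exact le_rfl
    · exact ((hηξ a).2.trans (hξmono (by rw [Fin.le_def]; simpa using hab))).trans (hηξ b).1
  have hcard : (Finset.univ : Finset (Fin (K + m + 1))).card = K + 1 + m := by
    simp; omega
  have hcard' : (Finset.univ.erase i).card = K + m := by simp
  have hξν : ξ = ν := by
    refine hξmono.eq_of_map_univ_eq hν ?_
    obtain ⟨e, he, he'⟩ :=
      exists_iterate_derivative_esymmTranslate r Finset.univ (K + 1) m hcard.ge
    rw [esymmTranslate_of_card_eq r hcard, hν₀, hξ] at he'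
    rw [← roots_nodal_univ, ← hνroots, ← roots_C_mul _ hc, he', roots_C_mul _ he]
    rfl
  have hημ : η = μ := by
    refine hηmono.eq_of_map_univ_eq hμ ?_
    obtain ⟨e, he, he'⟩ :=
      exists_iterate_derivative_esymmTranslate r (Finset.univ.erase i) K m hcard'.ge
    rw [esymmTranslate_of_card_eq r hcard', hμ₀, hη] at he'
    rw [← roots_nodal_univ, ← roots_C_mul _ hd, he', roots_C_mul _ he,
      ← qPoly_succ_eq_esymmTranslate, hμroots]
  subst hξν hημ
  exact hηξ
end

section
/- Let n ≥ 1 and 1 ≤ k ≤ n. If A is a real symmetric n×n matrix with A ∈ Γ_k^+, then the Newton transform T_{k−1}(A) is positive definite: XᵀT_{k−1}(A)X > 0 for every nonzero X ∈ ℝ^n. -/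
open Matrix

open Polynomial in
/-- The derivative of a real-rooted polynomial is real-rooted. -/
theorem Polynomial.Splits.derivative_real {p : ℝ[X]} (hp : p.Splits) : p.derivative.Splits := by
  refine splits_iff_card_roots.mpr (le_antisymm (card_roots' _) ?_)
  have hcard := card_roots_le_derivative p
  have hdeg := natDegree_derivative_le p
  rw [← hp.natDegree_eq_card_roots] at hcard
  omega

open Polynomial in
theorem Polynomial.Splits.two_mul_coeff_zero_mul_coeff_two_le {p : ℝ[X]} (hp : p.Splits) :
    2 * (p.coeff 0 * p.coeff 2) ≤ p.coeff 1 ^ 2 := by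
  obtain ⟨m, hm⟩ := splits_iff_exists_multiset'.mp hp
  have hprod : 2 * ((m.map (X + C ·)).prod.coeff 0 * (m.map (X + C ·)).prod.coeff 2)
      ≤ (m.map (X + C ·)).prod.coeff 1 ^ 2 := by
    clear hm
    induction m using Multiset.induction_on with
    | empty => simp [coeff_one]
    | cons a m ih =>
      rw [Multiset.map_cons, Multiset.prod_cons]
      generalize (m.map (X + C ·)).prod = q at ih
      simp only [add_mul, coeff_add, coeff_X_mul, coeff_C_mul, coeff_X_mul_zero]
      nlinarith [sq_nonneg (q.coeff 0), mul_le_mul_of_nonneg_left ih (sq_nonneg a)]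
  rw [hm]
  simp only [coeff_C_mul]
  nlinarith [mul_le_mul_of_nonneg_left hprod (sq_nonneg p.leadingCoeff)]

open Polynomial in
/-- A form of Newton's inequality for the coefficients of a real-rooted polynomial. -/
theorem Polynomial.Splits.succ_mul_coeff_mul_coeff_le {p : ℝ[X]} (hp : p.Splits) (m : ℕ) :
    (m + 2 : ℝ) * (p.coeff m * p.coeff (m + 2)) ≤ (m + 1) * p.coeff (m + 1) ^ 2 := by
  induction m generalizing p with
  | zero => simpa using hp.two_mul_coeff_zero_mul_coeff_two_le
  | succ m ih =>
    have h := ih hp.derivative_real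
    simp only [coeff_derivative] at h
    push_cast at h ⊢
    have hpos : (0 : ℝ) < (m + 1) * (m + 2) := by positivity
    refine le_of_mul_le_mul_left ?_ hpos
    linear_combination h

open Polynomial in
/-- The coefficients of a real-rooted polynomial form a log-concave sequence. -/
theorem Polynomial.Splits.coeff_mul_coeff_le_sq {p : ℝ[X]} (hp : p.Splits) (m : ℕ) :
    p.coeff m * p.coeff (m + 2) ≤ p.coeff (m + 1) ^ 2 := by
  have h := hp.succ_mul_coeff_mul_coeff_le m
  have hm : (0 : ℝ) ≤ m := m.cast_nonneg
  by_contra! hlt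
  nlinarith [sq_nonneg (p.coeff (m + 1))]

open Polynomial in
theorem Polynomial.coeff_succ_one_add_C_mul_X_mul {R : Type*} [CommSemiring R] (a : R) (q : R[X])
    (j : ℕ) : ((1 + C a * X) * q).coeff (j + 1) = q.coeff (j + 1) + a * q.coeff j := by
  simp [add_mul, mul_assoc]

open Polynomial in
/-- If the first `k + 1` coefficients of `(1 + a X) q` after the constant one are positive and `q`
is real-rooted with `q 0 = 1`, then the `k`-th coefficient of `q` is positive. -/
theorem Polynomial.Splits.coeff_pos_of_one_add_C_mul_X_mul {q : ℝ[X]} (hq : q.Splits)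
    (hq0 : q.coeff 0 = 1) (a : ℝ) (k : ℕ)
    (h : ∀ j, 1 ≤ j → j ≤ k + 1 → 0 < ((1 + C a * X) * q).coeff j) : 0 < q.coeff k := by
  induction k with
  | zero => simp [hq0]
  | succ k ih =>
    have hk := ih fun j hj hjk => h j hj (by omega)
    have h₁ := h (k + 1) (by omega) (by omega)
    have h₂ := h (k + 2) (by omega) (by omega)
    rw [coeff_succ_one_add_C_mul_X_mul] at h₁ h₂
    have hlog := hq.coeff_mul_coeff_le_sq k
    by_contra! hneg
    nlinarith [mul_pos hk h₂, mul_nonneg (neg_nonneg.mpr hneg) h₁.le]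

open Polynomial in
theorem Polynomial.reverse_prod_X_sub_C {R ι : Type*} [CommRing R] [IsDomain R] (s : Finset ι)
    (a : ι → R) : (∏ i ∈ s, (X - C (a i))).reverse = ∏ i ∈ s, (1 - C (a i) * X) := by
  classical
  induction s using Finset.induction_on with
  | empty => simpa using reverse_C (1 : R)
  | insert i s hi ih =>
    rw [Finset.prod_insert hi, Finset.prod_insert hi, reverse_mul_of_domain, ih]
    have hX : (X - C (a i)).reverse = 1 - C (a i) * X := by
      rw [sub_eq_neg_add, ← C_neg, reverse_C_add]
      have hone : (X : R[X]).reverse = 1 := by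
        rw [← one_mul X, reverse_mul_X, ← C_1, reverse_C]
      simp [sub_eq_neg_add, hone]
    rw [hX]

namespace Matrix.IsHermitian

variable {n : ℕ} {A : Matrix (Fin n) (Fin n) ℝ}

open Polynomial in
theorem sigmaMat_eq_coeff (hA : A.IsHermitian) {j : ℕ} (hj : j ≤ n) :
    sigmaMat A j = (∏ i, (1 + C (hA.eigenvalues i) * X)).coeff j := by
  have hrev : A.charpoly.reverse = ∏ i, (1 - C (hA.eigenvalues i) * X) := by
    rw [hA.charpoly_eq]
    exact reverse_prod_X_sub_C _ _
  have hcomp : ∏ i, (1 + C (hA.eigenvalues i) * X) = A.charpoly.reverse.comp (C (-1) * X) := by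
    rw [hrev, prod_comp]
    simp
  rw [hcomp, comp_C_mul_X_coeff, coeff_reverse, charpoly_natDegree_eq_dim, Fintype.card_fin,
    revAt_le hj, sigmaMat, mul_comm]

open Polynomial in
/-- The eigenvalue of `T_k(A)` at the `i`-th eigenvector is `σ_k` of the other eigenvalues. -/
theorem sum_sigmaMat_mul_eigenvalues_pow (hA : A.IsHermitian) (i : Fin n) {k : ℕ}
    (hk : k ≤ n) :
    ∑ j ∈ Finset.range (k + 1), (-1 : ℝ) ^ j * sigmaMat A (k - j) * hA.eigenvalues i ^ j =
      (∏ l ∈ Finset.univ.erase i, (1 + C (hA.eigenvalues l) * X)).coeff k := by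
  have hmul := Finset.mul_prod_erase Finset.univ (fun l => 1 + C (hA.eigenvalues l) * X)
    (Finset.mem_univ i)
  induction k with
  | zero => simp [hA.sigmaMat_eq_coeff hk, ← hmul, mul_coeff_zero]
  | succ k ih =>
    rw [Finset.sum_range_succ']
    have hshift : ∑ j ∈ Finset.range (k + 1),
        (-1 : ℝ) ^ (j + 1) * sigmaMat A (k + 1 - (j + 1)) * hA.eigenvalues i ^ (j + 1) =
        -hA.eigenvalues i * ∑ j ∈ Finset.range (k + 1),
          (-1 : ℝ) ^ j * sigmaMat A (k - j) * hA.eigenvalues i ^ j := by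
      rw [Finset.mul_sum]
      refine Finset.sum_congr rfl fun j _ => ?_
      rw [Nat.add_sub_add_right]
      ring
    rw [hshift, ih (by omega), Nat.sub_zero, hA.sigmaMat_eq_coeff hk, ← hmul,
      coeff_succ_one_add_C_mul_X_mul]
    ring

theorem newtonT_eq_conj (hA : A.IsHermitian) (k : ℕ) :
    newtonT A k = (hA.eigenvectorUnitary : Matrix (Fin n) (Fin n) ℝ) *
      diagonal (fun i => ∑ j ∈ Finset.range (k + 1),
        (-1 : ℝ) ^ j * sigmaMat A (k - j) * hA.eigenvalues i ^ j) *
      star (hA.eigenvectorUnitary : Matrix (Fin n) (Fin n) ℝ) := by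
  have hdiag : diagonal (fun i => ∑ j ∈ Finset.range (k + 1),
        (-1 : ℝ) ^ j * sigmaMat A (k - j) * hA.eigenvalues i ^ j) =
      ∑ j ∈ Finset.range (k + 1),
        ((-1 : ℝ) ^ j * sigmaMat A (k - j)) • diagonal hA.eigenvalues ^ j := by
    ext i l
    by_cases hil : i = l <;> simp [diagonal_pow, Matrix.sum_apply, hil]
  rw [hdiag, ← Unitary.conjStarAlgAut_apply (S := ℝ), map_sum]
  refine Finset.sum_congr rfl fun j _ => ?_
  rw [map_smul, map_pow]
  congr 2
  exact hA.spectral_theorem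

open Polynomial in
theorem posDef_newtonT (hA : A.IsHermitian) {k : ℕ} (hk : k + 1 ≤ n)
    (hAG : GammaPlus (k + 1) A) :
    (newtonT A k).PosDef := by
  rw [hA.newtonT_eq_conj, (Unitary.isUnit_coe).posDef_star_right_conjugate_iff,
    posDef_diagonal_iff]
  intro i
  rw [hA.sum_sigmaMat_mul_eigenvalues_pow i (by omega)]
  refine Splits.coeff_pos_of_one_add_C_mul_X_mul (a := hA.eigenvalues i) (Splits.prod fun l _ =>
    Splits.of_natDegree_le_one (by compute_degree)) ?_ k fun j hj hjk => ?_
  · simp [coeff_zero_eq_eval_zero, eval_prod]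
  · rw [Finset.mul_prod_erase Finset.univ (fun l => 1 + C (hA.eigenvalues l) * X)
      (Finset.mem_univ i), ← hA.sigmaMat_eq_coeff (by omega)]
    exact hAG j hj hjk

end Matrix.IsHermitian

/-- if `A ∈ Γ_k^+` then `T_{k−1}(A)` is positive definite. -/
theorem newton_pos_def (n k : ℕ) (hn : 1 ≤ n) (hk1 : 1 ≤ k) (hkn : k ≤ n)
    (A : Matrix (Fin n) (Fin n) ℝ) (hA : A.IsSymm) (hAG : GammaPlus k A) :
    ∀ X : Fin n → ℝ, X ≠ 0 → 0 < X ⬝ᵥ (newtonT A (k - 1)).mulVec X := by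
  intro X hX
  obtain ⟨k, rfl⟩ := Nat.exists_eq_add_of_le' hk1
  have hH : A.IsHermitian := by rwa [IsHermitian, conjTranspose_eq_transpose_of_trivial]
  simpa using (hH.posDef_newtonT hkn hAG).dotProduct_mulVec_pos hX
end
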